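/- arXiv:1804.10128 — 4 statements merged into one kernel-verified Lean document; each statement's English description precedes it below -/
import Mathlib

section
/- Let N ≥ 1 be an integer. Every 2×2 integer matrix M with determinant N whose four entries have greatest common divisor 1 can be written uniquely as a product M = γ·σ, where γ ∈ SL₂(ℤ) and σ ∈ C(N). -/
open Matrix

/-- The set `C(N)` of upper-triangular integer matrices `(a b; 0 d)` with `a·d = N`, `a > 0`,
`0 ≤ b < d`, and `gcd(a, b, d) = 1`. -/
def CN (N : ℕ) : Set (Matrix (Fin 2) (Fin 2) ℤ) :=
  {σ | σ 1 0 = 0 ∧ σ 0 0 * σ 1 1 = (N : ℤ) ∧ 0 < σ 0 0 ∧ 0 ≤ σ 0 1 ∧ σ 0 1 < σ 1 1 ∧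
    Int.gcd (σ 0 0) (Int.gcd (σ 0 1) (σ 1 1)) = 1}

theorem CN_uniq_aux {p q r s u v w p' q' r' s' u' v' w' N : ℤ} (hN : 0 < N)
    (h1 : p * s - q * r = 1) (h2 : p' * s' - q' * r' = 1)
    (hu : 0 < u) (hu' : 0 < u') (huw : u * w = N) (huw' : u' * w' = N)
    (hv : 0 ≤ v) (hvw : v < w) (hv' : 0 ≤ v') (hvw' : v' < w')
    (e1 : p * u = p' * u') (e2 : r * u = r' * u')
    (e3 : p * v + q * w = p' * v' + q' * w') (e4 : r * v + s * w = r' * v' + s' * w') :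
    (p = p' ∧ q = q' ∧ r = r' ∧ s = s') ∧ u = u' ∧ v = v' ∧ w = w' := by
  have huu : u = u' := by
    apply Int.dvd_antisymm hu.le hu'.le
    · exact ⟨s' * p - q' * r, by linear_combination (-u') * h2 - s' * e1 + q' * e2⟩
    · exact ⟨s * p' - q * r', by linear_combination (-u) * h1 + s * e1 - q * e2⟩
  subst huu
  have hp : p = p' := mul_right_cancel₀ hu.ne' e1
  have hr : r = r' := mul_right_cancel₀ hu.ne' e2
  have hw : w = w' := mul_left_cancel₀ hu.ne' (huw.trans huw'.symm)
  subst hp hr hw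
  have hvv : v - v' = 0 := by
    apply Int.eq_zero_of_abs_lt_dvd (m := w)
    · exact ⟨s * (q' - q) - q * (s' - s),
        by linear_combination (-(v - v')) * h1 + s * e3 - q * e4⟩
    · rw [abs_lt]; constructor <;> linarith
  have hvv' : v = v' := by linarith
  subst hvv'
  have hw0 : w ≠ 0 := by linarith
  exact ⟨⟨rfl, mul_right_cancel₀ hw0 (by linarith), rfl, mul_right_cancel₀ hw0 (by linarith)⟩,
    rfl, rfl, rfl⟩

theorem CN_exists_aux {A B C D N : ℤ} (hN : 0 < N) (hdet : A * D - B * C = N) :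
    ∃ p q r s u v w : ℤ, p * s - q * r = 1 ∧ u * w = N ∧ 0 < u ∧ 0 ≤ v ∧ v < w ∧
      p * u = A ∧ p * v + q * w = B ∧ r * u = C ∧ r * v + s * w = D := by
  have hg : 0 < Int.gcd A C := by
    rw [Int.gcd_pos_iff]
    by_contra! h
    simp [h.1, h.2] at hdet
    omega
  have hg' : (0 : ℤ) < Int.gcd A C := by exact_mod_cast hg
  have hbez := Int.gcd_eq_gcd_ab A C
  obtain ⟨a, ha⟩ := Int.gcd_dvd_left A C
  obtain ⟨c, hc⟩ := Int.gcd_dvd_right A C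
  generalize Int.gcdA A C = x at *
  generalize Int.gcdB A C = y at *
  generalize ((Int.gcd A C : ℕ) : ℤ) = g at *
  subst ha hc
  have hax : a * x + c * y = 1 := mul_left_cancel₀ hg'.ne' (by linarith)
  have hgd : g * (a * D - c * B) = N := by linarith
  have hd : 0 < a * D - c * B := by
    by_contra! h
    nlinarith
  have hmod := Int.emod_add_mul_ediv (x * B + y * D) (a * D - c * B)
  have h0 := Int.emod_nonneg (x * B + y * D) hd.ne'
  have h1 := Int.emod_lt_of_pos (x * B + y * D) hd
  generalize (x * B + y * D) % (a * D - c * B) = b at *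
  generalize (x * B + y * D) / (a * D - c * B) = t at *
  refine ⟨a, a * t - y, c, c * t + x, g, b, a * D - c * B, by linear_combination hax, hgd, hg',
    h0, h1, mul_comm _ _, ?_, mul_comm _ _, ?_⟩
  · linear_combination a * hmod + B * hax
  · linear_combination c * hmod + D * hax

/-- Let `N ≥ 1` be an integer.  Every `2 × 2` integer matrix `M` with
determinant `N` whose four entries have greatest common divisor `1` can be written uniquely as
a product `M = γ · σ` with `γ ∈ SL₂(ℤ)` and `σ ∈ C(N)`. -/
theorem exists_unique_SL2_mul_CN (N : ℕ) (hN : 1 ≤ N)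
    (M : Matrix (Fin 2) (Fin 2) ℤ) (hdet : M.det = (N : ℤ))
    (hgcd : Int.gcd (Int.gcd (M 0 0) (M 0 1)) (Int.gcd (M 1 0) (M 1 1)) = 1) :
    ∃! p : Matrix.SpecialLinearGroup (Fin 2) ℤ × Matrix (Fin 2) (Fin 2) ℤ,
      p.2 ∈ CN N ∧ (p.1 : Matrix (Fin 2) (Fin 2) ℤ) * p.2 = M := by
  have hN' : (0 : ℤ) < N := by exact_mod_cast hN
  rw [Matrix.det_fin_two] at hdet
  obtain ⟨p, q, r, s, u, v, w, h1, huw, hu, hv, hvw, e1, e2, e3, e4⟩ := CN_exists_aux hN' hdet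
  refine ⟨(⟨!![p, q; r, s], by rw [Matrix.det_fin_two_of]; exact h1⟩, !![u, v; 0, w]),
    ⟨⟨rfl, huw, hu, hv, hvw, ?_⟩, ?_⟩, ?_⟩
  · change Int.gcd u (Int.gcd v w) = 1
    apply Nat.dvd_one.mp
    rw [← hgcd]
    have d1 : ((Int.gcd u (Int.gcd v w) : ℕ) : ℤ) ∣ u := Int.gcd_dvd_left _ _
    have d2 : ((Int.gcd u (Int.gcd v w) : ℕ) : ℤ) ∣ (Int.gcd v w : ℤ) := Int.gcd_dvd_right _ _
    have d3 := d2.trans (Int.gcd_dvd_left v w)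
    have d4 := d2.trans (Int.gcd_dvd_right v w)
    rw [← Int.natCast_dvd_natCast]
    refine Int.dvd_coe_gcd (Int.dvd_coe_gcd ?_ ?_) (Int.dvd_coe_gcd ?_ ?_)
    · rw [← e1]; exact d1.mul_left _
    · rw [← e2]; exact dvd_add (d3.mul_left _) (d4.mul_left _)
    · rw [← e3]; exact d1.mul_left _
    · rw [← e4]; exact dvd_add (d3.mul_left _) (d4.mul_left _)
  · ext i j
    fin_cases i <;> fin_cases j <;> simp [Matrix.mul_apply, Fin.sum_univ_two, e1, e2, e3, e4]
  · rintro ⟨γ, σ⟩ ⟨⟨k0, k1, k2, k3, k4, -⟩, hM⟩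
    dsimp only at k0 k1 k2 k3 k4 hM
    have hγ := γ.det_coe
    rw [Matrix.det_fin_two] at hγ
    have m (i j) := congrFun (congrFun hM i) j
    simp only [Matrix.mul_apply, Fin.sum_univ_two] at m
    have m00 := m 0 0
    have m01 := m 0 1
    have m10 := m 1 0
    have m11 := m 1 1
    rw [k0, mul_zero, add_zero] at m00 m10
    obtain ⟨⟨a1, a2, a3, a4⟩, a5, a6, a7⟩ := CN_uniq_aux hN' hγ h1 k2 hu k1 huw k3 k4 hv hvw
      (m00.trans e1.symm) (m10.trans e3.symm) (m01.trans e2.symm) (m11.trans e4.symm)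
    refine Prod.ext (Subtype.ext ?_) ?_
    · ext i j
      fin_cases i <;> fin_cases j
      exacts [a1, a2, a3, a4]
    · ext i j
      fin_cases i <;> fin_cases j
      exacts [a5, a6, k0, a7]
end

section
/- For every ε > 0 there exists a constant C > 0 with the following property: for every imaginary quadratic number field K whose discriminant d_K satisfies |d_K| ≥ C, one has |log(h_K) / log(√|d_K|) − 1| < ε. (Brauer–Siegel theorem for imaginary quadratic fields.) -/
section
open Complex Filter Topology

/-- a real completely multiplicative function with values in {-1,0,1} and bounded partial sums -/
structure RC (c : ℕ → ℝ) (N : ℕ) : Prop where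
  zero : c 0 = 0
  one : c 1 = 1
  mul : ∀ m n, c (m * n) = c m * c n
  tri : ∀ n, c n = 0 ∨ c n = 1 ∨ c n = -1
  sum : ∀ n, |∑ k ∈ Finset.range (n + 1), c k| ≤ N

noncomputable def SS (c : ℕ → ℝ) (n : ℕ) : ℝ := ∑ k ∈ Finset.range (n + 1), c k

noncomputable def LTm (c : ℕ → ℝ) (s : ℂ) (n : ℕ) : ℂ :=
  (SS c (n + 1) : ℂ) * (((n + 1 : ℕ) : ℂ) ^ (-s) - ((n + 2 : ℕ) : ℂ) ^ (-s))

noncomputable def LL (c : ℕ → ℝ) (s : ℂ) : ℂ := ∑' n, LTm c s n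

theorem RC.abs_le_one {c : ℕ → ℝ} {N : ℕ} (h : RC c N) (n : ℕ) : |c n| ≤ 1 := by
  rcases h.tri n with h | h | h <;> rw [h] <;> norm_num

theorem RC.SS_le_self {c : ℕ → ℝ} {N : ℕ} (h : RC c N) (n : ℕ) : |SS c n| ≤ n := by
  rw [SS, Finset.sum_range_succ', h.zero, add_zero]
  refine (Finset.abs_sum_le_sum_abs _ _).trans ?_
  refine (Finset.sum_le_sum (fun i _ => h.abs_le_one (i+1))).trans ?_
  simp

theorem RC.SS_le {c : ℕ → ℝ} {N : ℕ} (h : RC c N) {δ : ℝ} (h0 : 0 ≤ δ) (h1 : δ ≤ 1) (n : ℕ) :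
    |SS c n| ≤ (N : ℝ) ^ δ * (n : ℝ) ^ (1 - δ) := by
  have e : |SS c n| = |SS c n| ^ δ * |SS c n| ^ (1 - δ) := by
    rw [← Real.rpow_add_of_nonneg (abs_nonneg _) h0 (by linarith)]; simp
  rw [e]
  have := h.sum n
  have := h.SS_le_self n
  gcongr
  · exact h.sum n

theorem npow_sub_bound (n : ℕ) (s : ℂ) (hs : 0 < s.re) :
    ‖((n + 1 : ℕ) : ℂ) ^ (-s) - ((n + 2 : ℕ) : ℂ) ^ (-s)‖ ≤ ‖s‖ * ((n + 1 : ℕ) : ℝ) ^ (-s.re - 1) := by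
  have key := Convex.norm_image_sub_le_of_norm_hasDerivWithin_le (𝕜 := ℝ) (f := fun x : ℝ => (x : ℂ) ^ (-s))
    (f' := fun x : ℝ => (-s) * (x : ℂ) ^ (-s - 1)) (s := Set.Icc ((n + 1 : ℕ) : ℝ) ((n + 2 : ℕ) : ℝ))
    (C := ‖s‖ * ((n + 1 : ℕ) : ℝ) ^ (-s.re - 1)) (x := ((n + 2 : ℕ) : ℝ)) (y := ((n + 1 : ℕ) : ℝ)) ?_ ?_
    (convex_Icc _ _) ?_ ?_
  · refine le_trans (le_of_eq ?_) (key.trans (le_of_eq ?_))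
    · simp
    · have : (((n + 1 : ℕ) : ℝ) - ((n + 2 : ℕ) : ℝ)) = -1 := by push_cast; ring
      rw [this]; simp
  · intro x hx
    have hx0 : 0 < x := lt_of_lt_of_le (by positivity) hx.1
    have := hasDerivAt_ofReal_cpow_const (x := x) (r := -s) hx0.ne' (by
      intro h; have := congrArg Complex.re h; simp at this; simp [this] at hs)
    exact this.hasDerivWithinAt
  · intro x hx
    have hx0 : 0 < x := lt_of_lt_of_le (by positivity) hx.1
    rw [norm_mul, norm_neg, norm_cpow_eq_rpow_re_of_pos hx0]
    simp only [sub_re, neg_re, one_re]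
    gcongr ‖s‖ * ?_
    exact Real.rpow_le_rpow_of_nonpos (by positivity) hx.1 (by linarith)
  · constructor <;> push_cast <;> linarith
  · constructor <;> push_cast <;> linarith

theorem RC.LTm_bound {c : ℕ → ℝ} {N : ℕ} (h : RC c N) {δ : ℝ} (h0 : 0 ≤ δ) (h1 : δ ≤ 1) {s : ℂ}
    (hs : 0 < s.re) (n : ℕ) :
    ‖LTm c s n‖ ≤ ‖s‖ * (N : ℝ) ^ δ * ((n + 1 : ℕ) : ℝ) ^ (-(s.re + δ)) := by
  rw [LTm, norm_mul]
  have h2 := h.SS_le h0 h1 (n+1)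
  have h3 := npow_sub_bound n s hs
  rw [norm_real, Real.norm_eq_abs]
  refine (mul_le_mul h2 h3 (norm_nonneg _) (by positivity)).trans (le_of_eq ?_)
  have : ((n + 1 : ℕ) : ℝ) ^ (-(s.re + δ)) = ((n + 1 : ℕ) : ℝ) ^ (1 - δ) * ((n + 1 : ℕ) : ℝ) ^ (-s.re - 1) := by
    rw [← Real.rpow_add (by positivity)]; congr 1; ring
  rw [this]; ring

theorem summable_shift {x : ℝ} (hx : 1 < x) : Summable fun n : ℕ => ((n + 1 : ℕ) : ℝ) ^ (-x) :=
  (summable_nat_add_iff (f := fun n : ℕ => (n : ℝ) ^ (-x)) 1).2 (Real.summable_nat_rpow.2 (by linarith))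

theorem RC.LTm_summable {c : ℕ → ℝ} {N : ℕ} (h : RC c N) {s : ℂ} (hs : 0 < s.re) :
    Summable (LTm c s) := by
  refine Summable.of_norm_bounded ?_ (h.LTm_bound zero_le_one le_rfl hs)
  exact (summable_shift (by linarith)).mul_left _

theorem RC.LL_bound {c : ℕ → ℝ} {N : ℕ} (h : RC c N) {δ : ℝ} (h0 : 0 ≤ δ) (h1 : δ ≤ 1) {s : ℂ}
    (hs : 0 < s.re) (hsd : 1 < s.re + δ) :
    ‖LL c s‖ ≤ ‖s‖ * (N : ℝ) ^ δ * ∑' n : ℕ, ((n + 1 : ℕ) : ℝ) ^ (-(s.re + δ)) := by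
  rw [LL, ← tsum_mul_left]
  exact tsum_of_norm_bounded ((summable_shift hsd).mul_left _).hasSum (h.LTm_bound h0 h1 hs)

theorem RC.LL_diff {c : ℕ → ℝ} {N : ℕ} (h : RC c N) : DifferentiableOn ℂ (LL c) {s | 0 < s.re} := by
  intro s hs
  have hs' : 0 < s.re := hs
  set U : Set ℂ := {z | s.re / 2 < z.re} ∩ Metric.ball 0 (‖s‖ + 1)
  have hU : IsOpen U := (isOpen_lt continuous_const continuous_re).inter Metric.isOpen_ball
  have hsU : s ∈ U := ⟨by simp; linarith, by simp⟩
  refine DifferentiableAt.differentiableWithinAt ?_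
  refine DifferentiableOn.differentiableAt (s := U) ?_ (hU.mem_nhds hsU)
  refine differentiableOn_tsum_of_summable_norm (u := fun n => (‖s‖ + 1) * (N : ℝ) ^ (1:ℝ) * ((n + 1 : ℕ) : ℝ) ^ (-(s.re / 2 + 1))) ?_ ?_ hU ?_
  · exact (summable_shift (by linarith)).mul_left _
  · intro n
    unfold LTm
    refine DifferentiableOn.const_mul (DifferentiableOn.sub ?_ ?_) _
    · intro z _
      refine DifferentiableAt.differentiableWithinAt ?_
      refine DifferentiableAt.const_cpow (by fun_prop) (Or.inl (by exact_mod_cast Nat.succ_ne_zero n))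
    · intro z _
      refine DifferentiableAt.differentiableWithinAt ?_
      refine DifferentiableAt.const_cpow (by fun_prop) (Or.inl (by exact_mod_cast Nat.succ_ne_zero (n+1)))
  · intro n z hz
    have hz1 : s.re / 2 < z.re := hz.1
    have hz2 : ‖z‖ < ‖s‖ + 1 := by simpa using hz.2
    refine (h.LTm_bound zero_le_one le_rfl (by linarith) n).trans ?_
    gcongr
    simp

theorem LTm_real (c : ℕ → ℝ) (x : ℝ) (n : ℕ) : (LTm c x n).im = 0 := by
  have e : ∀ m : ℕ, ((m : ℕ) : ℂ) ^ (-(x : ℂ)) = (((m : ℝ) ^ (-x) : ℝ) : ℂ) := by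
    intro m
    rw [ofReal_cpow (by positivity)]; simp
  rw [LTm, e, e, ← ofReal_sub, ← ofReal_mul, ofReal_im]

theorem LL_real (c : ℕ → ℝ) (x : ℝ) : (LL c x).im = 0 := by
  have : ∀ n, LTm c x n = (((LTm c x n).re : ℝ) : ℂ) := fun n => Complex.ext (by simp) (by simp [LTm_real])
  rw [LL, tsum_congr this, ← ofReal_tsum, ofReal_im]

theorem RC.LS_summable {c : ℕ → ℝ} {N : ℕ} (h : RC c N) {s : ℂ} (hs : 1 < s.re) :
    LSeriesSummable (fun n => (c n : ℂ)) s :=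
  LSeriesSummable_of_bounded_of_one_lt_re (m := 1) (fun n _ => by
    rw [norm_real]; exact h.abs_le_one n) hs

theorem RC.LL_eq {c : ℕ → ℝ} {N : ℕ} (h : RC c N) {s : ℂ} (hs : 1 < s.re) :
    LL c s = LSeries (fun n => (c n : ℂ)) s := by
  have h1 := (h.LTm_summable (s := s) (by linarith)).hasSum.tendsto_sum_nat
  have h2 := (h.LS_summable hs).hasSum.tendsto_sum_nat.comp (tendsto_add_atTop_nat 2)
  have key : ∀ n, ∑ k ∈ Finset.range (n + 2), LSeries.term (fun n => (c n : ℂ)) s k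
      = ∑ k ∈ Finset.range n, LTm c s k + (SS c (n + 1) : ℂ) * ((n + 1 : ℕ) : ℂ) ^ (-s) := by
    intro n
    induction n with
    | zero => simp [Finset.sum_range_succ, SS, h.zero, h.one, LSeries.term_def]
    | succ n ih =>
      rw [Finset.sum_range_succ, ih, Finset.sum_range_succ (n := n), LTm]
      have : SS c (n + 1 + 1) = SS c (n + 1) + c (n + 2) := by
        rw [SS, Finset.sum_range_succ, SS]
      rw [this, LSeries.term_of_ne_zero (by omega), cpow_neg (((n+1+1 : ℕ) : ℂ))]
      push_cast
      rw [show (n : ℂ) + 1 + 1 = n + 2 by ring]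
      ring
  have h3 : Tendsto (fun n : ℕ => (SS c (n + 1) : ℂ) * ((n + 1 : ℕ) : ℂ) ^ (-s)) atTop (𝓝 0) := by
    have h4 : Tendsto (fun n : ℕ => (N : ℝ) * ((n + 1 : ℕ) : ℝ) ^ (-s.re)) atTop (𝓝 0) := by
      have := (tendsto_rpow_neg_atTop (y := s.re) (by linarith)).comp
        ((tendsto_natCast_atTop_atTop (R := ℝ)).comp (tendsto_add_atTop_nat 1))
      simpa using this.const_mul (N : ℝ)
    refine squeeze_zero_norm (fun n => ?_) h4
    rw [norm_mul, norm_real, norm_natCast_cpow_of_pos (by omega)]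
    simp only [neg_re]
    gcongr
    exact h.sum _
  have h5 : Tendsto (fun n => ∑ k ∈ Finset.range (n + 2), LSeries.term (fun n => (c n : ℂ)) s k) atTop
      (𝓝 (LL c s)) := by
    simp_rw [key]
    simpa [LL] using h1.add h3
  exact tendsto_nhds_unique h5 h2
end

section
open Complex Filter Topology
open scoped ComplexOrder

theorem core_coeff {a : ℕ → ℂ} (ha : 0 ≤ a) (habs : LSeries.abscissaOfAbsConv a ≤ 1)
    {F : ℂ → ℂ} {l : ℂ} (hF : ∀ s : ℂ, 1 < s.re → F s = LSeries a s - l * (s - 1)⁻¹) (n : ℕ) :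
    ∃ b : ℂ, 0 ≤ b ∧ (n = 0 → b = LSeries a 2) ∧
      (n.factorial : ℂ)⁻¹ * ((-1) ^ n * iteratedDeriv n F 2) = b - l := by
  have hop : IsOpen {s : ℂ | 1 < s.re} := isOpen_lt continuous_const continuous_re
  have h2 : (2 : ℂ) ∈ {s : ℂ | 1 < s.re} := by simp
  have hEq : F =ᶠ[𝓝 2] (LSeries a - fun s => l * (s - 1)⁻¹) := by
    filter_upwards [hop.mem_nhds h2] with s hs using hF s hs
  have habs2 : LSeries.abscissaOfAbsConv a < (2 : ℂ).re := by
    refine lt_of_le_of_lt habs ?_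
    simp only [re_ofNat]
    exact_mod_cast (by norm_num : (1 : ℝ) < 2)
  have c1 : ContDiffAt ℂ n (LSeries a) 2 := by
    have := LSeries_analyticOnNhd a 2 habs2
    exact this.contDiffAt
  have c2 : ContDiffAt ℂ n (fun s : ℂ => l * (s - 1)⁻¹) 2 := by
    refine contDiffAt_const.mul (ContDiffAt.inv (by fun_prop) (by norm_num))
  refine ⟨(n.factorial : ℂ)⁻¹ * ((-1) ^ n * iteratedDeriv n (LSeries a) 2), ?_, ?_, ?_⟩
  · refine mul_nonneg (by positivity) ?_
    have := LSeries.iteratedDeriv_alternating ha (x := 2) (by simpa using habs2) n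
    simpa using this
  · rintro rfl; simp
  · rw [hEq.iteratedDeriv_eq, iteratedDeriv_sub c1 c2]
    have : iteratedDeriv n (fun s : ℂ => l * (s - 1)⁻¹) 2 = l * ((-1) ^ n * n.factorial) := by
      rw [iteratedDeriv_const_mul_field, iteratedDeriv_comp_sub_const n (fun s : ℂ => s⁻¹) 1]
      simp only [iteratedDeriv_eq_iterate]
      have := iter_deriv_inv (𝕜 := ℂ) n (2 - 1)
      norm_num at this
      norm_num
    rw [this]
    have hf : (n.factorial : ℂ) ≠ 0 := by exact_mod_cast n.factorial_ne_zero
    have h1 : ((-1 : ℂ) ^ n) * (-1) ^ n = 1 := by rw [← mul_pow]; simp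
    field_simp
    linear_combination (-(n.factorial : ℂ) * l) * h1

theorem core {a : ℕ → ℂ} (ha : 0 ≤ a) (ha1 : a 1 = 1) (habs : LSeries.abscissaOfAbsConv a ≤ 1)
    {G : ℂ → ℂ} (hG : DifferentiableOn ℂ G (Metric.ball 2 2))
    (hGa : ∀ s : ℂ, 1 < s.re → G s = (s - 1) * LSeries a s)
    {M : ℝ} (hM : 1 ≤ M) (hGM : ∀ s ∈ Metric.closedBall (2 : ℂ) (3 / 2), ‖G s‖ ≤ M)
    {x : ℝ} (hx : 7 / 8 ≤ x) (hx1 : x < 1) (hGx : 0 ≤ (G x).re) :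
    (1 - x) / 2 * Real.exp (-((1 - x) * (4 * Real.log (32 * M) + 1))) ≤ (G 1).re := by
  have h1b : (1 : ℂ) ∈ Metric.ball (2 : ℂ) 2 := by
    rw [mem_ball_iff_norm]; norm_num
  set F := dslope G 1
  have hF : DifferentiableOn ℂ F (Metric.ball 2 2) :=
    (differentiableOn_dslope (Metric.isOpen_ball.mem_nhds h1b)).mpr hG
  have hFG : ∀ s : ℂ, s ≠ 1 → F s = (G s - G 1) * (s - 1)⁻¹ := by
    intro s hs
    simp only [F, dslope_of_ne _ hs, slope_def_field]; rw [div_eq_mul_inv]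
  have hFa : ∀ s : ℂ, 1 < s.re → F s = LSeries a s - G 1 * (s - 1)⁻¹ := by
    intro s hs
    have : s ≠ 1 := by rintro rfl; simp at hs
    rw [hFG s this, hGa s hs]
    have : s - 1 ≠ 0 := sub_ne_zero.2 this
    field_simp
  have hFM : ∀ s ∈ Metric.sphere (2 : ℂ) (3 / 2), ‖F s‖ ≤ 4 * M := by
    intro s hs
    have hs' : ‖s - 2‖ = 3 / 2 := by simpa using hs
    have h3 : 1 / 2 ≤ ‖s - 1‖ := by
      have := norm_sub_norm_le (s - 2) (-1)
      norm_num at this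
      rw [hs', show s - 2 + 1 = s - 1 by ring] at this
      linarith
    have h4 : s ≠ 1 := by rintro rfl; norm_num at h3
    rw [hFG s h4, norm_mul, norm_inv]
    have h5 : ‖G s - G 1‖ ≤ 2 * M := by
      refine (norm_sub_le _ _).trans ?_
      have := hGM s (Metric.sphere_subset_closedBall hs)
      have := hGM 1 (by rw [mem_closedBall_iff_norm]; norm_num)
      linarith
    have h6 : ‖s - 1‖⁻¹ ≤ 2 := by
      rw [inv_le_comm₀ (by linarith) (by norm_num)]; linarith
    calc _ ≤ 2 * M * 2 := by gcongr
      _ = _ := by ring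
  have hcoef : ∀ n, ‖iteratedDeriv n F 2‖ ≤ n.factorial * (4 * M) / (3 / 2) ^ n := by
    intro n
    refine norm_iteratedDeriv_le_of_forall_mem_sphere_norm_le n (by norm_num) ?_ hFM
    refine DifferentiableOn.diffContOnCl ?_
    rw [closure_ball _ (by norm_num)]
    exact hF.mono (Metric.closedBall_subset_ball (by norm_num))
  -- positivity of G 1
  have hl : 0 ≤ (G 1).re := by
    have hc : ContinuousAt G 1 := (hG.differentiableAt (Metric.isOpen_ball.mem_nhds h1b)).continuousAt
    have hc2 : Tendsto (fun y : ℝ => (G y).re) (𝓝[>] 1) (𝓝 (G 1).re) := by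
      have h3 : Tendsto (fun y : ℝ => (y : ℂ)) (𝓝[>] 1) (𝓝 1) := by
        have : Tendsto (fun y : ℝ => (y : ℂ)) (𝓝 1) (𝓝 ((1 : ℝ) : ℂ)) := continuous_ofReal.tendsto 1
        simpa using this.mono_left nhdsWithin_le_nhds
      exact (continuous_re.tendsto _).comp (hc.tendsto.comp h3)
    refine ge_of_tendsto hc2 ?_
    filter_upwards [self_mem_nhdsWithin] with y hy
    have hy' : 1 < y := hy
    rw [hGa y (by simpa using hy')]
    have hpos := LSeries.positive ha (by rw [ha1]; exact one_pos) (x := y)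
      (lt_of_le_of_lt habs (by exact_mod_cast hy'))
    have : (0 : ℂ) ≤ (y - 1) * LSeries a y := by
      refine mul_nonneg ?_ hpos.le
      rw [← ofReal_one, ← ofReal_sub]
      exact_mod_cast (by linarith)
    exact (le_def.1 this).1
  have hL2 : 1 ≤ (LSeries a 2).re := by
    have hsum : LSeriesSummable a 2 := LSeriesSummable_of_abscissaOfAbsConv_lt_re
      (lt_of_le_of_lt habs (by simp only [re_ofNat]; exact_mod_cast (by norm_num : (1 : ℝ) < 2)))
    have := hsum.le_tsum 1 (fun n _ => by
      simpa using LSeries.term_nonneg (ha n) 2)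
    have h3 : LSeries.term a 2 1 = 1 := by simp [LSeries.term_def, ha1]
    rw [h3] at this
    simpa [LSeries] using (le_def.1 this).1
  set y : ℝ := 2 - x
  have hy1 : 1 < y := by simp only [y]; linarith
  have hy2 : y ≤ 9 / 8 := by simp only [y]; linarith
  -- real coefficients
  set t : ℕ → ℝ := fun n => ((n.factorial : ℂ)⁻¹ * ((-1) ^ n * iteratedDeriv n F 2)).re
  have ht1 : ∀ n, -(G 1).re ≤ t n := by
    intro n
    obtain ⟨b, hb, _, hb2⟩ := core_coeff ha habs hFa n
    simp only [t, hb2, sub_re]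
    have := (le_def.1 hb).1
    simp at this; linarith
  have ht0 : 1 - (G 1).re ≤ t 0 := by
    obtain ⟨b, hb, hb1, hb2⟩ := core_coeff ha habs hFa 0
    simp only [t, hb2, sub_re, hb1 rfl]
    linarith
  have htM : ∀ n, |t n| ≤ 4 * M * (2 / 3) ^ n := by
    intro n
    refine (abs_re_le_norm _).trans ?_
    rw [norm_mul, norm_mul]
    simp only [norm_inv, Complex.norm_natCast, norm_pow, norm_neg, norm_one, one_pow, one_mul]
    have hf : (0 : ℝ) < n.factorial := by exact_mod_cast n.factorial_pos
    calc _ ≤ (n.factorial : ℝ)⁻¹ * (n.factorial * (4 * M) / (3 / 2) ^ n) := by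
          gcongr; exact hcoef n
      _ = _ := by
        rw [show (2 / 3 : ℝ) = (3 / 2)⁻¹ by norm_num, inv_pow]
        field_simp
  have hsum : HasSum (fun n => t n * y ^ n) (F x).re := by
    have := hasSum_re (hasSum_taylorSeries_on_ball hF (z := (x : ℂ)) (by
      rw [mem_ball_iff_norm, ← ofReal_ofNat, ← ofReal_sub, norm_real, Real.norm_eq_abs, abs_lt]
      constructor <;> linarith))
    refine this.congr_fun ?_ |> fun h => h
    intro n
    simp only [t]
    have e : (x : ℂ) - 2 = -1 * (y : ℂ) := by simp only [y]; push_cast; ring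
    rw [e, mul_pow]
    simp only [smul_eq_mul]
    rw [← re_mul_ofReal]
    congr 1
    push_cast; ring
  have hFx : (F x).re ≤ (G 1).re / (1 - x) := by
    rw [hFG x (by exact_mod_cast hx1.ne)]
    have : ((x : ℂ) - 1)⁻¹ = (((x - 1)⁻¹ : ℝ) : ℂ) := by push_cast; rfl
    rw [this, re_mul_ofReal, sub_re, ← div_eq_mul_inv, ← neg_div_neg_eq, neg_sub, neg_sub]
    gcongr
    · linarith
  obtain ⟨m, hm1, hm2⟩ : ∃ m : ℕ, 4 * Real.log (32 * M) ≤ m ∧ m ≤ 4 * Real.log (32 * M) + 1 :=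
    ⟨⌈4 * Real.log (32 * M)⌉₊, Nat.le_ceil _, (Nat.ceil_lt_add_one (by
      have := Real.log_nonneg (show 1 ≤ 32 * M by linarith); linarith)).le⟩
  have hm3 : 16 * M * (3 / 4 : ℝ) ^ m ≤ 1 / 2 := by
    have h34 : (3 / 4 : ℝ) ≤ Real.exp (-1 / 4) := by
      have := Real.add_one_le_exp (-1 / 4 : ℝ); linarith
    have : (3 / 4 : ℝ) ^ m ≤ (32 * M)⁻¹ := by
      calc (3 / 4 : ℝ) ^ m ≤ Real.exp (-1 / 4) ^ m := by gcongr
        _ = Real.exp (-(m / 4)) := by rw [← Real.exp_nat_mul]; congr 1; ring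
        _ ≤ Real.exp (-Real.log (32 * M)) := by gcongr; linarith
        _ = _ := by rw [Real.exp_neg, Real.exp_log (by linarith)]
    calc _ ≤ 16 * M * (32 * M)⁻¹ := by gcongr
      _ = _ := by field_simp; norm_num
  have hmpos : 0 < m := by
    have : 0 < Real.log (32 * M) := Real.log_pos (by linarith)
    have : (0 : ℝ) < m := by linarith
    exact_mod_cast this
  have htail : -(16 * M * (3 / 4 : ℝ) ^ m) ≤ ∑' n, t (n + m) * y ^ (n + m) := by
    have hb : HasSum (fun n : ℕ => -(4 * M * (3 / 4 : ℝ) ^ m * (3 / 4) ^ n)) (-(16 * M * (3 / 4 : ℝ) ^ m)) := by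
      have := ((hasSum_geometric_of_lt_one (r := (3 / 4 : ℝ)) (by norm_num) (by norm_num)).mul_left
        (4 * M * (3 / 4 : ℝ) ^ m)).neg
      convert! this using 1
      norm_num; ring
    refine hasSum_le (fun n => ?_) hb ((summable_nat_add_iff m).2 hsum.summable).hasSum
    have h3 : |t (n + m) * y ^ (n + m)| ≤ 4 * M * (3 / 4 : ℝ) ^ m * (3 / 4) ^ n := by
      rw [abs_mul, abs_of_nonneg (show 0 ≤ y ^ (n + m) by positivity)]
      calc _ ≤ 4 * M * (2 / 3) ^ (n + m) * (9 / 8) ^ (n + m) := by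
            gcongr; exact htM _
        _ = 4 * M * (3 / 4) ^ (n + m) := by
          rw [mul_assoc, ← mul_pow]; norm_num
        _ = _ := by rw [pow_add]; ring
    exact (abs_le.1 h3).1
  have hhead : 1 - (G 1).re * ∑ n ∈ Finset.range m, y ^ n ≤ ∑ n ∈ Finset.range m, t n * y ^ n := by
    obtain ⟨k, rfl⟩ := Nat.exists_eq_succ_of_ne_zero hmpos.ne'
    rw [Finset.sum_range_succ', Finset.sum_range_succ', mul_add, Finset.mul_sum]
    have : ∑ i ∈ Finset.range k, -((G 1).re * y ^ (i + 1)) ≤ ∑ i ∈ Finset.range k, t (i + 1) * y ^ (i + 1) := by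
      refine Finset.sum_le_sum fun i _ => ?_
      have h3 : 0 ≤ y ^ (i + 1) := by positivity
      nlinarith [ht1 (i + 1)]
    rw [Finset.sum_neg_distrib] at this
    simp only [pow_zero, mul_one]
    linarith
  have hgeom : ∑ n ∈ Finset.range m, y ^ n = (y ^ m - 1) / (1 - x) := by
    rw [geom_sum_eq hy1.ne']; congr 1; simp only [y]; ring
  have hsplit := hsum.summable.sum_add_tsum_nat_add m
  rw [hsum.tsum_eq] at hsplit
  rw [hgeom] at hhead
  have h1x : 0 < 1 - x := by linarith
  have hfin : 1 / 2 ≤ (G 1).re * y ^ m / (1 - x) := by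
    have : (G 1).re * y ^ m / (1 - x) = (G 1).re / (1 - x) + (G 1).re * ((y ^ m - 1) / (1 - x)) := by
      field_simp; ring
    rw [this]; linarith
  have hym : y ^ m ≤ Real.exp ((1 - x) * (4 * Real.log (32 * M) + 1)) := by
    calc y ^ m ≤ Real.exp (1 - x) ^ m := by
          gcongr
          have := Real.add_one_le_exp (1 - x); simp only [y]; linarith
      _ = Real.exp ((1 - x) * m) := by rw [← Real.exp_nat_mul]; congr 1; ring
      _ ≤ _ := by gcongr
  rw [Real.exp_neg]
  rw [← div_eq_mul_inv, div_le_iff₀ (Real.exp_pos _)]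
  rw [le_div_iff₀ h1x] at hfin
  have : (G 1).re * y ^ m ≤ (G 1).re * Real.exp ((1 - x) * (4 * Real.log (32 * M) + 1)) := by gcongr
  linarith
end

section
open Complex Filter Topology
open scoped ComplexOrder
open ArithmeticFunction hiding log

noncomputable def AF (c : ℕ → ℝ) : ArithmeticFunction ℂ := toArithmeticFunction (fun n => (c n : ℂ))

theorem RC.AF_apply {c : ℕ → ℝ} {N : ℕ} (h : RC c N) (n : ℕ) : AF c n = c n := by
  simp only [AF, toArithmeticFunction, coe_mk]
  split_ifs with hn
  · simp [hn, h.zero]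
  · rfl

theorem RC.AF_mult {c : ℕ → ℝ} {N : ℕ} (h : RC c N) : (AF c).IsMultiplicative := by
  refine ⟨by simp [h.AF_apply, h.one], fun {m n} _ => ?_⟩
  simp [h.AF_apply, h.mul]

theorem RC.pow {c : ℕ → ℝ} {N : ℕ} (h : RC c N) (m k : ℕ) : c (m ^ k) = c m ^ k := by
  induction k with
  | zero => simp [h.one]
  | succ k ih => rw [pow_succ, h.mul, ih, pow_succ]

/-- local power series of an arithmetic function -/
noncomputable def ps {R : Type*} [CommSemiring R] (f : ArithmeticFunction R) (p : ℕ) : PowerSeries R :=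
  PowerSeries.mk fun k => f (p ^ k)

theorem ps_mul {R : Type*} [CommSemiring R] (f g : ArithmeticFunction R) {p : ℕ} (hp : p.Prime) :
    ps (f * g) p = ps f p * ps g p := by
  ext k
  simp only [ps, PowerSeries.coeff_mk, PowerSeries.coeff_mul, ArithmeticFunction.mul_apply]
  rw [Nat.sum_divisorsAntidiagonal (f := fun a b => f a * g b), Nat.sum_divisors_prime_pow hp,
    Finset.Nat.sum_antidiagonal_eq_sum_range_succ (f := fun i j => f (p ^ i) * g (p ^ j))]
  refine Finset.sum_congr rfl fun i hi => ?_
  rw [Nat.pow_div (Nat.lt_succ_iff.1 (Finset.mem_range.1 hi)) hp.pos]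

/-- geometric series -/
noncomputable def gs (x : ℝ) : PowerSeries ℂ := PowerSeries.mk fun k => ((x ^ k : ℝ) : ℂ)

theorem RC.ps_AF {c : ℕ → ℝ} {N : ℕ} (h : RC c N) (p : ℕ) : ps (AF c) p = gs (c p) := by
  ext k; simp [ps, gs, h.AF_apply, h.pow]

theorem ps_zeta {p : ℕ} (hp : p.Prime) : ps ((zeta : ArithmeticFunction ℕ) : ArithmeticFunction ℂ) p = gs 1 := by
  ext k; simp [ps, gs, hp.ne_zero]

def PSN (f : PowerSeries ℂ) : Prop := ∀ k, 0 ≤ PowerSeries.coeff k f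

theorem PSN.mul {f g : PowerSeries ℂ} (hf : PSN f) (hg : PSN g) : PSN (f * g) := by
  intro k
  rw [PowerSeries.coeff_mul]
  exact Finset.sum_nonneg fun i _ => mul_nonneg (hf _) (hg _)

theorem gs_zero : gs 0 = 1 := by
  ext k
  simp only [gs, PowerSeries.coeff_mk, PowerSeries.coeff_one]
  rcases eq_or_ne k 0 with rfl | h
  · simp
  · simp [h]

theorem PSN_gs {x : ℝ} (hx : 0 ≤ x) : PSN (gs x) := by
  intro k
  simp only [gs, PowerSeries.coeff_mk]
  exact_mod_cast pow_nonneg hx k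

theorem PSN_one_gs {x : ℝ} (hx : x = 0 ∨ x = 1 ∨ x = -1) : PSN (gs 1 * gs x) := by
  rcases hx with rfl | rfl | rfl
  · exact (PSN_gs zero_le_one).mul (PSN_gs le_rfl)
  · exact (PSN_gs zero_le_one).mul (PSN_gs zero_le_one)
  · intro k
    rw [mul_comm, PowerSeries.coeff_mul, Finset.Nat.sum_antidiagonal_eq_sum_range_succ_mk]
    simp only [gs, PowerSeries.coeff_mk, one_pow, ofReal_one, mul_one, ofReal_pow, ofReal_neg]
    rw [neg_one_geom_sum]
    split_ifs <;> simp

theorem PSN_four {x y : ℝ} (hx : x = 0 ∨ x = 1 ∨ x = -1) (hy : y = 0 ∨ y = 1 ∨ y = -1) :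
    PSN (gs 1 * gs x * (gs y * gs (x * y))) := by
  have h1 := PSN_one_gs hx
  have hm := PSN_one_gs (x := -1) (by simp)
  rcases hy with rfl | rfl | rfl
  · rw [mul_zero, gs_zero, mul_one, mul_one]; exact h1
  · rw [mul_one]; exact h1.mul h1
  · rcases hx with rfl | rfl | rfl
    · rw [zero_mul, gs_zero, mul_one, mul_one]; exact hm
    · rw [one_mul, show gs 1 * gs 1 * (gs (-1) * gs (-1)) = (gs 1 * gs (-1)) * (gs 1 * gs (-1)) by ring]
      exact hm.mul hm
    · rw [show (-1 : ℝ) * -1 = 1 by norm_num, show gs 1 * gs (-1) * (gs (-1) * gs 1) = (gs 1 * gs (-1)) * (gs 1 * gs (-1)) by ring]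
      exact hm.mul hm

theorem nonneg_of_ps {f : ArithmeticFunction ℂ} (hf : f.IsMultiplicative)
    (h : ∀ p : ℕ, p.Prime → PSN (ps f p)) (n : ℕ) : 0 ≤ f n := by
  rcases eq_or_ne n 0 with rfl | hn
  · simp
  · rw [hf.multiplicative_factorization _ hn]
    refine Finset.prod_nonneg fun p hp => ?_
    have := h p (Nat.prime_of_mem_primeFactors hp) (n.factorization p)
    simpa [ps] using this

noncomputable def A2 (c : ℕ → ℝ) : ArithmeticFunction ℂ := ((zeta : ArithmeticFunction ℕ) : ArithmeticFunction ℂ) * AF c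

noncomputable def A4 (c d : ℕ → ℝ) : ArithmeticFunction ℂ := A2 c * (AF d * AF (fun n => c n * d n))

theorem RC.A2_mult {c : ℕ → ℝ} {N : ℕ} (h : RC c N) : (A2 c).IsMultiplicative :=
  isMultiplicative_zeta.natCast.mul h.AF_mult

theorem RC.A2_nonneg {c : ℕ → ℝ} {N : ℕ} (h : RC c N) (n : ℕ) : 0 ≤ A2 c n := by
  refine nonneg_of_ps h.A2_mult (fun p hp => ?_) n
  rw [A2, ps_mul _ _ hp, ps_zeta hp, h.ps_AF]
  exact PSN_one_gs (h.tri p)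

theorem RC.A4_nonneg {c d : ℕ → ℝ} {N M P : ℕ} (h : RC c N) (h' : RC d M)
    (h'' : RC (fun n => c n * d n) P) (n : ℕ) : 0 ≤ A4 c d n := by
  refine nonneg_of_ps (h.A2_mult.mul (h'.AF_mult.mul h''.AF_mult)) (fun p hp => ?_) n
  change PSN (ps ((((zeta : ArithmeticFunction ℕ) : ArithmeticFunction ℂ) * AF c) * (AF d * AF (fun n => c n * d n))) p)
  rw [ps_mul _ _ hp, ps_mul _ _ hp, ps_mul _ _ hp, ps_zeta hp, h.ps_AF, h'.ps_AF, h''.ps_AF]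
  exact PSN_four (h.tri p) (h'.tri p)

theorem RC.AF_coe {c : ℕ → ℝ} {N : ℕ} (h : RC c N) : ⇑(AF c) = fun n => (c n : ℂ) :=
  funext h.AF_apply

theorem RC.AF_hasSum {c : ℕ → ℝ} {N : ℕ} (h : RC c N) {s : ℂ} (hs : 1 < s.re) :
    LSeriesHasSum (AF c) s (LL c s) := by
  rw [h.LL_eq hs, h.AF_coe]
  exact (h.LS_summable hs).LSeriesHasSum

theorem zeta_hasSum {s : ℂ} (hs : 1 < s.re) :
    LSeriesHasSum ((zeta : ArithmeticFunction ℕ) : ArithmeticFunction ℂ) s (riemannZeta s) := by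
  have := LSeriesHasSum_zeta hs
  exact this

theorem RC.A2_hasSum {c : ℕ → ℝ} {N : ℕ} (h : RC c N) {s : ℂ} (hs : 1 < s.re) :
    LSeriesHasSum (A2 c) s (riemannZeta s * LL c s) :=
  LSeriesHasSum_mul (zeta_hasSum hs) (h.AF_hasSum hs)

theorem RC.A4_hasSum {c d : ℕ → ℝ} {N M P : ℕ} (h : RC c N) (h' : RC d M)
    (h'' : RC (fun n => c n * d n) P) {s : ℂ} (hs : 1 < s.re) :
    LSeriesHasSum (A4 c d) s (riemannZeta s * LL c s * (LL d s * LL (fun n => c n * d n) s)) :=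
  LSeriesHasSum_mul (h.A2_hasSum hs) (LSeriesHasSum_mul (h'.AF_hasSum hs) (h''.AF_hasSum hs))

theorem abscissa_le_one {f : ℕ → ℂ} (h : ∀ s : ℂ, 1 < s.re → LSeriesSummable f s) :
    LSeries.abscissaOfAbsConv f ≤ 1 := by
  have := LSeries.abscissaOfAbsConv_le_of_forall_lt_LSeriesSummable (f := f) (x := 1)
    (fun y hy => h y (by simpa using hy))
  exact_mod_cast this

noncomputable def ZZ : ℂ → ℂ := Function.update (fun s => (s - 1) * riemannZeta s) 1 1

theorem ZZ_one : ZZ 1 = 1 := by simp [ZZ]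

theorem ZZ_of_ne {s : ℂ} (hs : s ≠ 1) : ZZ s = (s - 1) * riemannZeta s := by simp [ZZ, hs]

theorem ZZ_diff : Differentiable ℂ ZZ := by
  intro s
  rcases ne_or_eq s 1 with hs | rfl
  · have : DifferentiableAt ℂ (fun s => (s - 1) * riemannZeta s) s :=
      (by fun_prop : DifferentiableAt ℂ (fun s : ℂ => s - 1) s).mul (differentiableAt_riemannZeta hs)
    refine this.congr_of_eventuallyEq ?_
    filter_upwards [isOpen_ne.mem_nhds hs] with z hz using ZZ_of_ne hz
  · refine (analyticAt_of_differentiable_on_punctured_nhds_of_continuousAt ?_ ?_).differentiableAt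
    · filter_upwards [self_mem_nhdsWithin] with t ht
      have : DifferentiableAt ℂ (fun s => (s - 1) * riemannZeta s) t :=
        (by fun_prop : DifferentiableAt ℂ (fun s : ℂ => s - 1) t).mul (differentiableAt_riemannZeta ht)
      refine this.congr_of_eventuallyEq ?_
      filter_upwards [isOpen_ne.mem_nhds ht] with z hz using ZZ_of_ne hz
    · simp only [ZZ, continuousAt_update_same]
      exact riemannZeta_residue_one

theorem ZZ_bound : ∃ B : ℝ, 1 ≤ B ∧ ∀ s ∈ Metric.closedBall (2 : ℂ) (3 / 2), ‖ZZ s‖ ≤ B := by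
  obtain ⟨B, hB⟩ := (isCompact_closedBall (2 : ℂ) (3 / 2)).exists_bound_of_continuousOn
    ZZ_diff.continuous.continuousOn
  exact ⟨max B 1, le_max_right _ _, fun s hs => (hB s hs).trans (le_max_left _ _)⟩

theorem ZZ_pos : ∃ η : ℝ, 0 < η ∧ η ≤ 1 / 8 ∧ ∀ x : ℝ, 1 - η ≤ x → x < 1 → 0 ≤ (ZZ x).re := by
  have hc : ContinuousAt (fun x : ℝ => (ZZ x).re) 1 :=
    (continuous_re.comp (ZZ_diff.continuous.comp continuous_ofReal)).continuousAt
  have h1 : (0 : ℝ) < (ZZ ((1 : ℝ) : ℂ)).re := by rw [ofReal_one, ZZ_one]; simp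
  obtain ⟨e, he, h⟩ := Metric.eventually_nhds_iff.1 (hc.eventually_const_lt h1)
  refine ⟨min (e / 2) (1 / 8), by positivity, min_le_right _ _, fun x hx hx1 => (h ?_).le⟩
  rw [Real.dist_eq, abs_lt]
  have := min_le_left (e / 2) (1 / 8 : ℝ)
  constructor <;> linarith

theorem closedBall_re {s : ℂ} (hs : s ∈ Metric.closedBall (2 : ℂ) (3 / 2)) : 1 / 2 ≤ s.re ∧ ‖s‖ ≤ 4 := by
  have h : ‖s - 2‖ ≤ 3 / 2 := mem_closedBall_iff_norm.1 hs
  constructor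
  · have := (abs_le.1 ((abs_re_le_norm (s - 2)).trans h)).1
    simp at this; linarith
  · have := norm_add_le (s - 2) 2
    simp at this; linarith

theorem ball_re {s : ℂ} (hs : s ∈ Metric.ball (2 : ℂ) 2) : 0 < s.re := by
  have h : ‖s - 2‖ < 2 := mem_ball_iff_norm.1 hs
  have := (abs_lt.1 ((abs_re_le_norm (s - 2)).trans_lt h)).1
  simp at this; linarith

theorem LL_unif : ∃ B : ℝ, 1 ≤ B ∧ ∀ (c : ℕ → ℝ) (N : ℕ), RC c N →
    ∀ s ∈ Metric.closedBall (2 : ℂ) (3 / 2), ‖LL c s‖ ≤ B * N := by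
  set T := ∑' n : ℕ, ((n + 1 : ℕ) : ℝ) ^ (-(3 / 2 : ℝ))
  have hT : 0 ≤ T := tsum_nonneg fun n => by positivity
  refine ⟨max 1 (4 * T), le_max_left _ _, fun c N h s hs => ?_⟩
  obtain ⟨h1, h2⟩ := closedBall_re hs
  refine (h.LL_bound zero_le_one le_rfl (by linarith) (by linarith)).trans ?_
  have h3 : ∑' n : ℕ, ((n + 1 : ℕ) : ℝ) ^ (-(s.re + 1)) ≤ T := by
    refine Summable.tsum_le_tsum (fun n => ?_) (summable_shift (by linarith)) (summable_shift (by norm_num))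
    refine Real.rpow_le_rpow_of_exponent_le (by simp) (by linarith)
  rw [Real.rpow_one]
  have h4 : 0 ≤ ∑' n : ℕ, ((n + 1 : ℕ) : ℝ) ^ (-(s.re + 1)) := tsum_nonneg fun n => by positivity
  calc _ ≤ 4 * N * T := by gcongr
    _ = (4 * T) * N := by ring
    _ ≤ _ := by gcongr; exact le_max_right _ _

theorem RC.N_pos {c : ℕ → ℝ} {N : ℕ} (h : RC c N) : (1 : ℝ) ≤ N := by
  have := h.sum 1
  simpa [Finset.sum_range_succ, h.zero, h.one] using this

theorem LL_mul_re (c : ℕ → ℝ) (x : ℝ) : LL c x = (((LL c x).re : ℝ) : ℂ) :=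
  Complex.ext (by simp) (by simp [LL_real])

theorem RC.diff_ball {c : ℕ → ℝ} {N : ℕ} (h : RC c N) : DifferentiableOn ℂ (LL c) (Metric.ball 2 2) :=
  h.LL_diff.mono fun _ hs => ball_re hs

theorem siegelA : ∃ η : ℝ, 0 < η ∧ η ≤ 1 / 8 ∧ ∃ B : ℝ, 1 ≤ B ∧ ∀ (c : ℕ → ℝ) (N : ℕ), RC c N →
    ∀ x : ℝ, 1 - η ≤ x → x < 1 → 0 ≤ (LL c x).re →
    (1 - x) / 2 * Real.exp (-((1 - x) * (4 * Real.log (B * N) + 1))) ≤ (LL c 1).re := by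
  obtain ⟨η, h0, h8, hη⟩ := ZZ_pos
  obtain ⟨B1, hB1, hZ⟩ := ZZ_bound
  obtain ⟨B2, hB2, hL⟩ := LL_unif
  refine ⟨η, h0, h8, 32 * (B1 * B2), by nlinarith, fun c N h x hx hx1 hpos => ?_⟩
  have hN := h.N_pos
  have := core (a := A2 c) (G := fun s => ZZ s * LL c s) (M := B1 * B2 * N) (x := x)
    (fun n => h.A2_nonneg n) h.A2_mult.map_one
    (abscissa_le_one fun s hs => (h.A2_hasSum hs).LSeriesSummable)
    (ZZ_diff.differentiableOn.mul h.diff_ball)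
    (fun s hs => by
      rw [(h.A2_hasSum hs).LSeries_eq, ZZ_of_ne (by rintro rfl; simp at hs)]; ring)
    (one_le_mul_of_one_le_of_one_le (one_le_mul_of_one_le_of_one_le hB1 hB2) hN)
    (fun s hs => by
      rw [norm_mul, mul_assoc]
      exact mul_le_mul (hZ s hs) (hL c N h s hs) (norm_nonneg _) (by linarith))
    (by linarith) hx1
    (by
      show 0 ≤ (ZZ x * LL c x).re
      rw [LL_mul_re, re_mul_ofReal]; exact mul_nonneg (hη x hx hx1) hpos)
  simp only [ZZ_one, one_mul] at this
  rw [mul_assoc 32]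
  exact this

theorem siegelB : ∃ B : ℝ, 1 ≤ B ∧ ∀ (c d : ℕ → ℝ) (N M P : ℕ), RC c N → RC d M →
    RC (fun n => c n * d n) P → ∀ x : ℝ, 7 / 8 ≤ x → x < 1 → LL c x = 0 →
    (1 - x) / 2 * Real.exp (-((1 - x) * (4 * Real.log (B * (N * (M * P))) + 1))) ≤
      (LL c 1).re * ((LL d 1).re * (LL (fun n => c n * d n) 1).re) := by
  obtain ⟨B1, hB1, hZ⟩ := ZZ_bound
  obtain ⟨B2, hB2, hL⟩ := LL_unif
  have hB : 1 ≤ B1 * (B2 * (B2 * B2)) := one_le_mul_of_one_le_of_one_le hB1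
    (one_le_mul_of_one_le_of_one_le hB2 (one_le_mul_of_one_le_of_one_le hB2 hB2))
  refine ⟨32 * (B1 * (B2 * (B2 * B2))), by linarith, fun c d N M P h h' h'' x hx hx1 hpos => ?_⟩
  have hN := h.N_pos
  have hM := h'.N_pos
  have hP := h''.N_pos
  have := core (a := A4 c d) (G := fun s => ZZ s * (LL c s * (LL d s * LL (fun n => c n * d n) s)))
    (M := B1 * ((B2 * N) * ((B2 * M) * (B2 * P)))) (x := x)
    (fun n => h.A4_nonneg h' h'' n) (h.A2_mult.mul (h'.AF_mult.mul h''.AF_mult)).map_one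
    (abscissa_le_one fun s hs => (h.A4_hasSum h' h'' hs).LSeriesSummable)
    (ZZ_diff.differentiableOn.mul (h.diff_ball.mul (h'.diff_ball.mul h''.diff_ball)))
    (fun s hs => by
      rw [(h.A4_hasSum h' h'' hs).LSeries_eq, ZZ_of_ne (by rintro rfl; simp at hs)]; ring)
    (one_le_mul_of_one_le_of_one_le hB1 (one_le_mul_of_one_le_of_one_le
      (one_le_mul_of_one_le_of_one_le hB2 hN) (one_le_mul_of_one_le_of_one_le
      (one_le_mul_of_one_le_of_one_le hB2 hM) (one_le_mul_of_one_le_of_one_le hB2 hP))))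
    (fun s hs => by
      rw [norm_mul, norm_mul, norm_mul]
      have i1 := hZ s hs
      have i2 := hL c N h s hs
      have i3 := hL d M h' s hs
      have i4 := hL _ P h'' s hs
      gcongr)
    (by linarith) hx1
    (by simp [hpos])
  simp only [ZZ_one, one_mul] at this
  have e : ∀ e : ℕ → ℝ, LL e 1 = (((LL e 1).re : ℝ) : ℂ) := fun e => by
    have := LL_mul_re e 1; simpa using this
  rw [e c, e d, e (fun n => c n * d n), ← ofReal_mul, ← ofReal_mul, ofReal_re] at this
  have e2 : 32 * (B1 * (B2 * (B2 * B2))) * ((N : ℝ) * (M * P)) =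
      32 * (B1 * ((B2 * N) * ((B2 * M) * (B2 * P)))) := by ring
  rw [e2]
  exact this
end

section
open Complex Filter Topology
open scoped ComplexOrder

theorem exp_log_eq {t B X : ℝ} (hB : 0 < B) (hX : 0 < X) :
    Real.exp (-(t * (4 * Real.log (B * X) + 1))) = Real.exp (-t) * B ^ (-(4 * t)) * X ^ (-(4 * t)) := by
  rw [Real.rpow_def_of_pos hB, Real.rpow_def_of_pos hX, ← Real.exp_add, ← Real.exp_add,
    Real.log_mul hB.ne' hX.ne']
  congr 1; ring

theorem LL_one_le (ε : ℝ) (hε : 0 < ε) : ∃ T : ℝ, 0 < T ∧ ∀ (c : ℕ → ℝ) (N : ℕ), RC c N →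
    |(LL c 1).re| ≤ T * (N : ℝ) ^ ε := by
  set δ := min ε 1
  have hδ : 0 < δ := by positivity
  set T := ∑' n : ℕ, ((n + 1 : ℕ) : ℝ) ^ (-(1 + δ : ℝ))
  have hT : 0 ≤ T := tsum_nonneg fun n => by positivity
  refine ⟨T + 1, by positivity, fun c N h => (abs_re_le_norm _).trans ?_⟩
  have := h.LL_bound (s := 1) hδ.le (min_le_right _ _) (by simp) (by simpa using hδ)
  simp only [norm_one, one_mul, one_re] at this
  refine this.trans ?_
  rw [mul_comm]
  have : (N : ℝ) ^ δ ≤ (N : ℝ) ^ ε := Real.rpow_le_rpow_of_exponent_le h.N_pos (min_le_left _ _)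
  gcongr
  exact (le_add_of_nonneg_right zero_le_one)

theorem siegel (S : Set ((ℕ → ℝ) × ℕ)) (hRC : ∀ q ∈ S, RC q.1 q.2)
    (hpos : ∀ q ∈ S, 0 < (LL q.1 1).re)
    (hprod : ∀ q ∈ S, ∀ r ∈ S, q.2 < r.2 → RC (fun n => q.1 n * r.1 n) (q.2 * r.2))
    (ε : ℝ) (hε : 0 < ε) :
    ∃ C : ℝ, 0 < C ∧ ∃ N0 : ℕ, ∀ q ∈ S, N0 < q.2 → C * (q.2 : ℝ) ^ (-ε) ≤ (LL q.1 1).re := by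
  obtain ⟨η, hη0, hη8, B, hB, hA⟩ := siegelA
  set t0 := min η (ε / 16)
  have ht0 : 0 < t0 := by positivity
  have ht0η : t0 ≤ η := min_le_left _ _
  have ht0ε : t0 ≤ ε / 16 := min_le_right _ _
  set x0 := 1 - t0 with hx0
  by_cases hcase : ∀ q ∈ S, 0 ≤ (LL q.1 x0).re
  · refine ⟨t0 / 2 * (Real.exp (-t0) * B ^ (-(4 * t0))), by positivity, 0, fun q hq _ => ?_⟩
    have h := hRC q hq
    have hN := h.N_pos
    refine le_trans ?_ (hA q.1 q.2 h x0 (by linarith) (by linarith) (hcase q hq))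
    rw [show 1 - x0 = t0 by rw [hx0]; ring, exp_log_eq (by linarith) (by linarith), mul_assoc (t0 / 2)]
    gcongr
    linarith
  · push Not at hcase
    obtain ⟨⟨c, N⟩, hq, hneg⟩ := hcase
    have h := hRC _ hq
    have hp := hpos _ hq
    simp only at h hp hneg
    have hN := h.N_pos
    obtain ⟨β, hβ, hβ0⟩ : ∃ β ∈ Set.Ioo x0 1, (LL c β).re = 0 := by
      have hcont : ContinuousOn (fun x : ℝ => (LL c x).re) (Set.Icc x0 1) := by
        refine continuous_re.comp_continuousOn (h.LL_diff.continuousOn.comp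
          continuous_ofReal.continuousOn ?_)
        intro x hx
        simp only [Set.mem_ofPred_eq, ofReal_re]
        linarith [hx.1]
      have := intermediate_value_Ioo (by linarith) hcont (show (0 : ℝ) ∈ Set.Ioo _ _ from
        ⟨hneg, by simpa using hp⟩)
      simpa using this
    have hβ1 : LL c β = 0 := by rw [LL_mul_re, hβ0]; simp
    obtain ⟨B', hB', hBB⟩ := siegelB
    obtain ⟨T, hT, hTT⟩ := LL_one_le (ε / 2) (by linarith)
    set t := 1 - β
    have ht : 0 < t := by simp only [t]; linarith [hβ.2]
    have ht2 : t ≤ ε / 16 := by simp only [t]; linarith [hβ.1]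
    set K := t / 2 * (Real.exp (-t) * (B' * N ^ 2) ^ (-(4 * t)))
    have hK : 0 < K := by positivity
    set L := (LL c 1).re * (T * (N : ℝ) ^ (ε / 2))
    have hL : 0 < L := by positivity
    refine ⟨K / L, by positivity, N, fun q hq' hNq => ?_⟩
    have h' := hRC q hq'
    have h'' := hprod _ hq q hq' hNq
    simp only at h''
    have hM := h'.N_pos
    have hl := hBB c q.1 N q.2 (N * q.2) h h' h'' β (by linarith [hβ.1]) hβ.2 hβ1
    have e1 : B' * ((N : ℝ) * (q.2 * ((N * q.2 : ℕ) : ℝ))) = (B' * N ^ 2) * (q.2 : ℝ) ^ 2 := by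
      push_cast; ring
    rw [e1, exp_log_eq (by positivity) (by positivity)] at hl
    have h3 : K * (q.2 : ℝ) ^ (-(ε / 2)) ≤
        (1 - β) / 2 * (Real.exp (-(1 - β)) * (B' * ↑N ^ 2) ^ (-(4 * (1 - β))) * ((q.2 : ℝ) ^ 2) ^ (-(4 * (1 - β)))) := by
      have : (q.2 : ℝ) ^ (-(ε / 2)) ≤ ((q.2 : ℝ) ^ 2) ^ (-(4 * (1 - β))) := by
        rw [← Real.rpow_natCast, ← Real.rpow_mul (by positivity)]
        refine Real.rpow_le_rpow_of_exponent_le hM ?_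
        push_cast
        linarith
      rw [← mul_assoc]
      exact mul_le_mul_of_nonneg_left this hK.le
    have hq0 := hpos q hq'
    have h4 : (LL (fun n => c n * q.1 n) 1).re ≤ T * ((N : ℝ) ^ (ε / 2) * (q.2 : ℝ) ^ (ε / 2)) := by
      refine (le_abs_self _).trans ((hTT _ _ h'').trans (le_of_eq ?_))
      push_cast
      rw [Real.mul_rpow (by positivity) (by positivity)]
    have h5 : K * (q.2 : ℝ) ^ (-(ε / 2)) ≤ (LL q.1 1).re * L * (q.2 : ℝ) ^ (ε / 2) := by
      calc _ ≤ _ := h3.trans hl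
        _ ≤ (LL c 1).re * ((LL q.1 1).re * (T * ((N : ℝ) ^ (ε / 2) * (q.2 : ℝ) ^ (ε / 2)))) := by gcongr
        _ = _ := by simp only [L]; ring
    have e2 : (q.2 : ℝ) ^ (-ε) = (q.2 : ℝ) ^ (-(ε / 2)) * ((q.2 : ℝ) ^ (ε / 2))⁻¹ := by
      rw [← Real.rpow_neg (by positivity), ← Real.rpow_add (by positivity)]; congr 1; ring
    have hqq : 0 < (q.2 : ℝ) ^ (ε / 2) := by positivity
    rw [e2, div_mul_eq_mul_div, div_le_iff₀ hL, ← mul_assoc, ← div_eq_mul_inv, div_le_iff₀ hqq]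
    exact h5
end

section
open Complex Filter Topology
open scoped NumberTheorySymbols

noncomputable def cD (D : ℤ) (n : ℕ) : ℝ := if n % 2 = 1 then (J(D | n) : ℝ) else 0

theorem exists_nonres {q : ℕ} (hq : q.Prime) (hq2 : q ≠ 2) : ∃ u : ℕ, J(u | q) = -1 := by
  have := Fact.mk hq
  obtain ⟨a, ha⟩ := FiniteField.exists_nonsquare (F := ZMod q) (by
    rw [ZMod.ringChar_zmod_n]; exact hq2)
  refine ⟨a.val, ?_⟩
  rw [ZMod.nonsquare_iff_jacobiSym_eq_neg_one]
  simpa using ha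

theorem jac_sq_one {b n : ℕ} (h : Nat.Coprime b n) : J(((b : ℤ) ^ 2) | n) = 1 :=
  jacobiSym.sq_one' (by simpa using h)

theorem exists_neg_one_odd_prime {q k : ℕ} {m : ℤ} (hq : q.Prime) (hq2 : q ≠ 2) (hk : Odd k)
    (hm : m ≠ 0) (hqm : ¬ q ∣ m.natAbs) :
    ∃ n : ℕ, n % 2 = 1 ∧ J((q : ℤ) ^ k * m | n) = -1 := by
  obtain ⟨u, hu⟩ := exists_nonres hq hq2
  have hqo : Odd q := hq.odd_of_ne_two hq2
  have hcop : Nat.Coprime q (8 * m.natAbs) := by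
    refine Nat.Coprime.mul_right ?_ ((Nat.Prime.coprime_iff_not_dvd hq).2 hqm)
    rw [show 8 = 2 ^ 3 by norm_num]
    exact Nat.Coprime.pow_right _ ((Nat.coprime_primes hq Nat.prime_two).2 hq2)
  obtain ⟨n, hn1, hn2⟩ := Nat.chineseRemainder hcop u 1
  have hn8 : n % 8 = 1 := by
    have := hn2.of_mul_right m.natAbs
    simpa [Nat.ModEq] using this
  have hn2' : n % 2 = 1 := by omega
  have hodd : Odd n := Nat.odd_iff.2 hn2'
  refine ⟨n, hn2', ?_⟩
  rw [jacobiSym.mul_left, jacobiSym.pow_left]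
  have h1 : J(m | n) = 1 := by
    rw [jacobiSym.mod_right m hodd]
    have : n % (4 * m.natAbs) = 1 := by
      have h4 : n ≡ 1 [MOD 4 * m.natAbs] := hn2.of_dvd ⟨2, by ring⟩
      have : 0 < m.natAbs := Int.natAbs_pos.2 hm
      rw [h4, Nat.mod_eq_of_lt (by omega)]
    rw [this, jacobiSym.one_right]
  have h2 : J(q | n) = -1 := by
    rw [jacobiSym.quadratic_reciprocity_one_mod_four' hqo (by omega), ← hu]
    apply jacobiSym.mod_left'
    exact_mod_cast hn1
  rw [h1, h2, hk.neg_one_pow]; rfl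

theorem exists_coprime_mod8 (r b : ℕ) (hr : r % 2 = 1) (hb : b ≠ 0) :
    ∃ n : ℕ, n % 8 = r % 8 ∧ Nat.Coprime b n := by
  obtain ⟨j, b', hb', rfl⟩ := Nat.exists_eq_pow_mul_and_not_dvd hb 2 (by norm_num)
  have hb2 : Nat.Coprime 2 b' := (Nat.Prime.coprime_iff_not_dvd Nat.prime_two).2 hb'
  have hcop : Nat.Coprime 8 b' := by
    rw [show 8 = 2 ^ 3 by norm_num]
    exact Nat.Coprime.pow_left _ hb2
  obtain ⟨n, hn1, hn2⟩ := Nat.chineseRemainder hcop r 1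
  refine ⟨n, hn1, Nat.Coprime.mul_left (Nat.Coprime.pow_left _ ?_) ?_⟩
  · have : n % 8 = r % 8 := hn1
    rw [Nat.coprime_two_left, Nat.odd_iff]; omega
  · have := hn2.gcd_eq
    rw [Nat.coprime_comm, Nat.Coprime, this]; simp

theorem exists_neg_one {D : ℤ} (hD : ¬ IsSquare D) : ∃ n : ℕ, n % 2 = 1 ∧ J(D | n) = -1 := by
  have hD0 : D ≠ 0 := by rintro rfl; exact hD ⟨0, by simp⟩
  obtain ⟨a, b, hab, hsf⟩ := Nat.sq_mul_squarefree D.natAbs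
  have hDn : D.natAbs ≠ 0 := by simpa using hD0
  have hb0 : b ≠ 0 := by rintro rfl; simp at hab; omega
  have ha0 : a ≠ 0 := by rintro rfl; simp at hab; omega
  by_cases hq : ∃ q : ℕ, q.Prime ∧ q ≠ 2 ∧ q ∣ a
  · obtain ⟨q, hq, hq2, a', rfl⟩ := hq
    have hqa' : ¬ q ∣ a' := fun ⟨t, ht⟩ => by
      have := hsf q ⟨t, by rw [ht]; ring⟩
      exact hq.one_lt.ne' (Nat.isUnit_iff.1 this)
    obtain ⟨j, b', hb', rfl⟩ := Nat.exists_eq_pow_mul_and_not_dvd hb0 q hq.one_lt.ne'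
    have key : ∃ m : ℤ, D = (q : ℤ) ^ (2 * j + 1) * m ∧ m.natAbs = b' ^ 2 * a' := by
      have e : ((D.natAbs : ℕ) : ℤ) = (q : ℤ) ^ (2 * j + 1) * (b' ^ 2 * a') := by
        rw [← hab]; push_cast; ring
      rcases Int.natAbs_eq D with h | h
      · exact ⟨(b' ^ 2 * a' : ℕ), by rw [h, e]; push_cast; ring, Int.natAbs_natCast _⟩
      · exact ⟨-(b' ^ 2 * a' : ℕ), by rw [h, e]; push_cast; ring, by rw [Int.natAbs_neg, Int.natAbs_natCast]⟩
    obtain ⟨m, hm, hm'⟩ := key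
    rw [hm]
    refine exists_neg_one_odd_prime hq hq2 ⟨j, rfl⟩ ?_ ?_
    · rintro rfl; simp at hm; exact hD0 hm
    · rw [hm', hq.dvd_mul]
      rintro (h | h)
      · exact hb' (hq.dvd_of_dvd_pow h)
      · exact hqa' h
  · push Not at hq
    have ha : a = 1 ∨ a = 2 := by
      by_contra hcon
      push Not at hcon
      obtain ⟨p, hp, t, ht⟩ := Nat.exists_prime_and_dvd hcon.1
      have hp2 : p = 2 := by
        by_contra h; exact hq p hp h ⟨t, ht⟩
      subst hp2
      have : t ≠ 1 := by rintro rfl; exact hcon.2 (by simpa using ht)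
      obtain ⟨p, hp, t', ht'⟩ := Nat.exists_prime_and_dvd this
      have hp2 : p = 2 := by
        by_contra h; exact hq p hp h ⟨2 * t', by rw [ht, ht']; ring⟩
      subst hp2
      have := hsf 2 ⟨t', by rw [ht, ht']; ring⟩
      simp at this
    have e : ((D.natAbs : ℕ) : ℤ) = (b : ℤ) ^ 2 * a := by
      rw [← hab]; push_cast; ring
    have h3 : ∀ n : ℕ, n % 8 = 3 → J(-1 | n) = -1 := fun n hn => by
      rw [jacobiSym.at_neg_one (Nat.odd_iff.2 (by omega)), ZMod.χ₄_nat_mod_four,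
        show n % 4 = 3 by omega]; rfl
    have h5 : ∀ n : ℕ, n % 8 = 5 → J(2 | n) = -1 ∧ J(-2 | n) = -1 := fun n hn => by
      rw [jacobiSym.at_two (Nat.odd_iff.2 (by omega)), ZMod.χ₈_nat_mod_eight,
        jacobiSym.at_neg_two (Nat.odd_iff.2 (by omega)), hn,
        show ((n : ℕ) : ZMod 8) = ((5 : ℕ) : ZMod 8) from (ZMod.natCast_eq_natCast_iff' _ _ _).2 hn]
      exact ⟨rfl, rfl⟩
    have key : ∃ r : ℕ, r % 2 = 1 ∧ r % 8 = r ∧ ∃ x : ℤ, D = (b : ℤ) ^ 2 * x ∧ ∀ n : ℕ, n % 8 = r → J(x | n) = -1 := by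
      rcases Int.natAbs_eq D with h | h <;> rcases ha with rfl | rfl
      · exact absurd ⟨b, by rw [h, e]; push_cast; ring⟩ hD
      · exact ⟨5, by norm_num, by norm_num, 2, by rw [h, e]; push_cast; ring, fun n hn => (h5 n hn).1⟩
      · exact ⟨3, by norm_num, by norm_num, -1, by rw [h, e]; push_cast; ring, fun n hn => h3 n hn⟩
      · exact ⟨5, by norm_num, by norm_num, -2, by rw [h, e]; push_cast; ring, fun n hn => (h5 n hn).2⟩
    obtain ⟨r, hr, hr8, x, hx, hxn⟩ := key
    obtain ⟨n, hn, hc⟩ := exists_coprime_mod8 r b hr hb0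
    refine ⟨n, by omega, ?_⟩
    rw [hx, jacobiSym.mul_left, jac_sq_one hc, hxn n (by omega)]; rfl

theorem cD_mul (D : ℤ) (m n : ℕ) : cD D (m * n) = cD D m * cD D n := by
  unfold cD
  rcases Nat.mod_two_eq_zero_or_one m with hm | hm
  · simp [hm, Nat.mul_mod]
  rcases Nat.mod_two_eq_zero_or_one n with hn | hn
  · simp [hn, Nat.mul_mod]
  rw [if_pos hm, if_pos hn, if_pos (by rw [Nat.mul_mod, hm, hn]),
    jacobiSym.mul_right' _ (by omega) (by omega)]
  push_cast; rfl

theorem cD_mod {D : ℤ} (n : ℕ) : cD D (n % (4 * D.natAbs)) = cD D n := by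
  unfold cD
  have h : (n % (4 * D.natAbs)) % 2 = n % 2 := Nat.mod_mod_of_dvd _ ⟨2 * D.natAbs, by ring⟩
  rw [h]
  split_ifs with h1
  · rw [← jacobiSym.mod_right D (Nat.odd_iff.2 h1)]
  · rfl

theorem cD_prod (D E : ℤ) (n : ℕ) : cD (D * E) n = cD D n * cD E n := by
  unfold cD
  split_ifs
  · rw [jacobiSym.mul_left]; push_cast; rfl
  · simp

theorem cD_tri (D : ℤ) (n : ℕ) : cD D n = 0 ∨ cD D n = 1 ∨ cD D n = -1 := by
  unfold cD
  split_ifs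
  · rcases jacobiSym.trichotomy D n with h | h | h <;> simp [h]
  · simp

theorem cD_sum_period {D : ℤ} (hD : ¬ IsSquare D) :
    ∑ k ∈ Finset.range (4 * D.natAbs), cD D k = 0 := by
  have hD0 : D ≠ 0 := by rintro rfl; exact hD ⟨0, by simp⟩
  have hDn : D.natAbs ≠ 0 := by simpa using hD0
  obtain ⟨n, hn, hJ⟩ := exists_neg_one hD
  set N := 4 * D.natAbs with hN
  have : NeZero N := ⟨by omega⟩
  have hcn : cD D n = -1 := by simp [cD, hn, hJ]
  have e1 : ∑ k ∈ Finset.range N, cD D k = ∑ x : ZMod N, cD D x.val := by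
    rw [Finset.sum_range]
    have : ∀ N : ℕ, [NeZero N] → ∑ i : Fin N, cD D i = ∑ x : ZMod N, cD D x.val := by
      intro N hN
      cases N with
      | zero => exact absurd rfl hN.out
      | succ k => rfl
    exact this N
  have hcop : Nat.Coprime n N := by
    have hc : D.gcd n = 1 := by
      by_contra h
      have := jacobiSym.eq_zero_iff.2 ⟨show n ≠ 0 by omega, h⟩
      omega
    rw [hN, show 4 = 2 ^ 2 by norm_num]
    refine Nat.Coprime.mul_right (Nat.Coprime.pow_right _ ?_) ?_
    · rw [Nat.coprime_two_right, Nat.odd_iff]; exact hn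
    · rw [Nat.coprime_comm]; simpa [Int.gcd] using hc
  let u := ZMod.unitOfCoprime n hcop
  have e2 : ∑ x : ZMod N, cD D x.val = ∑ x : ZMod N, cD D n * cD D x.val := by
    rw [← Equiv.sum_comp (Units.mulLeft u)]
    refine Finset.sum_congr rfl fun x _ => ?_
    rw [Units.mulLeft_apply, ← cD_mul, ZMod.val_mul, cD_mod, ZMod.coe_unitOfCoprime, ZMod.val_natCast,
      cD_mul, cD_mod, ← cD_mul]
  rw [← Finset.mul_sum, hcn] at e2
  rw [e1]; linarith

theorem cD_RC {D : ℤ} (hD : ¬ IsSquare D) {N : ℕ} (hN : 4 * D.natAbs ≤ N) : RC (cD D) N where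
  zero := by simp [cD]
  one := by simp [cD]
  mul := cD_mul D
  tri := cD_tri D
  sum := by
    have hD0 : D ≠ 0 := by rintro rfl; exact hD ⟨0, by simp⟩
    have hDn : D.natAbs ≠ 0 := by simpa using hD0
    set M := 4 * D.natAbs with hM
    have hbd : ∀ r, |∑ k ∈ Finset.range r, cD D k| ≤ r := fun r => by
      refine (Finset.abs_sum_le_sum_abs _ _).trans ?_
      refine (Finset.sum_le_sum (g := fun _ => (1 : ℝ)) fun i _ => ?_).trans (by simp)
      rcases cD_tri D i with h | h | h <;> rw [h] <;> norm_num
    have hper : ∀ x q, cD D (M * q + x) = cD D x := fun x q => by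
      rw [← cD_mod (M * q + x), ← hM, Nat.mul_add_mod, cD_mod]
    have hq : ∀ q r, ∑ k ∈ Finset.range (M * q + r), cD D k = ∑ k ∈ Finset.range r, cD D k := by
      intro q
      induction q with
      | zero => intro r; simp
      | succ q ih =>
        intro r
        rw [show M * (q + 1) + r = M * q + (M + r) by ring, ih, Finset.sum_range_add, cD_sum_period hD,
          zero_add]
        refine Finset.sum_congr rfl fun k _ => ?_
        have := hper k 1
        rwa [mul_one] at this
    intro n
    rw [← Nat.div_add_mod (n + 1) M, hq]
    refine (hbd _).trans ?_
    have : (n + 1) % M < M := Nat.mod_lt _ (by omega)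
    exact_mod_cast (by omega : (n + 1) % M ≤ N)
end

section
open NumberField Module

/-- a quadratic integral basis `1, ω` -/
structure QB (K : Type*) [Field K] [NumberField K] (ω : 𝓞 K) (t n : ℤ) : Prop where
  span : ∀ z : 𝓞 K, ∃ x y : ℤ, z = x + y * ω
  ind : ∀ x y : ℤ, (x : 𝓞 K) + y * ω = 0 → x = 0 ∧ y = 0
  sq : ω ^ 2 = t * ω - n
  disc : discr K = t ^ 2 - 4 * n
  norm : ∀ x y : ℤ, Algebra.norm ℤ ((x : 𝓞 K) + y * ω) = x ^ 2 + t * x * y + n * y ^ 2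

variable {K : Type*} [Field K] [NumberField K]

theorem exists_omega (hK : finrank ℚ K = 2) : ∃ ω : 𝓞 K, 
    (∀ z : 𝓞 K, ∃ x y : ℤ, z = x + y * ω) ∧ (∀ x y : ℤ, (x : 𝓞 K) + y * ω = 0 → x = 0 ∧ y = 0) := by
  have hr : finrank ℤ (𝓞 K) = 2 := by rw [RingOfIntegers.rank, hK]
  let b : Basis (Fin 2) ℤ (𝓞 K) := finBasisOfFinrankEq ℤ (𝓞 K) hr
  have hz : ∀ z : 𝓞 K, z = (b.repr z 0 : 𝓞 K) * b 0 + (b.repr z 1 : 𝓞 K) * b 1 := fun z => by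
    conv_lhs => rw [← b.sum_repr z]
    simp [Fin.sum_univ_two]
  have hind : ∀ x y : ℤ, (x : 𝓞 K) * b 0 + y * b 1 = 0 → x = 0 ∧ y = 0 := fun x y h => by
    have := b.linearIndependent
    rw [Fintype.linearIndependent_iff] at this
    have h2 := this ![x, y] (by simpa [Fin.sum_univ_two] using h)
    exact ⟨h2 0, h2 1⟩
  set x := b.repr 1 0 with hx
  set y := b.repr 1 1 with hy
  have h1 : (1 : 𝓞 K) = x * b 0 + y * b 1 := hz 1
  have hcop : IsCoprime x y := by
    rw [Int.isCoprime_iff_gcd_eq_one]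
    obtain ⟨x', hx'⟩ := Int.gcd_dvd_left x y
    obtain ⟨y', hy'⟩ := Int.gcd_dvd_right x y
    set g := Int.gcd x y
    set w : 𝓞 K := x' * b 0 + y' * b 1
    have hw : (1 : 𝓞 K) = (g : ℤ) * w := by
      rw [h1, hx', hy']; push_cast; ring
    have hb0 : ((g * b.repr (w * b 0) 0 - 1 : ℤ) : 𝓞 K) * b 0 + ((g * b.repr (w * b 0) 1 : ℤ) : 𝓞 K) * b 1 = 0 := by
      have e1 := hz (w * b 0)
      have e2 : b 0 = (g : ℤ) * (w * b 0) := by rw [← mul_assoc, ← hw, one_mul]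
      push_cast at e2 ⊢
      linear_combination (-(g : 𝓞 K)) * e1 - e2
    have := (hind _ _ hb0).1
    have h3 : (g : ℤ) ∣ 1 := ⟨b.repr (w * b 0) 0, by linarith⟩
    have := Int.natAbs_dvd_natAbs.2 h3
    simpa using this
  obtain ⟨u, v, huv⟩ := hcop
  refine ⟨-v * b 0 + u * b 1, fun z => ?_, fun p q h => ?_⟩
  · have huv' : (u : 𝓞 K) * x + v * y = 1 := by exact_mod_cast huv
    refine ⟨b.repr z 0 * u + b.repr z 1 * v, - b.repr z 0 * y + b.repr z 1 * x, ?_⟩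
    have e := hz z
    push_cast
    linear_combination e - (b.repr z 0 * u + b.repr z 1 * v : 𝓞 K) * h1 - ((b.repr z 0 : 𝓞 K) * b 0 + (b.repr z 1 : 𝓞 K) * b 1) * huv'
  · have : ((p * x - q * v : ℤ) : 𝓞 K) * b 0 + ((p * y + q * u : ℤ) : 𝓞 K) * b 1 = 0 := by
      push_cast; linear_combination h - (p : 𝓞 K) * h1
    obtain ⟨e1, e2⟩ := hind _ _ this
    constructor
    · linear_combination u * e1 + v * e2 - p * huv
    · linear_combination (-y) * e1 + x * e2 - q * huv

theorem exists_QB (hK : finrank ℚ K = 2) : ∃ (ω : 𝓞 K) (t n : ℤ), QB K ω t n := by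
  obtain ⟨ω, hs, hi⟩ := exists_omega hK
  obtain ⟨n', t, hq⟩ := hs (ω ^ 2)
  have hq : ω ^ 2 = t * ω - ((-n' : ℤ) : 𝓞 K) := by rw [hq]; push_cast; ring
  generalize -n' = n at hq
  have hli : LinearIndependent ℤ ![(1 : 𝓞 K), ω] := by
    rw [LinearIndependent.pair_iff]
    intro x y h
    exact hi x y (by simpa using h)
  let b : Basis (Fin 2) ℤ (𝓞 K) := Basis.mk hli (by
    intro z _
    obtain ⟨x, y, rfl⟩ := hs z
    have h1 : (1 : 𝓞 K) ∈ Submodule.span ℤ (Set.range ![(1 : 𝓞 K), ω]) := Submodule.subset_span ⟨0, rfl⟩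
    have h2 : ω ∈ Submodule.span ℤ (Set.range ![(1 : 𝓞 K), ω]) := Submodule.subset_span ⟨1, rfl⟩
    have := Submodule.add_mem _ (Submodule.smul_mem _ x h1) (Submodule.smul_mem _ y h2)
    simpa using this)
  have hb0 : b 0 = 1 := by simp [b]
  have hb1 : b 1 = ω := by simp [b]
  have hrepr : ∀ x y : ℤ, b.repr (x + y * ω) = Finsupp.single 0 x + Finsupp.single 1 y := fun x y => by
    have : (x : 𝓞 K) + y * ω = x • b 0 + y • b 1 := by simp [hb0, hb1]
    rw [this, map_add, map_smul, map_smul]; simp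
  have hM : ∀ x y : ℤ, Algebra.leftMulMatrix b (x + y * ω) = !![x, -n * y; y, x + t * y] := by
    intro x y
    ext i j
    rw [Algebra.leftMulMatrix_eq_repr_mul]
    have e0 : ((x : 𝓞 K) + y * ω) * b 0 = x + y * ω := by rw [hb0, mul_one]
    have e1 : ((x : 𝓞 K) + y * ω) * b 1 = ((-n * y : ℤ) : 𝓞 K) + ((x + t * y : ℤ) : 𝓞 K) * ω := by
      rw [hb1]; push_cast; linear_combination (y : 𝓞 K) * hq
    fin_cases j
    · simp only [Fin.zero_eta, e0, hrepr]
      fin_cases i <;> simp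
    · simp only [Fin.mk_one, e1, hrepr]
      fin_cases i <;> simp
  have htr : ∀ x y : ℤ, Algebra.trace ℤ (𝓞 K) (x + y * ω) = 2 * x + t * y := fun x y => by
    rw [Algebra.trace_eq_matrix_trace b, hM]; simp [Matrix.trace_fin_two]; ring
  refine ⟨ω, t, n, hs, hi, hq, ?_, fun x y => ?_⟩
  · rw [← discr_eq_discr K b, Algebra.discr_def, Matrix.det_fin_two]
    simp only [Algebra.traceMatrix_apply, Algebra.traceForm_apply, hb0, hb1]
    have e1 := htr 1 0
    have e2 := htr 0 1
    have e3 := htr (-n) t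
    rw [show (((-n : ℤ) : 𝓞 K) + t * ω) = ω * ω by rw [← pow_two, hq]; push_cast; ring] at e3
    simp only [Int.cast_one, Int.cast_zero, zero_mul, add_zero, one_mul, zero_add] at e1 e2
    rw [one_mul, one_mul, mul_one, e1, e2, e3]; ring
  · rw [Algebra.norm_eq_matrix_det b, hM, Matrix.det_fin_two]
    simp; ring

theorem QB.not_sq {ω : 𝓞 K} {t n : ℤ} (h : QB K ω t n) : ¬ IsSquare (discr K) := by
  rintro ⟨s, hs⟩
  rw [h.disc] at hs
  have hs' : (t : 𝓞 K) ^ 2 - 4 * n = s * s := by exact_mod_cast hs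
  have : (((-t - s : ℤ) : 𝓞 K) + (2 : ℤ) * ω) * (((-t + s : ℤ) : 𝓞 K) + (2 : ℤ) * ω) = 0 := by
    push_cast; linear_combination 4 * h.sq + hs'
  rcases mul_eq_zero.1 this with h' | h'
  · exact absurd (h.ind _ _ h').2 (by norm_num)
  · exact absurd (h.ind _ _ h').2 (by norm_num)

theorem QB.units {ω : 𝓞 K} {t n : ℤ} (h : QB K ω t n) (hd : discr K < -4) (u : (𝓞 K)ˣ) :
    u = 1 ∨ u = -1 := by
  obtain ⟨x, y, hxy⟩ := h.span u
  have hn := h.norm x y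
  rw [← hxy] at hn
  have hu : IsUnit (Algebra.norm ℤ (u : 𝓞 K)) := u.isUnit.map _
  rw [hn, Int.isUnit_iff] at hu
  rw [h.disc] at hd
  have hle : x ^ 2 + t * x * y + n * y ^ 2 ≤ 1 := by rcases hu with h | h <;> linarith
  have e : (2 * x + t * y) ^ 2 + (4 * n - t ^ 2) * y ^ 2 = 4 * (x ^ 2 + t * x * y + n * y ^ 2) := by ring
  have hy : y = 0 := by
    by_contra hy
    have : 1 ≤ y ^ 2 := by have := sq_pos_of_ne_zero hy; linarith
    nlinarith [sq_nonneg (2 * x + t * y)]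
  subst hy
  have hx : x = 1 ∨ x = -1 := by
    simp at hu
    rcases hu with h | h
    · exact h
    · nlinarith
  rcases hx with rfl | rfl
  · left; ext; simp [hxy]
  · right; ext; simp [hxy]

theorem torsionOrder_le {ω : 𝓞 K} {t n : ℤ} (h : QB K ω t n) (hd : discr K < -4) :
    Units.torsionOrder K ≤ 2 := by
  rw [Units.torsionOrder]
  have : Nat.card (Units.torsion K) ≤ Nat.card ({1, -1} : Set (𝓞 K)ˣ) := by
    refine Nat.card_le_card_of_injective (fun u => ⟨u.1, by rcases h.units hd u.1 with h | h <;> simp [h]⟩) ?_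
    intro a b hab
    simpa using hab
  refine this.trans ?_
  rw [Nat.card_coe_set_eq]
  exact Set.ncard_insert_le _ _ |>.trans (by simp)

theorem nr_places (hK : finrank ℚ K = 2) (hE : IsEmpty (K →+* ℝ)) :
    InfinitePlace.nrRealPlaces K = 0 ∧ InfinitePlace.nrComplexPlaces K = 1 := by
  have h0 : InfinitePlace.nrRealPlaces K = 0 := by
    classical
    rw [InfinitePlace.nrRealPlaces, Fintype.card_eq_zero_iff]
    exact ⟨fun w => hE.elim (InfinitePlace.embedding_of_isReal w.2)⟩
  have := InfinitePlace.card_add_two_mul_card_eq_rank K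
  omega

theorem discr_neg (hK : finrank ℚ K = 2) (hE : IsEmpty (K →+* ℝ)) : discr K < 0 := by
  have := sign_discr K
  rw [(nr_places hK hE).2] at this
  exact Int.sign_eq_neg_one_iff_neg.1 (by simpa using this)

theorem reg_one (hK : finrank ℚ K = 2) (hE : IsEmpty (K →+* ℝ)) : Units.regulator K = 1 := by
  classical
  rw [Units.regulator_eq_det']
  have h1 : Units.rank K = 0 := by
    rw [Units.rank, InfinitePlace.card_eq_nrRealPlaces_add_nrComplexPlaces, (nr_places hK hE).1,
      (nr_places hK hE).2]
  have : IsEmpty {w : InfinitePlace K // w ≠ Units.dirichletUnitTheorem.w₀} :=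
    ⟨fun w => by
      have := Units.equivFinRank K |>.symm w
      rw [h1] at this
      exact this.elim0⟩
  rw [Matrix.det_isEmpty]; simp

theorem class_formula (hK : finrank ℚ K = 2) (hE : IsEmpty (K →+* ℝ)) :
    (classNumber K : ℝ) = dedekindZeta_residue K * Units.torsionOrder K * Real.sqrt |(discr K : ℝ)| / (2 * Real.pi) := by
  have hw : (0 : ℝ) < Units.torsionOrder K := Nat.cast_pos.mpr (Units.torsionOrder_pos K)
  have hs : 0 < Real.sqrt |(discr K : ℝ)| := 
    Real.sqrt_pos_of_pos <| abs_pos.mpr (Int.cast_ne_zero.mpr (discr_ne_zero K))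
  have hpi := Real.pi_pos
  rw [dedekindZeta_residue_def, (nr_places hK hE).1, (nr_places hK hE).2, reg_one hK hE]
  field_simp
end

section
open NumberField Module
open scoped NumberTheorySymbols

section
variable {K : Type*} [Field K] [NumberField K]

theorem QB.hom {ω : 𝓞 K} {t n : ℤ} (h : QB K ω t n) {p : ℕ} (a : ZMod p)
    (ha : a ^ 2 = t * a - n) : ∃ f : 𝓞 K →+* ZMod p, f ω = a := by
  choose X Y hXY using h.span
  have uniq : ∀ x y x' y' : ℤ, (x : 𝓞 K) + y * ω = x' + y' * ω → x = x' ∧ y = y' := by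
    intro x y x' y' e
    have := h.ind (x - x') (y - y') (by push_cast; linear_combination e)
    constructor <;> linarith [this.1, this.2]
  have hX : ∀ z (x y : ℤ), z = x + y * ω → X z = x ∧ Y z = y := fun z x y e =>
    uniq _ _ _ _ ((hXY z).symm.trans e)
  have h1 := hX 1 1 0 (by simp)
  have h0 := hX 0 0 0 (by simp)
  refine ⟨{ toFun := fun z => (X z : ZMod p) + Y z * a
            map_one' := by simp [h1]
            map_zero' := by simp [h0]
            map_add' := ?_
            map_mul' := ?_ }, ?_⟩
  · intro z w
    obtain ⟨e1, e2⟩ := hX (z * w) (X z * X w - Y z * Y w * n) (X z * Y w + Y z * X w + Y z * Y w * t) (by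
      conv_lhs => rw [hXY z, hXY w]
      push_cast
      linear_combination ((Y z : 𝓞 K) * Y w) * h.sq)
    rw [e1, e2]; push_cast
    linear_combination (-(Y z : ZMod p) * Y w) * ha
  · intro z w
    obtain ⟨e1, e2⟩ := hX (z + w) (X z + X w) (Y z + Y w) (by
      conv_lhs => rw [hXY z, hXY w]
      push_cast; ring)
    rw [e1, e2]; push_cast; ring
  · have := hX ω 0 1 (by simp)
    simp [this]

/-- number of ideals of norm `m` -/
noncomputable def aK (K : Type*) [Field K] [NumberField K] (m : ℕ) : ℕ :=
  Nat.card {I : Ideal (𝓞 K) // Ideal.absNorm I = m}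

theorem QB.card_eq_roots {ω : 𝓞 K} {t n : ℤ} (h : QB K ω t n) {p : ℕ} [hp : Fact p.Prime] :
    aK K p = Nat.card {a : ZMod p // a ^ 2 = t * a - n} := by
  symm
  choose f hf using fun a : {a : ZMod p // a ^ 2 = t * a - n} => h.hom a.1 a.2
  have hsurj : ∀ g : 𝓞 K →+* ZMod p, Function.Surjective g := fun g => ZMod.ringHom_surjective g
  have hnorm : ∀ g : 𝓞 K →+* ZMod p, Ideal.absNorm (RingHom.ker g) = p := fun g => by
    rw [Ideal.absNorm_apply, Submodule.cardQuot_apply]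
    have e := RingHom.quotientKerEquivOfSurjective (hsurj g)
    exact (Nat.card_congr e.toEquiv).trans (Nat.card_zmod p)
  have hgxy : ∀ (g : 𝓞 K →+* ZMod p) (x y : ℤ), g (x + y * ω) = x + y * g ω := fun g x y => by simp
  refine Nat.card_congr (Equiv.ofBijective (fun a => ⟨RingHom.ker (f a), hnorm _⟩) ⟨?_, ?_⟩)
  · intro a b hab
    have hab : RingHom.ker (f a) = RingHom.ker (f b) := by simpa using hab
    obtain ⟨k, hk⟩ := ZMod.intCast_surjective a.1
    have h1 : ω - (k : 𝓞 K) ∈ RingHom.ker (f a) := by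
      rw [RingHom.mem_ker, map_sub, hf, map_intCast, hk, sub_self]
    rw [hab, RingHom.mem_ker, map_sub, hf, map_intCast, hk, sub_eq_zero] at h1
    exact Subtype.ext h1.symm
  · rintro ⟨P, hP⟩
    rw [Ideal.absNorm_apply, Submodule.cardQuot_apply] at hP
    have hP' : Nat.card (𝓞 K ⧸ P) = p := hP
    have : Finite (𝓞 K ⧸ P) := Nat.finite_of_card_ne_zero (by rw [hP']; exact hp.out.ne_zero)
    have := Fintype.ofFinite (𝓞 K ⧸ P)
    rw [Nat.card_eq_fintype_card] at hP'
    let e := (ZMod.ringEquivOfPrime (𝓞 K ⧸ P) hp.out hP').symm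
    let g : 𝓞 K →+* ZMod p := (e : _ →+* _).comp (Ideal.Quotient.mk P)
    have hg : RingHom.ker g = P := by
      ext z
      simp [g, RingHom.mem_ker, Ideal.Quotient.eq_zero_iff_mem]
    refine ⟨⟨g ω, ?_⟩, ?_⟩
    · have := congrArg g h.sq
      simpa using this
    · apply Subtype.ext
      simp only
      rw [← hg]
      congr 1
      ext z
      obtain ⟨x, y, rfl⟩ := h.span z
      rw [hgxy, hgxy, hf]

theorem QB.r_odd {ω : 𝓞 K} {t n : ℤ} (h : QB K ω t n) {p : ℕ} (hp : p.Prime) (hp2 : p ≠ 2) :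
    (aK K p : ℤ) = 1 + J(discr K | p) := by
  have := Fact.mk hp
  rw [h.card_eq_roots, ← jacobiSym.legendreSym.to_jacobiSym, add_comm, ← legendreSym.card_sqrts p hp2]
  have h2 : (2 : ZMod p) ≠ 0 := by
    intro h
    have : ((2 : ℕ) : ZMod p) = 0 := by exact_mod_cast h
    rw [ZMod.natCast_eq_zero_iff] at this
    exact hp2 ((Nat.prime_dvd_prime_iff_eq hp Nat.prime_two).1 this)
  have hd : ((discr K : ℤ) : ZMod p) = t ^ 2 - 4 * n := by rw [h.disc]; push_cast; ring
  rw [Set.toFinset_card, ← Nat.card_eq_fintype_card]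
  norm_cast
  refine Nat.card_congr (Equiv.ofBijective (fun a => ⟨2 * a.1 - t, ?_⟩) ⟨?_, ?_⟩)
  · show (2 * a.1 - (t : ZMod p)) ^ 2 = _
    rw [hd]; linear_combination 4 * a.2
  · intro a b hab
    have : 2 * a.1 - (t : ZMod p) = 2 * b.1 - t := by simpa using hab
    apply Subtype.ext
    have : (2 : ZMod p) * a.1 = 2 * b.1 := by linear_combination this
    exact mul_left_cancel₀ h2 this
  · rintro ⟨y, hy⟩
    have hy : y ^ 2 = ((discr K : ℤ) : ZMod p) := hy
    rw [hd] at hy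
    refine ⟨⟨(y + t) / 2, ?_⟩, ?_⟩
    · field_simp
      linear_combination hy
    · apply Subtype.ext
      simp only
      field_simp
      ring
end
end

section
open NumberField Module

section
variable {K : Type*} [Field K] [NumberField K]

theorem ideal_eq_of_dvd {P I : Ideal (𝓞 K)} (h : P ∣ I) (hN : Ideal.absNorm P = Ideal.absNorm I)
    (h0 : Ideal.absNorm I ≠ 0) : P = I := by
  obtain ⟨J, rfl⟩ := h
  rw [map_mul] at hN h0
  have : Ideal.absNorm J = 1 := by
    have h1 : Ideal.absNorm P ≠ 0 := left_ne_zero_of_mul h0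
    have : Ideal.absNorm P * Ideal.absNorm J = Ideal.absNorm P * 1 := by omega
    exact Nat.eq_of_mul_eq_mul_left (Nat.pos_of_ne_zero h1) this
  rw [Ideal.absNorm_eq_one_iff] at this
  rw [this, Ideal.mul_top]

theorem ideal_eq_of_dvd_prime {P I : Ideal (𝓞 K)} {p : ℕ} (hp : p.Prime) (h : P ∣ I)
    (hI : Ideal.absNorm I = p) (hP : P ≠ ⊤) : P = I := by
  refine ideal_eq_of_dvd h ?_ (by rw [hI]; exact hp.ne_zero)
  have h1 : Ideal.absNorm P ∣ p := hI ▸ map_dvd Ideal.absNorm h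
  rcases (Nat.dvd_prime hp).1 h1 with h2 | h2
  · exact absurd (Ideal.absNorm_eq_one_iff.1 h2) hP
  · rw [h2, hI]

theorem norm_span_p (hK : finrank ℚ K = 2) (p : ℕ) :
    Ideal.absNorm (Ideal.span {(p : 𝓞 K)}) = p ^ 2 := by
  rw [Ideal.absNorm_span_natCast, RingOfIntegers.rank, hK]

theorem exists_prime_dvd {p : ℕ} (hp : p.Prime) (I : Ideal (𝓞 K)) (hI : p ∣ Ideal.absNorm I) :
    ∃ P : Ideal (𝓞 K), Prime P ∧ P ≠ ⊤ ∧ P ∣ I ∧ P ∣ Ideal.span {(p : 𝓞 K)} := by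
  obtain ⟨P, hP, hu, hd⟩ := Ideal.exists_isMaximal_dvd_of_dvd_absNorm' hp I hI
  have hpP : (p : 𝓞 K) ∈ P := by
    have : (p : ℤ) ∈ P.under ℤ := by rw [hu]; exact Ideal.mem_span_singleton_self _
    simpa [Ideal.mem_comap] using this
  have hP0 : P ≠ ⊥ := by
    rintro rfl
    simp at hpP
    exact hp.ne_zero hpP
  refine ⟨P, Ideal.prime_of_isPrime hP0 hP.isPrime, hP.ne_top, hd, ?_⟩
  rw [Ideal.dvd_iff_le, Ideal.span_singleton_le_iff_mem]
  exact hpP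

theorem classify (hK : finrank ℚ K = 2) {p : ℕ} (hp : p.Prime) :
    ({I : Ideal (𝓞 K) | Ideal.absNorm I = p} = ∅ ∧
      ∀ I : Ideal (𝓞 K), p ∣ Ideal.absNorm I → Ideal.span {(p : 𝓞 K)} ∣ I) ∨
    (∃ P Q : Ideal (𝓞 K), Prime P ∧ Prime Q ∧ Ideal.absNorm P = p ∧ Ideal.absNorm Q = p ∧ P * Q = Ideal.span {(p : 𝓞 K)} ∧
      {I : Ideal (𝓞 K) | Ideal.absNorm I = p} = {P, Q} ∧
      ∀ I : Ideal (𝓞 K), p ∣ Ideal.absNorm I → P ∣ I ∨ Q ∣ I) := by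
  have hN := norm_span_p hK p
  rcases Set.eq_empty_or_nonempty {I : Ideal (𝓞 K) | Ideal.absNorm I = p} with h | ⟨P, hP⟩
  · left
    refine ⟨h, fun I hI => ?_⟩
    obtain ⟨P, -, hPt, hPI, hPp⟩ := exists_prime_dvd hp I hI
    have h1 : Ideal.absNorm P ∣ p ^ 2 := hN ▸ map_dvd Ideal.absNorm hPp
    have h2 : Ideal.absNorm P = p ^ 2 := by
      obtain ⟨k, hk, hk'⟩ := (Nat.dvd_prime_pow hp).1 h1
      interval_cases k
      · exact absurd (Ideal.absNorm_eq_one_iff.1 (by simpa using hk')) hPt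
      · have : P ∈ ({I : Ideal (𝓞 K) | Ideal.absNorm I = p} : Set _) := by simpa using hk'
        rw [h] at this
        exact absurd this (Set.notMem_empty _)
      · exact hk'
    rw [← ideal_eq_of_dvd hPp (h2.trans hN.symm) (by rw [hN]; exact pow_ne_zero _ hp.ne_zero)]
    exact hPI
  · right
    have hP : Ideal.absNorm P = p := hP
    have hPp : P ∣ Ideal.span {(p : 𝓞 K)} := by
      rw [Ideal.dvd_iff_le, Ideal.span_singleton_le_iff_mem, ← hP]
      exact Ideal.absNorm_mem P
    obtain ⟨Q, hQ⟩ := hPp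
    have hQN : Ideal.absNorm Q = p := by
      rw [hQ, map_mul, hP, pow_two] at hN
      exact Nat.eq_of_mul_eq_mul_left hp.pos hN
    have hpr : ∀ R : Ideal (𝓞 K), Ideal.absNorm R = p → Prime R := fun R hR => 
      (Ideal.irreducible_of_irreducible_absNorm (by rw [hR]; exact hp)).prime
    have key : ∀ I : Ideal (𝓞 K), p ∣ Ideal.absNorm I → P ∣ I ∨ Q ∣ I := by
      intro I hI
      obtain ⟨R, hRp, hRt, hRI, hR⟩ := exists_prime_dvd hp I hI
      rw [hQ] at hR
      rcases hRp.dvd_or_dvd hR with h | h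
      · left; rw [← ideal_eq_of_dvd_prime hp h hP hRt]; exact hRI
      · right; rw [← ideal_eq_of_dvd_prime hp h hQN hRt]; exact hRI
    refine ⟨P, Q, hpr P hP, hpr Q hQN, hP, hQN, hQ.symm, ?_, key⟩
    ext I
    simp only [Set.mem_ofPred_eq, Set.mem_insert_iff, Set.mem_singleton_iff]
    have hnt : ∀ R : Ideal (𝓞 K), Ideal.absNorm R = p → R ≠ ⊤ := fun R hR h => by
      rw [h, Ideal.absNorm_top] at hR; exact hp.one_lt.ne hR
    constructor
    · intro hI
      rcases key I (by rw [hI]) with h | h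
      · left; exact (ideal_eq_of_dvd_prime hp h hI (hnt _ hP)).symm
      · right; exact (ideal_eq_of_dvd_prime hp h hI (hnt _ hQN)).symm
    · rintro (rfl | rfl) <;> assumption

theorem aK_ncard (M : ℕ) : aK K M = {I : Ideal (𝓞 K) | Ideal.absNorm I = M}.ncard := by
  rw [aK, ← Nat.card_coe_set_eq]; rfl

theorem count_dvd {M : ℕ} (hM : M ≠ 0) (P : Ideal (𝓞 K)) {q : ℕ} (hq : Ideal.absNorm P = q) (hq0 : q ≠ 0) :
    {I : Ideal (𝓞 K) | Ideal.absNorm I = M ∧ P ∣ I}.ncard = if q ∣ M then aK K (M / q) else 0 := by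
  have hP0 : P ≠ 0 := by
    rintro rfl; simp at hq; exact hq0 hq.symm
  split_ifs with h
  · obtain ⟨m, rfl⟩ := h
    rw [Nat.mul_div_cancel_left _ (Nat.pos_of_ne_zero hq0), aK_ncard,
      ← Set.ncard_image_of_injective {I : Ideal (𝓞 K) | Ideal.absNorm I = m} (mul_right_injective₀ hP0)]
    congr 1
    ext I
    simp only [Set.mem_ofPred_eq, Set.mem_image]
    constructor
    · rintro ⟨h1, J, rfl⟩
      refine ⟨J, ?_, rfl⟩
      rw [map_mul, hq] at h1
      exact Nat.eq_of_mul_eq_mul_left (Nat.pos_of_ne_zero hq0) h1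
    · rintro ⟨J, h1, rfl⟩
      exact ⟨by rw [map_mul, hq, h1], dvd_mul_right _ _⟩
  · rw [Set.ncard_eq_zero (Set.Finite.subset (Ideal.finite_setOfPred_absNorm_eq M) (fun I hI => hI.1))]
    ext I
    simp only [Set.mem_ofPred_eq, Set.mem_empty_iff_false, iff_false]
    rintro ⟨h1, h2⟩
    exact h (by rw [← h1, ← hq]; exact map_dvd Ideal.absNorm h2)

theorem aK_rec (hK : finrank ℚ K = 2) {p : ℕ} (hp : p.Prime) {M : ℕ} (hM : M ≠ 0) (hpM : p ∣ M) :
    (aK K M : ℤ) = aK K p * aK K (M / p) - (aK K p - 1) * (if p ^ 2 ∣ M then aK K (M / p ^ 2) else 0 : ℕ) := by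
  have hfin : ∀ P : Ideal (𝓞 K), {I : Ideal (𝓞 K) | Ideal.absNorm I = M ∧ P ∣ I}.Finite := fun P =>
    Set.Finite.subset (Ideal.finite_setOfPred_absNorm_eq M) (fun I hI => hI.1)
  have hN := norm_span_p hK p
  have hcp := count_dvd hM _ hN (pow_ne_zero _ hp.ne_zero)
  rcases classify hK hp with ⟨h0, h⟩ | ⟨P, Q, hPp, hQp, hP, hQ, hPQ, hset, h⟩
  · have hr : aK K p = 0 := by rw [aK_ncard, h0]; simp
    rw [hr, ← hcp, aK_ncard]
    have : {I : Ideal (𝓞 K) | Ideal.absNorm I = M} = {I : Ideal (𝓞 K) | Ideal.absNorm I = M ∧ Ideal.span {(p : 𝓞 K)} ∣ I} := by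
      ext I
      simp only [Set.mem_ofPred_eq]
      exact ⟨fun hI => ⟨hI, h I (by rw [hI]; exact hpM)⟩, fun hI => hI.1⟩
    rw [this]; simp
  · have hU : {I : Ideal (𝓞 K) | Ideal.absNorm I = M} = {I : Ideal (𝓞 K) | Ideal.absNorm I = M ∧ P ∣ I} ∪ {I : Ideal (𝓞 K) | Ideal.absNorm I = M ∧ Q ∣ I} := by
      ext I
      simp only [Set.mem_ofPred_eq, Set.mem_union]
      constructor
      · intro hI
        rcases h I (by rw [hI]; exact hpM) with h | h
        · exact Or.inl ⟨hI, h⟩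
        · exact Or.inr ⟨hI, h⟩
      · rintro (h | h) <;> exact h.1
    have cP := count_dvd hM P hP hp.ne_zero
    have cQ := count_dvd hM Q hQ hp.ne_zero
    rw [if_pos hpM] at cP cQ
    by_cases hne : P = Q
    · subst hne
      have hr : aK K p = 1 := by rw [aK_ncard, hset]; simp
      rw [hr, aK_ncard, hU, Set.union_self, cP]; simp
    · have hr : aK K p = 2 := by rw [aK_ncard, hset, Set.ncard_pair hne]
      have hI : {I : Ideal (𝓞 K) | Ideal.absNorm I = M ∧ P ∣ I} ∩ {I : Ideal (𝓞 K) | Ideal.absNorm I = M ∧ Q ∣ I} = {I : Ideal (𝓞 K) | Ideal.absNorm I = M ∧ Ideal.span {(p : 𝓞 K)} ∣ I} := by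
        ext I
        simp only [Set.mem_ofPred_eq, Set.mem_inter_iff]
        rw [← hPQ]
        constructor
        · rintro ⟨⟨h1, J, rfl⟩, -, h2⟩
          refine ⟨h1, mul_dvd_mul_left _ ?_⟩
          rcases hQp.dvd_or_dvd h2 with h3 | h3
          · exact absurd (ideal_eq_of_dvd h3 (hQ.trans hP.symm) (by rw [hP]; exact hp.ne_zero)).symm hne
          · exact h3
        · rintro ⟨h1, h2⟩
          exact ⟨⟨h1, dvd_of_mul_right_dvd h2⟩, h1, dvd_of_mul_left_dvd h2⟩
      have := Set.ncard_union_add_ncard_inter _ _ (hfin P) (hfin Q)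
      rw [← hU, hI, hcp, cP, cQ, ← aK_ncard] at this
      rw [hr]
      generalize (if p ^ 2 ∣ M then aK K (M / p ^ 2) else 0) = X at this ⊢
      push_cast
      omega

theorem aK_p_le (hK : finrank ℚ K = 2) {p : ℕ} (hp : p.Prime) : aK K p ≤ 2 := by
  rcases classify hK hp with ⟨h0, h⟩ | ⟨P, Q, hPp, hQp, hP, hQ, hPQ, hset, h⟩
  · rw [aK_ncard, h0]; simp
  · rw [aK_ncard, hset]; exact (Set.ncard_insert_le _ _).trans (by simp)

theorem aK_one : aK K 1 = 1 := by
  rw [aK_ncard]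
  have : {I : Ideal (𝓞 K) | Ideal.absNorm I = 1} = {⊤} := by
    ext I; simp [Ideal.absNorm_eq_one_iff]
  rw [this]; simp
end
end

section
open NumberField Module Filter Topology
open scoped NumberTheorySymbols

section
/-- completely multiplicative function with prescribed values at primes -/
noncomputable def cml (g : ℕ → ℝ) (n : ℕ) : ℝ := if n = 0 then 0 else (n.primeFactorsList.map g).prod

theorem cml_zero (g : ℕ → ℝ) : cml g 0 = 0 := by simp [cml]
theorem cml_one (g : ℕ → ℝ) : cml g 1 = 1 := by simp [cml]
theorem cml_prime (g : ℕ → ℝ) {p : ℕ} (hp : p.Prime) : cml g p = g p := by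
  simp [cml, hp.ne_zero, Nat.primeFactorsList_prime hp]
theorem cml_mul (g : ℕ → ℝ) (m n : ℕ) : cml g (m * n) = cml g m * cml g n := by
  unfold cml
  by_cases hm : m = 0
  · simp [hm]
  by_cases hn : n = 0
  · simp [hn]
  rw [if_neg hm, if_neg hn, if_neg (mul_ne_zero hm hn), ((Nat.perm_primeFactorsList_mul hm hn).map g).prod_eq,
    List.map_append, List.prod_append]
theorem cml_pow (g : ℕ → ℝ) (m k : ℕ) : cml g (m ^ k) = cml g m ^ k := by
  induction k with
  | zero => simp [cml_one]
  | succ k ih => rw [pow_succ, cml_mul, ih, pow_succ]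
theorem cml_abs (g : ℕ → ℝ) (hg : ∀ p, p.Prime → |g p| ≤ 1) (n : ℕ) : |cml g n| ≤ 1 := by
  induction n using Nat.recOnMul with
  | zero => simp [cml_zero]
  | one => simp [cml_one]
  | prime p hp => rw [cml_prime g hp]; exact hg p hp
  | mul a b ha hb => rw [cml_mul, abs_mul]; exact mul_le_one₀ ha (abs_nonneg _) hb

theorem cml_AF (g : ℕ → ℝ) (n : ℕ) : AF (cml g) n = cml g n := by
  simp only [AF, toArithmeticFunction, ArithmeticFunction.coe_mk]
  split_ifs with hn
  · simp [hn, cml_zero]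
  · rfl

theorem cml_AF_mult (g : ℕ → ℝ) : (AF (cml g)).IsMultiplicative := by
  refine ⟨by simp [cml_AF, cml_one], fun {m n} _ => ?_⟩
  simp [cml_AF, cml_mul]

theorem cml_A2_mult (g : ℕ → ℝ) : (A2 (cml g)).IsMultiplicative :=
  ArithmeticFunction.isMultiplicative_zeta.natCast.mul (cml_AF_mult g)

theorem cml_A2_pow (g : ℕ → ℝ) {p : ℕ} (hp : p.Prime) (k : ℕ) :
    A2 (cml g) (p ^ k) = ∑ j ∈ Finset.range (k + 1), ((g p : ℝ) : ℂ) ^ j := by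
  rw [A2, ArithmeticFunction.coe_zeta_mul_apply, Nat.sum_divisors_prime_pow hp]
  refine Finset.sum_congr rfl fun j _ => ?_
  rw [cml_AF, cml_pow, cml_prime g hp]; push_cast; rfl

theorem cml_A2_rec (g : ℕ → ℝ) {p : ℕ} (hp : p.Prime) {M : ℕ} (hM : M ≠ 0) (hpM : p ∣ M) :
    A2 (cml g) M = (1 + g p) * A2 (cml g) (M / p) - g p * (if p ^ 2 ∣ M then A2 (cml g) (M / p ^ 2) else 0) := by
  obtain ⟨k, m, hm, rfl⟩ := Nat.exists_eq_pow_mul_and_not_dvd hM p hp.one_lt.ne'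
  have hc : ∀ j, A2 (cml g) (p ^ j * m) = A2 (cml g) (p ^ j) * A2 (cml g) m := fun j =>
    (cml_A2_mult g).map_mul_of_coprime (Nat.Coprime.pow_left _ ((Nat.Prime.coprime_iff_not_dvd hp).2 hm))
  have hm0 : m ≠ 0 := by rintro rfl; simp at hM
  match k with
  | 0 => simp at hpM; exact absurd hpM hm
  | 1 =>
    have h2 : ¬ p ^ 2 ∣ p ^ 1 * m := by
      rw [pow_two, pow_one]
      intro h
      exact hm (Nat.dvd_of_mul_dvd_mul_left hp.pos h)
    rw [if_neg h2, hc, cml_A2_pow g hp, pow_one, Nat.mul_div_cancel_left _ hp.pos]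
    simp [Finset.sum_range_succ]
  | k + 2 =>
    have e1 : p ^ (k + 2) * m / p = p ^ (k + 1) * m := by
      rw [show p ^ (k + 2) * m = p * (p ^ (k + 1) * m) by ring, Nat.mul_div_cancel_left _ hp.pos]
    have e2 : p ^ (k + 2) * m / p ^ 2 = p ^ k * m := by
      rw [show p ^ (k + 2) * m = p ^ 2 * (p ^ k * m) by ring, Nat.mul_div_cancel_left _ (pow_pos hp.pos 2)]
    rw [if_pos ⟨p ^ k * m, by ring⟩, e1, e2, hc, hc, hc, cml_A2_pow g hp, cml_A2_pow g hp, cml_A2_pow g hp,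
      Finset.sum_range_succ _ (k + 2), Finset.sum_range_succ _ (k + 1)]
    ring

variable {K : Type*} [Field K] [NumberField K]

/-- the quadratic character of `K` -/
noncomputable def XK (K : Type*) [Field K] [NumberField K] : ℕ → ℝ := cml (fun p => (aK K p : ℝ) - 1)

theorem aK_eq (hK : finrank ℚ K = 2) (M : ℕ) (hM : M ≠ 0) : (aK K M : ℂ) = A2 (XK K) M := by
  induction M using Nat.strong_induction_on with
  | _ M ih =>
    by_cases h1 : M = 1
    · subst h1
      rw [aK_one, XK, (cml_A2_mult _).map_one]; simp
    obtain ⟨p, hp, hpM⟩ := Nat.exists_prime_and_dvd h1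
    rw [XK, cml_A2_rec _ hp hM hpM]
    have hpp := hp.one_lt
    have h1 := ih (M / p) (Nat.div_lt_self (Nat.pos_of_ne_zero hM) hpp)
      (Nat.div_pos (Nat.le_of_dvd (Nat.pos_of_ne_zero hM) hpM) hp.pos).ne'
    have h2 : (if p ^ 2 ∣ M then A2 (XK K) (M / p ^ 2) else 0) = ((if p ^ 2 ∣ M then aK K (M / p ^ 2) else 0 : ℕ) : ℂ) := by
      split_ifs with h
      · rw [ih (M / p ^ 2) (Nat.div_lt_self (Nat.pos_of_ne_zero hM) (Nat.one_lt_pow two_ne_zero hpp))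
          (Nat.div_pos (Nat.le_of_dvd (Nat.pos_of_ne_zero hM) h) (pow_pos hp.pos 2)).ne']
      · simp
    rw [← XK, h2, ← h1]
    have := aK_rec hK hp hM hpM
    have := congrArg (fun z : ℤ => (z : ℂ)) this
    push_cast at this ⊢
    rw [this]; ring

theorem XK_abs (hK : finrank ℚ K = 2) (n : ℕ) : |XK K n| ≤ 1 := by
  refine cml_abs _ (fun p hp => ?_) n
  have := aK_p_le hK hp
  have h2 : (aK K p : ℝ) ≤ 2 := by exact_mod_cast this
  have h0 : (0 : ℝ) ≤ aK K p := Nat.cast_nonneg _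
  rw [abs_le]; constructor <;> linarith

theorem XK_odd (hK : finrank ℚ K = 2) (n : ℕ) (hn : n % 2 = 1) : XK K n = cD (discr K) n := by
  obtain ⟨ω, t, m, h⟩ := exists_QB hK
  induction n using Nat.recOnMul with
  | zero => simp at hn
  | one => simp [XK, cml_one, cD]
  | prime p hp =>
    rw [XK, cml_prime _ hp, cD, if_pos hn]
    have := h.r_odd hp (by rintro rfl; simp at hn)
    have : (aK K p : ℝ) = 1 + J(discr K | p) := by exact_mod_cast this
    rw [this]; ring
  | mul a b ha hb =>
    have h1 := Nat.odd_mul.1 (Nat.odd_iff.2 hn)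
    rw [XK, cml_mul, cD_mul, ← XK, ha (Nat.odd_iff.1 h1.1), hb (Nat.odd_iff.1 h1.2)]

theorem XK_summable (hK : finrank ℚ K = 2) {s : ℂ} (hs : 1 < s.re) :
    LSeriesSummable (fun n => (XK K n : ℂ)) s :=
  LSeriesSummable_of_bounded_of_one_lt_re (m := 1) (fun n _ => by
    rw [Complex.norm_real]; exact XK_abs hK n) hs

theorem zetaK_eq (hK : finrank ℚ K = 2) {s : ℂ} (hs : 1 < s.re) :
    dedekindZeta K s = riemannZeta s * LSeries (fun n => (XK K n : ℂ)) s := by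
  have h1 : LSeriesHasSum (A2 (XK K)) s (riemannZeta s * LSeries (fun n => (XK K n : ℂ)) s) := by
    refine ArithmeticFunction.LSeriesHasSum_mul (zeta_hasSum hs) ?_
    have : ⇑(AF (XK K)) = fun n => (XK K n : ℂ) := funext (cml_AF _)
    rw [this]
    exact (XK_summable hK hs).LSeriesHasSum
  rw [dedekindZeta, ← h1.LSeries_eq]
  refine LSeries_congr (fun {n} hn => ?_) s
  exact aK_eq hK n hn

theorem euler_two (hK : finrank ℚ K = 2) {s : ℂ} (hs : 1 < s.re) :
    LSeries (fun n => (XK K n : ℂ)) s * (1 - XK K 2 * (2 : ℂ) ^ (-s)) = LSeries (fun n => (cD (discr K) n : ℂ)) s := by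
  obtain ⟨ω, t, m, h⟩ := exists_QB hK
  have hX := XK_summable hK hs
  have hC := (cD_RC h.not_sq le_rfl).LS_summable hs
  rw [LSeriesSummable] at hX hC
  have i0 : Function.Injective (fun k : ℕ => 2 * k) := fun a b h => by simpa using h
  have i1 : Function.Injective (fun k : ℕ => 2 * k + 1) := fun a b h => by simpa using h
  have eX := tsum_even_add_odd (hX.comp_injective i0) (hX.comp_injective i1)
  have eC := tsum_even_add_odd (hC.comp_injective i0) (hC.comp_injective i1)
  have o : ∀ k : ℕ, LSeries.term (fun n => (XK K n : ℂ)) s (2 * k + 1) = LSeries.term (fun n => (cD (discr K) n : ℂ)) s (2 * k + 1) := by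
    intro k
    rw [LSeries.term_of_ne_zero (by omega), LSeries.term_of_ne_zero (by omega), XK_odd hK _ (by omega)]
  have c0 : ∀ k : ℕ, LSeries.term (fun n => (cD (discr K) n : ℂ)) s (2 * k) = 0 := by
    intro k
    rcases Nat.eq_zero_or_pos k with rfl | hk
    · simp
    rw [LSeries.term_of_ne_zero (by omega)]
    simp [cD]
  have x0 : ∀ k : ℕ, LSeries.term (fun n => (XK K n : ℂ)) s (2 * k) = (XK K 2 * (2 : ℂ) ^ (-s)) * LSeries.term (fun n => (XK K n : ℂ)) s k := by
    intro k
    rcases Nat.eq_zero_or_pos k with rfl | hk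
    · simp
    rw [LSeries.term_of_ne_zero (by omega), LSeries.term_of_ne_zero (by omega), XK, cml_mul, Nat.cast_mul,
      Complex.natCast_mul_natCast_cpow, Complex.cpow_neg]
    push_cast
    field_simp
  simp only [o, x0, c0, tsum_zero, zero_add, tsum_mul_left] at eX eC
  rw [LSeries, LSeries, ← eC]
  linear_combination (-1 : ℂ) * eX

theorem residue_eq (hK : finrank ℚ K = 2) :
    (LL (cD (discr K)) 1).re = dedekindZeta_residue K * (1 - XK K 2 / 2) := by
  obtain ⟨ω, t, m, h⟩ := exists_QB hK
  have hRC := cD_RC h.not_sq le_rfl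
  have hT : Tendsto (fun s : ℝ => (s : ℂ)) (𝓝[>] 1) (𝓝 1) := by
    have := (Complex.continuous_ofReal.tendsto (1 : ℝ)).mono_left (nhdsWithin_le_nhds (s := Set.Ioi 1))
    simpa using this
  have hL : Tendsto (fun s : ℝ => LL (cD (discr K)) (s : ℂ)) (𝓝[>] 1) (𝓝 (LL (cD (discr K)) 1)) := by
    have hc : ContinuousAt (LL (cD (discr K))) 1 := 
      (hRC.LL_diff.differentiableAt ((isOpen_lt continuous_const Complex.continuous_re).mem_nhds (by simp))).continuousAt
    exact hc.tendsto.comp hT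
  have hZ : Tendsto (fun s : ℝ => ((s : ℂ) - 1) * riemannZeta s) (𝓝[>] 1) (𝓝 1) := by
    refine riemannZeta_residue_one.comp ?_
    refine tendsto_nhdsWithin_of_tendsto_nhds_of_eventually_within _ hT ?_
    filter_upwards [self_mem_nhdsWithin] with s hs
    have : (1 : ℝ) < s := hs
    simp only [Set.mem_compl_iff, Set.mem_singleton_iff]
    exact_mod_cast this.ne'
  have hF : Tendsto (fun s : ℝ => (1 - XK K 2 * (2 : ℂ) ^ (-(s : ℂ)))) (𝓝[>] 1) (𝓝 (1 - XK K 2 * (2 : ℂ) ^ (-1 : ℂ))) := by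
    have : Continuous fun z : ℂ => (1 - XK K 2 * (2 : ℂ) ^ (-z)) := by
      have := NeZero.ne (2 : ℂ)
      fun_prop (disch := simp)
    exact (this.tendsto 1).comp hT
  have h1 := (tendsto_sub_one_mul_dedekindZeta_nhdsGT K).mul hF
  have h2 := hZ.mul hL
  have e : (fun s : ℝ => ((s : ℂ) - 1) * dedekindZeta K s * (1 - XK K 2 * (2 : ℂ) ^ (-(s : ℂ)))) =ᶠ[𝓝[>] 1]
      fun s : ℝ => (((s : ℂ) - 1) * riemannZeta s) * LL (cD (discr K)) (s : ℂ) := by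
    filter_upwards [self_mem_nhdsWithin] with s hs
    have hs' : 1 < (s : ℂ).re := by simpa using hs
    rw [hRC.LL_eq hs', ← euler_two hK hs', zetaK_eq hK hs']; ring
  have h3 := tendsto_nhds_unique (h1.congr' e) h2
  rw [one_mul] at h3
  rw [← h3, Complex.cpow_neg_one, show ((dedekindZeta_residue K : ℝ) : ℂ) * (1 - (XK K 2 : ℂ) * 2⁻¹) = ((dedekindZeta_residue K * (1 - XK K 2 / 2) : ℝ) : ℂ) by push_cast; ring, Complex.ofReal_re]
end
end

open NumberField Module

theorem discr_eq_of_mul_sq {K₁ K₂ : Type} [Field K₁] [NumberField K₁] [Field K₂] [NumberField K₂]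
    (h₁ : finrank ℚ K₁ = 2) (h₂ : finrank ℚ K₂ = 2) (hs : IsSquare (discr K₁ * discr K₂)) :
    discr K₁ = discr K₂ := by
  obtain ⟨s, hs⟩ := hs
  obtain ⟨w1, t1, n1, q1⟩ := exists_QB h₁
  obtain ⟨w2, t2, n2, q2⟩ := exists_QB h₂
  have e1 : K₁ →+* ℂ := Classical.choice inferInstance
  have e2 : K₂ →+* ℂ := Classical.choice inferInstance
  let σ₁ : K₁ →ₐ[ℚ] ℂ := e1.toRatAlgHom
  let σ₂ : K₂ →ₐ[ℚ] ℂ := e2.toRatAlgHom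
  have d1 : ((discr K₁ : ℤ) : ℂ) ≠ 0 := Int.cast_ne_zero.mpr (discr_ne_zero K₁)
  have a1 : (2 * σ₁ (w1 : K₁) - t1) ^ 2 = ((discr K₁ : ℤ) : ℂ) := by
    have := congrArg (fun z : 𝓞 K₁ => σ₁ (z : K₁)) q1.sq
    simp at this
    rw [q1.disc]; push_cast; linear_combination 4 * this
  have a2 : (2 * σ₂ (w2 : K₂) - t2) ^ 2 = ((discr K₂ : ℤ) : ℂ) := by
    have := congrArg (fun z : 𝓞 K₂ => σ₂ (z : K₂)) q2.sq
    simp at this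
    rw [q2.disc]; push_cast; linear_combination 4 * this
  have hsC : ((discr K₁ : ℤ) : ℂ) * ((discr K₂ : ℤ) : ℂ) = s * s := by exact_mod_cast hs
  have m1 : σ₁ (w1 : K₁) ∈ σ₁.fieldRange := ⟨_, rfl⟩
  have mZ : ∀ k : ℤ, (k : ℂ) ∈ σ₁.fieldRange := fun k => ⟨(k : K₁), by simp⟩
  have m2 : (2 : ℂ) ∈ σ₁.fieldRange := by exact_mod_cast mZ 2
  set e := (s : ℂ) * (2 * σ₁ (w1 : K₁) - t1) / ((discr K₁ : ℤ) : ℂ) with he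
  have me : e ∈ σ₁.fieldRange :=
    div_mem (mul_mem (mZ _) (sub_mem (mul_mem m2 m1) (mZ _))) (mZ _)
  have hee : (2 * σ₂ (w2 : K₂) - t2) ^ 2 = e ^ 2 := by
    rw [a2, he, div_pow, mul_pow, a1]
    field_simp
    linear_combination hsC
  have mw : σ₂ (w2 : K₂) ∈ σ₁.fieldRange := by
    rcases sq_eq_sq_iff_eq_or_eq_neg.1 hee with h | h
    · have : σ₂ (w2 : K₂) = (e + t2) / 2 := by rw [← h]; ring
      rw [this]; exact div_mem (add_mem me (mZ _)) m2
    · have : σ₂ (w2 : K₂) = (-e + t2) / 2 := by rw [← h]; ring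
      rw [this]; exact div_mem (add_mem (neg_mem me) (mZ _)) m2
  have mO : ∀ z : 𝓞 K₂, σ₂ (z : K₂) ∈ σ₁.fieldRange := fun z => by
    obtain ⟨x, y, rfl⟩ := q2.span z
    have : σ₂ (((x : 𝓞 K₂) + y * w2 : 𝓞 K₂) : K₂) = x + y * σ₂ (w2 : K₂) := by simp
    rw [this]
    exact add_mem (mZ _) (mul_mem (mZ _) mw)
  have hle : σ₂.fieldRange ≤ σ₁.fieldRange := by
    rintro _ ⟨z, rfl⟩
    obtain ⟨a, b, -, rfl⟩ := IsFractionRing.div_surjective (A := 𝓞 K₂) z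
    change σ₂ _ ∈ _
    rw [map_div₀]
    exact div_mem (mO a) (mO b)
  let f1 : K₁ ≃ₐ[ℚ] σ₁.fieldRange := AlgEquiv.ofInjectiveField σ₁
  let f2 : K₂ ≃ₐ[ℚ] σ₂.fieldRange := AlgEquiv.ofInjectiveField σ₂
  have r1 : finrank ℚ σ₁.fieldRange = 2 := by rw [← h₁]; exact f1.toLinearEquiv.finrank_eq.symm
  have r2 : finrank ℚ σ₂.fieldRange = 2 := by rw [← h₂]; exact f2.toLinearEquiv.finrank_eq.symm
  have : FiniteDimensional ℚ σ₁.fieldRange := FiniteDimensional.of_finrank_pos (by omega)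
  have heq : σ₂.fieldRange = σ₁.fieldRange :=
    IntermediateField.eq_of_le_of_finrank_eq hle (by rw [r1, r2])
  exact discr_eq_discr_of_algEquiv _
    ((f1.trans (IntermediateField.equivOfEq heq.symm)).trans f2.symm)

/-- the family of data attached to imaginary quadratic fields -/
def SK : Set ((ℕ → ℝ) × ℕ) := {q | ∃ (K : Type) (_ : Field K) (_ : NumberField K),
  finrank ℚ K = 2 ∧ IsEmpty (K →+* ℝ) ∧ q = (cD (discr K), 4 * (discr K).natAbs)}

theorem residue_bounds {K : Type} [Field K] [NumberField K] (hK : finrank ℚ K = 2) :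
    dedekindZeta_residue K ≤ 2 * (LL (cD (discr K)) 1).re ∧
    (LL (cD (discr K)) 1).re ≤ 2 * dedekindZeta_residue K := by
  have h0 := dedekindZeta_residue_pos K
  have h1 := residue_eq hK
  have h2 := abs_le.1 (XK_abs hK 2)
  constructor <;> nlinarith

theorem residue_lower (ε : ℝ) (hε : 0 < ε) : ∃ C : ℝ, 0 < C ∧ ∃ N0 : ℕ,
    ∀ (K : Type) [Field K] [NumberField K], finrank ℚ K = 2 → IsEmpty (K →+* ℝ) →
      N0 < 4 * (discr K).natAbs →
      C * ((4 * (discr K).natAbs : ℕ) : ℝ) ^ (-ε) ≤ (LL (cD (discr K)) 1).re := by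
  suffices hh : (∀ q ∈ SK, RC q.1 q.2) ∧ (∀ q ∈ SK, 0 < (LL q.1 1).re) ∧
      (∀ q ∈ SK, ∀ r ∈ SK, q.2 < r.2 → RC (fun n => q.1 n * r.1 n) (q.2 * r.2)) by
    obtain ⟨C, hC, N0, h⟩ := siegel SK hh.1 hh.2.1 hh.2.2 ε hε
    exact ⟨C, hC, N0, fun K _ _ hK hE hN => h (cD (discr K), 4 * (discr K).natAbs)
      ⟨K, _, _, hK, hE, rfl⟩ hN⟩
  refine ⟨?_, ?_, ?_⟩
  · rintro _ ⟨K, _, _, hK, hE, rfl⟩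
    obtain ⟨ω, t, m, h⟩ := exists_QB hK
    exact cD_RC h.not_sq le_rfl
  · rintro _ ⟨K, _, _, hK, hE, rfl⟩
    have := (residue_bounds hK).1
    have := dedekindZeta_residue_pos K
    dsimp only
    linarith
  · rintro _ ⟨K, _, _, hK, hE, rfl⟩ _ ⟨K', _, _, hK', hE', rfl⟩ hlt
    dsimp only at hlt ⊢
    have hn : ¬ IsSquare (discr K * discr K') := fun hs => by
      have := discr_eq_of_mul_sq hK hK' hs
      rw [this] at hlt
      exact lt_irrefl _ hlt
    have := cD_RC hn (N := 4 * (discr K).natAbs * (4 * (discr K').natAbs))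
      (by rw [Int.natAbs_mul]; nlinarith [Nat.zero_le ((discr K).natAbs * (discr K').natAbs)])
    convert this using 2
    exact (cD_prod _ _ _).symm

theorem class_bounds (ε : ℝ) (hε : 0 < ε) : ∃ A : ℝ, ∃ N0 : ℝ, 
    ∀ (K : Type) [Field K] [NumberField K], finrank ℚ K = 2 → IsEmpty (K →+* ℝ) →
      N0 < |(discr K : ℝ)| →
      |Real.log (classNumber K) - Real.log |(discr K : ℝ)| / 2| ≤
        ε * Real.log |(discr K : ℝ)| + A := by
  obtain ⟨c, hc, N0, hlow⟩ := residue_lower ε hε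
  obtain ⟨T, hT, hup⟩ := LL_one_le ε hε
  refine ⟨ε * Real.log 4 + |Real.log c| + |Real.log T| + |Real.log 2| + |Real.log 2| + |Real.log (2 * Real.pi)|,
    max N0 4, fun K _ _ hK hE hN => ?_⟩
  obtain ⟨ω, t, m, hq⟩ := exists_QB hK
  have hneg := discr_neg hK hE
  set D := |(discr K : ℝ)| with hD
  have hDn : D = ((discr K).natAbs : ℝ) := by rw [Nat.cast_natAbs, Int.cast_abs]
  have hD4 : 4 < D := (le_max_right _ _).trans_lt hN
  have hDN : (N0 : ℝ) < D := (le_max_left _ _).trans_lt hN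
  have hd4 : discr K < -4 := by
    rw [hDn] at hD4
    have : 4 < (discr K).natAbs := by exact_mod_cast hD4
    omega
  have hw2 := torsionOrder_le hq hd4
  have hw1 : 1 ≤ Units.torsionOrder K := Units.torsionOrder_pos K
  set w := (Units.torsionOrder K : ℝ) with hw
  have hw2' : w ≤ 2 := by rw [hw]; exact_mod_cast hw2
  have hw1' : 1 ≤ w := by rw [hw]; exact_mod_cast hw1
  have hcl := class_formula hK hE
  rw [← hD, ← hw] at hcl
  obtain ⟨b1, b2⟩ := residue_bounds hK
  have hR := dedekindZeta_residue_pos K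
  set R := dedekindZeta_residue K
  set L := (LL (cD (discr K)) 1).re
  have hL : 0 < L := by linarith
  have l1 := hlow K hK hE (by
    have : N0 < (discr K).natAbs := by rw [hDn] at hDN; exact_mod_cast hDN
    omega)
  have l2 := (le_abs_self _).trans (hup _ _ (cD_RC hq.not_sq le_rfl))
  have hc4 : ((4 * (discr K).natAbs : ℕ) : ℝ) = 4 * D := by rw [hDn]; push_cast; ring
  rw [hc4] at l1 l2
  have hD0 : 0 < D := by linarith
  have l1' := Real.log_le_log (by positivity) l1
  have l2' := Real.log_le_log hL l2
  rw [Real.log_mul (by positivity) (by positivity), Real.log_rpow (by positivity),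
    Real.log_mul (by norm_num) (by positivity)] at l1' l2'
  have r1 := Real.log_le_log hR b1
  have r2 := Real.log_le_log hL b2
  rw [Real.log_mul (by norm_num) (by positivity)] at r1 r2
  have w1 : 0 ≤ Real.log w := Real.log_nonneg hw1'
  have w2 : Real.log w ≤ Real.log 2 := Real.log_le_log (by linarith) hw2'
  rw [hcl, Real.log_div (by positivity) (by positivity), Real.log_mul (by positivity) (by positivity),
    Real.log_mul (by positivity) (by positivity), Real.log_sqrt hD0.le]
  have p1 := abs_nonneg (Real.log c)
  have p2 := neg_abs_le (Real.log c)
  have p3 := le_abs_self (Real.log T)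
  have p4 := abs_nonneg (Real.log T)
  have p5 := le_abs_self (Real.log 2)
  have p6 := neg_abs_le (Real.log (2 * Real.pi))
  have p7 := le_abs_self (Real.log (2 * Real.pi))
  have p8 := abs_nonneg (Real.log 2)
  rw [abs_le]
  constructor <;> linarith

theorem brauer_siegel_imaginary_quadratic :
    ∀ ε : ℝ, 0 < ε → ∃ C : ℝ, 0 < C ∧
      ∀ (K : Type) [Field K] [NumberField K],
        finrank ℚ K = 2 → IsEmpty (K →+* ℝ) →
        C ≤ |(discr K : ℝ)| →
        |Real.log (classNumber K) / Real.log (Real.sqrt |(discr K : ℝ)|) - 1| < ε := by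
  intro ε hε
  obtain ⟨A, N0, h⟩ := class_bounds (ε / 4) (by positivity)
  refine ⟨max (|N0| + 2) (Real.exp (4 * |A| / ε + 1)), by positivity, fun K _ _ hK hE hC => ?_⟩
  have hN : N0 < |(discr K : ℝ)| := by
    have := (le_max_left _ _).trans hC
    have := le_abs_self N0
    linarith
  have hb := h K hK hE hN
  set D := |(discr K : ℝ)| with hD
  have hD0 : 0 < D := by
    have := (le_max_left _ _).trans hC
    have := abs_nonneg N0
    linarith
  have hl : 4 * |A| / ε + 1 ≤ Real.log D := by
    rw [Real.le_log_iff_exp_le hD0]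
    exact (le_max_right _ _).trans hC
  have hl0 : 0 < Real.log D := lt_of_lt_of_le (by positivity) hl
  have hl2 : 4 * |A| < ε * Real.log D := by
    have : 4 * |A| / ε < Real.log D := by linarith
    rw [div_lt_iff₀ hε] at this
    linarith
  rw [Real.log_sqrt hD0.le]
  have : Real.log (classNumber K) / (Real.log D / 2) - 1 =
      (Real.log (classNumber K) - Real.log D / 2) / (Real.log D / 2) := by
    field_simp
  rw [this, abs_div, abs_of_pos (by positivity : 0 < Real.log D / 2), div_lt_iff₀ (by positivity)]
  have := le_abs_self A
  linarith
end

section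
/- There exists a constant C > 0 such that for every imaginary quadratic number field K, the class number satisfies h_K ≤ C · √|d_K| · log|d_K|. (The paper states this with the constant 1/π; here a universal constant is asserted.) -/
open NumberField Module

section aux

variable {K : Type} [Field K] [NumberField K]

/-- The residue characteristic of a prime ideal. -/
noncomputable def resChar (P : Ideal (𝓞 K)) : ℕ := (Ideal.absNorm P).minFac

lemma resChar_spec (P : Ideal (𝓞 K)) (hP : Prime P) :
    (resChar P).Prime ∧ ((resChar P : ℕ) : 𝓞 K) ∈ P ∧
      ∃ k, 1 ≤ k ∧ Ideal.absNorm P = resChar P ^ k := by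
  have hP0 : P ≠ ⊥ := hP.ne_zero
  have hpr : P.IsPrime := Ideal.isPrime_of_prime hP
  have hmax : P.IsMaximal := hpr.isMaximal hP0
  have hne0 : Ideal.absNorm P ≠ 0 := by
    rwa [Ne, Ideal.absNorm_eq_zero_iff]
  have hne1 : Ideal.absNorm P ≠ 1 := by
    rw [Ne, Ideal.absNorm_eq_one_iff]; exact hpr.ne_top
  have : Finite (𝓞 K ⧸ P) := (Ideal.absNorm_ne_zero_iff P).1 hne0
  obtain ⟨p, hp, k, hk, h⟩ : ∃ p : ℕ, p.Prime ∧ ∃ k, 1 ≤ k ∧ Ideal.absNorm P = p ^ k := by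
    obtain ⟨p, n, hn, -, hp, h⟩ := Ideal.exists_prime_and_absNorm_eq_pow P
    exact ⟨p, hp, n, hn, h⟩
  have hr : resChar P = p := by
    rw [resChar, h, Nat.Prime.pow_minFac hp (by omega)]
  rw [hr]
  refine ⟨hp, ?_, k, hk, h⟩
  have := Ideal.absNorm_mem P
  rw [h, Nat.cast_pow] at this
  exact hpr.mem_of_pow_mem _ this

lemma primes_two (hK : finrank ℚ K = 2) (P Q R : Ideal (𝓞 K)) (hP : Prime P) (hQ : Prime Q)
    (hR : Prime R) (h1 : resChar P = resChar R) (h2 : resChar Q = resChar R)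
    (hPR : P ≠ R) (hQR : Q ≠ R) : P = Q := by
  by_contra hPQ
  obtain ⟨hp, mP, a, ha, hNP⟩ := resChar_spec P hP
  obtain ⟨-, mQ, b, hb, hNQ⟩ := resChar_spec Q hQ
  obtain ⟨-, mR, c, hc, hNR⟩ := resChar_spec R hR
  rw [h1] at hp mP hNP
  rw [h2] at mQ hNQ
  have mx (I : Ideal (𝓞 K)) (hI : Prime I) : I.IsMaximal :=
    (Ideal.isPrime_of_prime hI).isMaximal hI.ne_zero
  have co (I J : Ideal (𝓞 K)) (hI : Prime I) (hJ : Prime J) (h : I ≠ J) : IsCoprime I J := by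
    rw [Ideal.isCoprime_iff_sup_eq]
    exact (mx I hI).coprime_of_ne (mx J hJ) h
  set p := resChar R
  have d (I : Ideal (𝓞 K)) (h : (p : 𝓞 K) ∈ I) : I ∣ Ideal.span {(p : 𝓞 K)} := by
    rw [Ideal.dvd_iff_le, Ideal.span_singleton_le_iff_mem]; exact h
  have hd : P * Q * R ∣ Ideal.span {(p : 𝓞 K)} :=
    ((co P R hP hR hPR).mul_left (co Q R hQ hR hQR)).mul_dvd
      ((co P Q hP hQ hPQ).mul_dvd (d P mP) (d Q mQ)) (d R mR)
  have hd2 := map_dvd Ideal.absNorm hd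
  rw [map_mul, map_mul, hNP, hNQ, hNR, Ideal.absNorm_span_natCast,
    NumberField.RingOfIntegers.rank, hK, ← pow_add, ← pow_add,
    Nat.pow_dvd_pow_iff_le_right hp.one_lt] at hd2
  omega

/-- Norm of a multiset of ideals. -/
noncomputable def msNorm (M : Multiset (Ideal (𝓞 K))) : ℕ := (M.map Ideal.absNorm).prod

lemma msNorm_inj (s : Ideal (𝓞 K) → Prop)
    (hs : ∀ P Q, Prime P → Prime Q → s P → s Q → resChar P = resChar Q → P = Q)
    (M : Multiset (Ideal (𝓞 K))) : ∀ M' : Multiset (Ideal (𝓞 K)),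
    (∀ P ∈ M, Prime P ∧ s P) → (∀ P ∈ M', Prime P ∧ s P) → msNorm M = msNorm M' → M = M' := by
  classical
  induction M using Multiset.induction_on with
  | empty =>
    intro M' _ h' h
    by_contra hne
    obtain ⟨P, hP⟩ := Multiset.exists_mem_of_ne_zero (Ne.symm hne)
    obtain ⟨hp, -, k, hk, hN⟩ := resChar_spec P (h' P hP).1
    have hd : Ideal.absNorm P ∣ msNorm M' :=
      Multiset.dvd_prod (Multiset.mem_map_of_mem _ hP)
    rw [← h] at hd
    have h1 : Ideal.absNorm P = 1 := by simpa [msNorm] using hd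
    rw [h1] at hN
    have := Nat.one_lt_pow (by omega : k ≠ 0) hp.one_lt
    omega
  | cons P M ih =>
    intro M' hM h' h
    have hPP := hM P (Multiset.mem_cons_self P M)
    obtain ⟨hp, -, k, hk, hN⟩ := resChar_spec P hPP.1
    have hmem : P ∈ M' := by
      have hd : resChar P ∣ msNorm M' := by
        rw [← h, msNorm, Multiset.map_cons, Multiset.prod_cons, hN]
        exact Dvd.dvd.mul_right (dvd_pow_self _ (by omega)) _
      obtain ⟨x, hx, hdx⟩ := hp.prime.exists_mem_multiset_dvd hd
      obtain ⟨Q, hQ, rfl⟩ := Multiset.mem_map.1 hx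
      obtain ⟨hq, -, l, hl, hNQ⟩ := resChar_spec Q (h' Q hQ).1
      rw [hNQ] at hdx
      have := (Nat.prime_dvd_prime_iff_eq hp hq).1 (hp.dvd_of_dvd_pow hdx)
      rwa [hs P Q hPP.1 (h' Q hQ).1 hPP.2 (h' Q hQ).2 this]
    obtain ⟨M'', rfl⟩ := Multiset.exists_cons_of_mem hmem
    congr 1
    refine ih M'' (fun Q hQ => hM Q (Multiset.mem_cons_of_mem hQ))
      (fun Q hQ => h' Q (Multiset.mem_cons_of_mem hQ)) ?_
    simp only [msNorm, Multiset.map_cons, Multiset.prod_cons] at h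
    refine Nat.eq_of_mul_eq_mul_left ?_ h
    rw [hN]; exact pow_pos hp.pos _

lemma exists_pair_map (hK : finrank ℚ K = 2) :
    ∃ f : Ideal (𝓞 K) → ℕ × ℕ, (∀ I, I ≠ 0 → (f I).1 * (f I).2 = Ideal.absNorm I) ∧
      ∀ I J, I ≠ 0 → J ≠ 0 → f I = f J → I = J := by
  classical
  obtain ⟨c, hc⟩ : ∃ c : ℕ → Ideal (𝓞 K), ∀ P, Prime P →
      Prime (c (resChar P)) ∧ resChar (c (resChar P)) = resChar P := by
    have : ∀ n : ℕ, ∃ Q : Ideal (𝓞 K), ∀ P : Ideal (𝓞 K), Prime P → resChar P = n →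
        Prime Q ∧ resChar Q = n := by
      intro n
      by_cases h : ∃ P : Ideal (𝓞 K), Prime P ∧ resChar P = n
      · obtain ⟨Q, hQ⟩ := h
        exact ⟨Q, fun _ _ _ => hQ⟩
      · exact ⟨⊥, fun P hP hn => (h ⟨P, hP, hn⟩).elim⟩
    choose c hc using this
    exact ⟨c, fun P hP => hc _ P hP rfl⟩
  let s : Ideal (𝓞 K) → Prop := fun P => P = c (resChar P)
  let nf : Ideal (𝓞 K) → Multiset (Ideal (𝓞 K)) := UniqueFactorizationMonoid.normalizedFactors
  have hnf : ∀ I, I ≠ 0 → (nf I).prod = I := fun I hI => Ideal.prod_normalizedFactors_eq_self hI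
  have hpr : ∀ I, ∀ P ∈ nf I, Prime P := fun I P hP =>
    UniqueFactorizationMonoid.prime_of_normalized_factor P hP
  refine ⟨fun I => (msNorm ((nf I).filter s), msNorm ((nf I).filter (fun P => ¬ s P))), ?_, ?_⟩
  · intro I hI
    simp only [msNorm]
    rw [← Multiset.prod_add, ← Multiset.map_add, Multiset.filter_add_not,
      ← map_multiset_prod, hnf I hI]
  · intro I J hI hJ h
    rw [Prod.mk.injEq] at h
    have e1 := msNorm_inj s (fun P Q _ _ sP sQ h => by
      rw [show P = c (resChar P) from sP, h]; exact Eq.symm sQ) _ _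
      (fun P hP => ⟨hpr I P (Multiset.mem_of_mem_filter hP), Multiset.of_mem_filter hP⟩)
      (fun P hP => ⟨hpr J P (Multiset.mem_of_mem_filter hP), Multiset.of_mem_filter hP⟩) h.1
    have e2 := msNorm_inj (fun P => ¬ s P) (fun P Q hP hQ sP sQ h =>
      primes_two hK P Q (c (resChar P)) hP hQ (hc P hP).1 (hc P hP).2.symm
        (by rw [(hc P hP).2, h]) sP (by rw [h]; exact sQ)) _ _
      (fun P hP => ⟨hpr I P (Multiset.mem_of_mem_filter hP), (Multiset.mem_filter.1 hP).2⟩)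
      (fun P hP => ⟨hpr J P (Multiset.mem_of_mem_filter hP), (Multiset.mem_filter.1 hP).2⟩) h.2
    rw [← hnf I hI, ← hnf J hJ, ← Multiset.filter_add_not s (nf I), e1, e2,
      Multiset.filter_add_not]

lemma card_pairs (N : ℕ) (S : Finset (ℕ × ℕ)) (hS : ∀ x ∈ S, 0 < x.1 * x.2 ∧ x.1 * x.2 ≤ N) :
    (S.card : ℝ) ≤ N * (1 + Real.log N) := by
  have hsub : S ⊆ (Finset.Icc 1 N).biUnion
      (fun a => (Finset.Icc 1 (N / a)).image (fun b => (a, b))) := by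
    rintro ⟨a, b⟩ hx
    obtain ⟨h0, h1⟩ := hS _ hx
    simp only at h0 h1
    have ha : 0 < a := Nat.pos_of_mul_pos_right h0
    have hb : 0 < b := Nat.pos_of_mul_pos_left h0
    simp only [Finset.mem_biUnion, Finset.mem_Icc, Finset.mem_image, Prod.mk.injEq]
    refine ⟨a, ⟨ha, by nlinarith⟩, b, ⟨hb, ?_⟩, rfl, rfl⟩
    rw [Nat.le_div_iff_mul_le ha]; linarith
  have h1 : S.card ≤ ∑ a ∈ Finset.Icc 1 N, N / a := by
    refine (Finset.card_le_card hsub).trans (Finset.card_biUnion_le.trans ?_)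
    refine Finset.sum_le_sum fun a _ => Finset.card_image_le.trans (by simp)
  calc (S.card : ℝ) ≤ ((∑ a ∈ Finset.Icc 1 N, N / a : ℕ) : ℝ) := by exact_mod_cast h1
    _ ≤ ∑ a ∈ Finset.Icc 1 N, (N : ℝ) * (a : ℝ)⁻¹ := by
        push_cast
        exact Finset.sum_le_sum fun a _ => by rw [← div_eq_mul_inv]; exact Nat.cast_div_le
    _ = N * ((harmonic N : ℚ) : ℝ) := by
        rw [harmonic_eq_sum_Icc, ← Finset.mul_sum]; push_cast; rfl
    _ ≤ _ := by
        gcongr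
        exact harmonic_le_one_add_log N

lemma minkowski_le (hK : finrank ℚ K = 2) (c : ClassGroup (𝓞 K)) :
    ∃ I : Ideal (𝓞 K), ∃ h : I ≠ 0,
      ClassGroup.mk0 ⟨I, mem_nonZeroDivisors_iff_ne_zero.2 h⟩ = c ∧
      (Ideal.absNorm I : ℝ) ≤ Real.sqrt |(discr K : ℝ)| := by
  obtain ⟨⟨I, hI⟩, h, hle⟩ := exists_ideal_in_class_of_norm_le c
  refine ⟨I, mem_nonZeroDivisors_iff_ne_zero.1 hI, h, hle.trans ?_⟩
  have hr := InfinitePlace.card_add_two_mul_card_eq_rank K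
  rw [hK] at hr ⊢
  have hpi := Real.pi_gt_three
  have h1 : (4 / Real.pi) ^ InfinitePlace.nrComplexPlaces K ≤ 2 := by
    have h4 : 4 / Real.pi ≤ 2 := by rw [div_le_iff₀ (by positivity)]; linarith
    have : InfinitePlace.nrComplexPlaces K = 0 ∨ InfinitePlace.nrComplexPlaces K = 1 := by omega
    rcases this with h | h <;> rw [h] <;> norm_num
    exact h4
  have hs := Real.sqrt_nonneg |(discr K : ℝ)|
  push_cast
  norm_num [Nat.factorial]
  nlinarith

end aux

/-- There exists a universal constant `C > 0` such that for every imaginary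
quadratic number field `K`, the class number satisfies
`h_K ≤ C · √|d_K| · log|d_K|`. -/
theorem classNumber_le_of_imaginary_quadratic :
    ∃ C : ℝ, 0 < C ∧
      ∀ (K : Type) [Field K] [NumberField K],
        finrank ℚ K = 2 → IsEmpty (K →+* ℝ) →
        (classNumber K : ℝ) ≤ C * Real.sqrt |(discr K : ℝ)| * Real.log |(discr K : ℝ)| := by
  classical
  refine ⟨2, by norm_num, fun K _ _ hK _ => ?_⟩
  obtain ⟨f, hf, hinj⟩ := exists_pair_map (K := K) hK
  choose I hI0 hIc hIn using minkowski_le (K := K) hK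
  set D : ℝ := |(discr K : ℝ)| with hD
  have hD3 : 3 ≤ D := by
    have := abs_discr_gt_two (K := K) (by omega)
    have : (3 : ℤ) ≤ |discr K| := by omega
    rw [hD]; exact_mod_cast this
  set N := ⌊Real.sqrt D⌋₊ with hN
  have hs1 : 1 ≤ Real.sqrt D := Real.one_le_sqrt.2 (by linarith)
  have hN1 : 1 ≤ N := Nat.le_floor (by simpa using hs1)
  have hNs : (N : ℝ) ≤ Real.sqrt D := Nat.floor_le (by positivity)
  have hcard : ((Finset.univ.image (fun c => f (I c))).card : ℝ) ≤ N * (1 + Real.log N) := by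
    refine card_pairs N _ ?_
    intro x hx
    obtain ⟨c, -, rfl⟩ := Finset.mem_image.1 hx
    rw [hf _ (hI0 c)]
    refine ⟨Nat.pos_of_ne_zero ?_, Nat.le_floor (hIn c)⟩
    rw [Ne, Ideal.absNorm_eq_zero_iff]; exact hI0 c
  rw [Finset.card_image_of_injective, Finset.card_univ] at hcard
  · have hlog1 : 1 ≤ Real.log D := by
      rw [Real.le_log_iff_exp_le (by linarith)]
      linarith [Real.exp_one_lt_d9]
    have hlogN : Real.log N ≤ Real.log D := by
      refine Real.log_le_log (by exact_mod_cast hN1) (hNs.trans ?_)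
      rw [Real.sqrt_le_left (by linarith)]
      nlinarith
    calc (classNumber K : ℝ) ≤ N * (1 + Real.log N) := hcard
      _ ≤ Real.sqrt D * (2 * Real.log D) := by
        have : 0 ≤ Real.log (N : ℝ) := Real.log_natCast_nonneg N
        gcongr
        linarith
      _ = _ := by ring
  · intro c c' h
    have := hinj _ _ (hI0 c) (hI0 c') h
    rw [← hIc c, ← hIc c']
    congr 1
    exact Subtype.ext this
end

section
/- Let K be an imaginary quadratic number field with ring of integers 𝓞_K and class number h_K. Let c ≥ 1 be an integer and let O = ℤ + c𝓞_K = {a + c·x : a ∈ ℤ, x ∈ 𝓞_K}, a subring of 𝓞_K (the order of conductor c in K). Let h_O be the cardinality of the class group of O (invertible fractional O-ideals modulo principal ones), and let u = [𝓞_K^× : O^×] be the index of the unit group of O in that of 𝓞_K. For a prime number p, let χ(p) = 1 if p𝓞_K is a product of two distinct prime ideals, χ(p) = −1 if p𝓞_K is a prime ideal, and χ(p) = 0 if p𝓞_K is the square of a prime ideal. Then h_O · u · ∏_{p prime, p ∣ c} p = h_K · c · ∏_{p prime, p ∣ c} (p − χ(p)); in particular h_O is finite. -/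
open NumberField Module

/-- The order `O = ℤ + c·𝓞_K` of conductor `c` in a number field `K`,
as a subring of the ring of integers `𝓞_K`. -/
def condOrder (K : Type*) [Field K] [NumberField K] (c : ℕ) : Subring (𝓞 K) where
  carrier := {z | ∃ (a : ℤ) (x : 𝓞 K), z = (a : 𝓞 K) + (c : 𝓞 K) * x}
  zero_mem' := ⟨0, 0, by simp⟩
  one_mem' := ⟨1, 0, by simp⟩
  add_mem' := by
    rintro z w ⟨a, x, rfl⟩ ⟨b, y, rfl⟩
    exact ⟨a + b, x + y, by push_cast; ring⟩
  neg_mem' := by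
    rintro z ⟨a, x, rfl⟩
    exact ⟨-a, -x, by push_cast; ring⟩
  mul_mem' := by
    rintro z w ⟨a, x, rfl⟩ ⟨b, y, rfl⟩
    exact ⟨a * b, (a : 𝓞 K) * y + (b : 𝓞 K) * x + (c : 𝓞 K) * (x * y), by push_cast; ring⟩

set_option linter.unusedSectionVars false
set_option linter.style.haveILetI false

theorem card_classGroup_eq_index (B K : Type*) [CommRing B] [IsDomain B] [Field K] [Algebra B K]
    [IsFractionRing B K] : Nat.card (ClassGroup B) =
      (Units.map (Submodule.spanSingleton B (A := K)).toMonoidHom).range.index := by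
  rw [Nat.card_congr (ClassGroup.equiv K).toEquiv]
  have : (toPrincipalIdeal B K).range = Subgroup.comap (FractionalIdeal.unitsMulEquivSubmodule
    (S := nonZeroDivisors B) (P := K) (R := B)).toMonoidHom
    (Units.map (Submodule.spanSingleton B (A := K)).toMonoidHom).range := by
    ext I
    simp only [Subgroup.mem_comap, MonoidHom.mem_range]
    refine exists_congr fun x => ?_
    rw [toPrincipalIdeal_eq_iff, Units.ext_iff, ← FractionalIdeal.coeToSubmodule_inj]
    simp [FractionalIdeal.unitsMulEquivSubmodule]
  rw [← Subgroup.index_comap_of_surjective _ (FractionalIdeal.unitsMulEquivSubmodule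
    (S := nonZeroDivisors B) (P := K) (R := B)).surjective]
  change _ = Subgroup.index (Subgroup.comap (FractionalIdeal.unitsMulEquivSubmodule
    (S := nonZeroDivisors B) (P := K) (R := B)).toMonoidHom _)
  rw [← this]
  rfl


theorem idem_twist_mul {S : Type*} [IdemCommSemiring S] {X Y C I J O : S}
    (hI : I * O = I) (hJ : J * O = J) (hX : X * O + C * I = I) (hY : Y * O + C * J = J) :
    (X + C * I) * (Y + C * J) = X * Y + C * (I * J) := by
  have h1 : X * J + C * I * J = I * J := by
    calc X * J + C * I * J = (X * O + C * I) * J := by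
          rw [add_mul, mul_assoc X, mul_comm O, hJ]
      _ = I * J := by rw [hX]
  have h2 : Y * I + C * I * J = I * J := by
    calc Y * I + C * I * J = (Y * O + C * J) * I := by
          rw [add_mul, mul_assoc Y, mul_comm O, hI]; ring
      _ = I * J := by rw [hY, mul_comm]
  calc (X + C * I) * (Y + C * J) = X * Y + C * (X * J + (Y * I + C * I * J)) := by ring
    _ = X * Y + C * (X * J + (Y * I + (C * I * J + C * I * J))) := by rw [add_idem (C * I * J)]
    _ = X * Y + C * ((X * J + C * I * J) + (Y * I + C * I * J)) := by ring
    _ = _ := by rw [h1, h2, add_idem]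

section
variable {R K : Type*} [CommRing R] [Field K] [Algebra R K] (A : Subring R) (c : ℕ)

/-- `R` as an `A`-submodule of `K`. -/
def bigO (K : Type*) [Field K] [Algebra R K] : Submodule A K :=
  (1 : Submodule R K).restrictScalars A

theorem mem_bigO {z : K} : z ∈ bigO A K ↔ ∃ r : R, algebraMap R K r = z := by
  simp [bigO, Submodule.mem_one]

theorem mem_oneA {z : K} : z ∈ (1 : Submodule A K) ↔ ∃ r ∈ A, algebraMap R K r = z := by
  rw [Submodule.mem_one]
  constructor
  · rintro ⟨y, rfl⟩; exact ⟨y, y.2, rfl⟩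
  · rintro ⟨r, hr, rfl⟩; exact ⟨⟨r, hr⟩, rfl⟩

theorem one_le_bigO : (1 : Submodule A K) ≤ bigO A K := by
  intro z hz
  obtain ⟨r, -, rfl⟩ := (mem_oneA A).1 hz
  exact (mem_bigO A).2 ⟨r, rfl⟩

theorem rs_mul (I J : Submodule R K) : (I * J).restrictScalars A =
    I.restrictScalars A * J.restrictScalars A := Submodule.restrictScalars_mul ..

theorem rs_mul_bigO (I : Submodule R K) : I.restrictScalars A * bigO A K = I.restrictScalars A := by
  rw [bigO, ← rs_mul, mul_one]

theorem bigO_mul_bigO : bigO A K * bigO A K = bigO A K := rs_mul_bigO A 1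

theorem rs_span (s : Set K) : (Submodule.span R s).restrictScalars A =
    Submodule.span A s * bigO A K := by
  apply le_antisymm
  · intro z hz
    rw [Submodule.restrictScalars_mem] at hz
    induction hz using Submodule.span_induction with
    | mem x hx =>
      rw [← mul_one x]
      exact Submodule.mul_mem_mul (Submodule.subset_span hx) (one_le_bigO A (Submodule.one_le.1 le_rfl))
    | zero => exact zero_mem _
    | add x y _ _ h1 h2 => exact add_mem h1 h2
    | smul r x _ h =>
      rw [← bigO_mul_bigO A, ← mul_assoc, Algebra.smul_def, mul_comm (algebraMap R K r)]
      exact Submodule.mul_mem_mul h ((mem_bigO A).2 ⟨r, rfl⟩)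
  · rw [← rs_mul_bigO A]
    gcongr
    exact Submodule.span_le_restrictScalars A R s

/-- extension of modules -/
def extHom : Submodule A K →* Submodule R K where
  toFun M := Submodule.span R (M : Set K)
  map_one' := by
    apply Submodule.restrictScalars_injective A
    rw [rs_span, Submodule.span_eq, one_mul]; rfl
  map_mul' M N := by
    apply Submodule.restrictScalars_injective A
    rw [rs_mul, rs_span, rs_span, rs_span, Submodule.span_eq, Submodule.span_eq, Submodule.span_eq,
      mul_mul_mul_comm, bigO_mul_bigO]

theorem rs_extHom (M : Submodule A K) : (extHom A M).restrictScalars A = M * bigO A K := by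
  change (Submodule.span R (M : Set K)).restrictScalars A = _
  rw [rs_span, Submodule.span_eq]

theorem extHom_span (x : K) : extHom A (Submodule.span A {x}) = Submodule.span R {x} := by
  apply Submodule.restrictScalars_injective A
  rw [rs_extHom, rs_span]

theorem extHom_eq_iff (M : Submodule A K) (I : Submodule R K) :
    extHom A M = I ↔ M * bigO A K = I.restrictScalars A := by
  rw [← rs_extHom]; exact (Submodule.restrictScalars_injective A R K).eq_iff.symm

/-- The submodule `x A + c I`. -/
def twist (I : Submodule A K) (x : K) : Submodule A K :=
  Submodule.span A {x} + Submodule.span A {(c : K)} * I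

def Good (I : Submodule A K) (x : K) : Prop :=
  I * bigO A K = I ∧ Submodule.span A {x} * bigO A K + Submodule.span A {(c : K)} * I = I

variable {A c}
theorem twist_mul {I J : Submodule A K} {x y : K} (hI : Good A c I x) (hJ : Good A c J y) :
    twist A c I x * twist A c J y = twist A c (I * J) (x * y) := by
  rw [twist, twist, idem_twist_mul hI.1 hJ.1 hI.2 hJ.2, twist, Submodule.span_mul_span,
    Set.singleton_mul_singleton]

theorem twist_mul_bigO {I : Submodule A K} {x : K} (hI : Good A c I x) :
    twist A c I x * bigO A K = I := by
  rw [twist, add_mul, mul_assoc, hI.1, hI.2]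

theorem Good.mul {I J : Submodule A K} {x y : K} (hI : Good A c I x) (hJ : Good A c J y) :
    Good A c (I * J) (x * y) := by
  have h : twist A c (I * J) (x * y) * bigO A K = I * J := by
    rw [← twist_mul hI hJ, ← bigO_mul_bigO A, mul_mul_mul_comm, twist_mul_bigO hI,
      twist_mul_bigO hJ]
  have h0 : (I * J) * bigO A K = I * J := by rw [mul_assoc, hJ.1]
  refine ⟨h0, ?_⟩
  rwa [twist, add_mul, mul_assoc _ (I * J), h0] at h

theorem mem_c_bigO {z : K} : z ∈ Submodule.span A {(c : K)} * bigO A K ↔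
    ∃ r : R, z = algebraMap R K (c * r) := by
  rw [Submodule.mem_span_singleton_mul]
  constructor
  · rintro ⟨w, hw, rfl⟩
    obtain ⟨r, rfl⟩ := (mem_bigO A).1 hw
    exact ⟨r, by simp⟩
  · rintro ⟨r, rfl⟩
    exact ⟨algebraMap R K r, (mem_bigO A).2 ⟨r, rfl⟩, by simp⟩

theorem mem_twist_bigO {x z : K} : z ∈ twist A c (bigO A K) x ↔
    ∃ a ∈ A, ∃ r : R, z = algebraMap R K a * x + algebraMap R K (c * r) := by
  rw [twist, Submodule.add_eq_sup, Submodule.mem_sup]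
  simp only [mem_c_bigO, Submodule.mem_span_singleton]
  constructor
  · rintro ⟨_, ⟨a, rfl⟩, _, ⟨r, rfl⟩, rfl⟩
    exact ⟨a, a.2, r, by rw [Algebra.smul_def]; rfl⟩
  · rintro ⟨a, ha, r, rfl⟩
    exact ⟨_, ⟨⟨a, ha⟩, rfl⟩, _, ⟨r, rfl⟩, by rw [Algebra.smul_def]; rfl⟩

theorem good_bigO {u v w : R} (h : u * v = 1 + c * w) : Good A c (bigO A K) (algebraMap R K u) := by
  refine ⟨bigO_mul_bigO A, le_antisymm ?_ ?_⟩
  · rw [Submodule.add_eq_sup, sup_le_iff]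
    constructor
    · rw [← rs_span]
      intro z hz
      obtain ⟨r, rfl⟩ := Submodule.mem_span_singleton.1 ((Submodule.restrictScalars_mem ..).1 hz)
      exact (mem_bigO A).2 ⟨r * u, by simp [Algebra.smul_def]⟩
    · intro z hz
      obtain ⟨r, rfl⟩ := mem_c_bigO.1 hz
      exact (mem_bigO A).2 ⟨_, rfl⟩
  · intro z hz
    obtain ⟨r, rfl⟩ := (mem_bigO A).1 hz
    rw [Submodule.add_eq_sup, Submodule.mem_sup]
    refine ⟨algebraMap R K (u * (v * r)), ?_, algebraMap R K (c * (-w * r)), mem_c_bigO.2 ⟨_, rfl⟩, ?_⟩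
    · rw [map_mul]
      exact Submodule.mul_mem_mul (Submodule.mem_span_singleton_self _) ((mem_bigO A).2 ⟨_, rfl⟩)
    · rw [← map_add]; congr 1; linear_combination r * h

theorem twist_congr {u v w : R} (h : u = v + c * w) :
    twist A c (bigO A K) (algebraMap R K u) = twist A c (bigO A K) (algebraMap R K v) := by
  ext z
  rw [mem_twist_bigO, mem_twist_bigO]
  constructor
  · rintro ⟨a, ha, r, rfl⟩
    refine ⟨a, ha, a * w + r, ?_⟩
    rw [h]; simp only [map_add, map_mul]; ring
  · rintro ⟨a, ha, r, rfl⟩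
    refine ⟨a, ha, -a * w + r, ?_⟩
    rw [h]; simp only [map_add, map_mul, map_neg]; ring

theorem twist_one (hA : ∀ r : R, (c : R) * r ∈ A) : twist A c (bigO A K) 1 = 1 := by
  ext z
  rw [mem_twist_bigO, mem_oneA]
  constructor
  · rintro ⟨a, ha, r, rfl⟩
    exact ⟨a + c * r, add_mem ha (hA r), by simp⟩
  · rintro ⟨a, ha, rfl⟩
    exact ⟨a, ha, 0, by simp⟩

/-- The units modulo `c`. -/
abbrev Gc (R : Type*) [CommRing R] (c : ℕ) := (R ⧸ Ideal.span {(c : R)})ˣ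

noncomputable def rep (g : Gc R c) : R := (g : R ⧸ Ideal.span {(c : R)}).out

theorem mk_rep (g : Gc R c) : Ideal.Quotient.mk _ (rep g) = (g : R ⧸ Ideal.span {(c : R)}) :=
  Quotient.out_eq _

theorem mk_eq_mk_c {u v : R} : Ideal.Quotient.mk (Ideal.span {(c : R)}) u = Ideal.Quotient.mk _ v ↔
    ∃ w, u = v + c * w := by
  rw [Ideal.Quotient.eq, Ideal.mem_span_singleton]
  exact exists_congr fun w => by rw [sub_eq_iff_eq_add, add_comm]

theorem good_rep (g : Gc R c) : Good A c (bigO A K) (algebraMap R K (rep g)) := by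
  have : ∃ w, rep g * rep g⁻¹ = 1 + c * w := by
    rw [← mk_eq_mk_c, map_mul, mk_rep, mk_rep]; simp
  obtain ⟨w, hw⟩ := this
  exact good_bigO hw

theorem twist_rep (g : Gc R c) {u : R} (h : Ideal.Quotient.mk _ u = (g : R ⧸ Ideal.span {(c : R)})) :
    twist A c (bigO A K) (algebraMap R K (rep g)) = twist A c (bigO A K) (algebraMap R K u) := by
  rw [← mk_rep, eq_comm, mk_eq_mk_c] at h
  obtain ⟨w, hw⟩ := h
  exact twist_congr hw

variable (K) in
noncomputable def twistHom (hA : ∀ r : R, (c : R) * r ∈ A) : Gc R c →* (Submodule A K)ˣ :=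
  MonoidHom.toHomUnits
  { toFun := fun g => twist A c (bigO A K) (algebraMap R K (rep g))
    map_one' := by
      rw [twist_rep (u := 1) _ (by simp), map_one, twist_one hA]
    map_mul' := fun g h => by
      rw [twist_mul (good_rep g) (good_rep h), bigO_mul_bigO, ← map_mul]
      exact twist_rep _ (by rw [map_mul, mk_rep, mk_rep]; rfl) }

theorem twistHom_val (hA : ∀ r : R, (c : R) * r ∈ A) (g : Gc R c) {u : R}
    (h : Ideal.Quotient.mk _ u = (g : R ⧸ Ideal.span {(c : R)})) :
    (twistHom K hA g : Submodule A K) = twist A c (bigO A K) (algebraMap R K u) :=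
  twist_rep g h

section
variable [IsDedekindDomain R] [IsFractionRing R K]

theorem exists_gen (hc : (c : R) ≠ 0) (I : (Submodule R K)ˣ) :
    ∃ x ∈ (I : Submodule R K), ∀ z ∈ (I : Submodule R K), ∃ w : R, ∃ t ∈ (I : Submodule R K),
      z = x * algebraMap R K w + c * t := by
  obtain ⟨d, hd, hdI⟩ := I.submodule_isFractional (S := nonZeroDivisors R)
  have hd0 : algebraMap R K d ≠ 0 := IsFractionRing.to_map_ne_zero_of_mem_nonZeroDivisors hd
  -- the integral ideal `d I`
  let J : Ideal R :=
    { carrier := {r | ∃ z ∈ (I : Submodule R K), algebraMap R K r = algebraMap R K d * z}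
      zero_mem' := ⟨0, zero_mem _, by simp⟩
      add_mem' := by
        rintro a b ⟨z, hz, h⟩ ⟨w, hw, h'⟩
        exact ⟨z + w, add_mem hz hw, by rw [map_add, h, h', mul_add]⟩
      smul_mem' := by
        rintro r a ⟨z, hz, h⟩
        exact ⟨r • z, Submodule.smul_mem _ _ hz, by
          rw [smul_eq_mul, map_mul, h, Algebra.smul_def]; ring⟩ }
  have hJ0 : J ≠ ⊥ := by
    intro h
    apply I.ne_zero
    rw [Submodule.zero_eq_bot, eq_bot_iff]
    intro z hz
    obtain ⟨r, hr⟩ := hdI z hz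
    rw [Algebra.smul_def] at hr
    have : r ∈ J := ⟨z, hz, hr⟩
    rw [h, Submodule.mem_bot] at this
    rw [this, map_zero, eq_comm, mul_eq_zero] at hr
    simpa [hd0] using hr
  have hcJ : Ideal.span {(c : R)} * J ≠ 0 := by
    refine mul_ne_zero ?_ hJ0
    simpa using hc
  obtain ⟨a, ha⟩ := IsDedekindDomain.exists_sup_span_eq (Ideal.mul_le_right (J := J) (I := Ideal.span {(c : R)})) hcJ
  have haJ : a ∈ J := ha ▸ (le_sup_right : _ ≤ Ideal.span {(c : R)} * J ⊔ _) (Ideal.mem_span_singleton_self a)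
  obtain ⟨x, hx, hax⟩ := haJ
  refine ⟨x, hx, ?_⟩
  intro z hz
  obtain ⟨r, hr⟩ := hdI z hz
  rw [Algebra.smul_def] at hr
  have hrJ : r ∈ J := ⟨z, hz, hr⟩
  rw [← ha, Submodule.mem_sup] at hrJ
  obtain ⟨y, hy, w, hw, rfl⟩ := hrJ
  obtain ⟨y', ⟨t, ht, hyt⟩, rfl⟩ := Ideal.mem_span_singleton_mul.1 hy
  obtain ⟨w', rfl⟩ := Ideal.mem_span_singleton'.1 hw
  refine ⟨w', t, ht, ?_⟩
  have hz' : z = x * algebraMap R K w' + c * t := by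
    apply mul_left_cancel₀ hd0
    rw [← hr, map_add, map_mul, map_mul, hyt, hax, map_natCast]; ring
  exact hz'

theorem exists_good (hc : (c : R) ≠ 0) (I : (Submodule R K)ˣ) :
    ∃ x, Good A c ((I : Submodule R K).restrictScalars A) x := by
  obtain ⟨x, hx, H⟩ := exists_gen hc I
  refine ⟨x, rs_mul_bigO A _, le_antisymm ?_ ?_⟩
  · rw [Submodule.add_eq_sup, sup_le_iff, ← rs_span]
    constructor
    · intro z hz
      have := (Submodule.span_singleton_le_iff_mem x _).2 hx
      exact this hz
    · intro z hz
      obtain ⟨w, hw, rfl⟩ := Submodule.mem_span_singleton_mul.1 hz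
      have := Submodule.smul_mem (I : Submodule R K) (c : R) hw
      rw [Algebra.smul_def, map_natCast] at this
      exact this
  · intro z hz
    obtain ⟨w', t, ht, hz'⟩ := H z hz
    rw [hz']
    exact add_mem
      ((le_sup_left : _ ≤ _ ⊔ Submodule.span A {(c : K)} * (I : Submodule R K).restrictScalars A)
        (Submodule.mul_mem_mul (Submodule.mem_span_singleton_self _) ((mem_bigO A).2 ⟨_, rfl⟩)))
      ((le_sup_right : _ ≤ Submodule.span A {x} * bigO A K ⊔ _)
        (Submodule.mul_mem_mul (Submodule.mem_span_singleton_self _) ht))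

theorem extHom_surjective (hc : (c : R) ≠ 0) (hA : ∀ r : R, (c : R) * r ∈ A) :
    Function.Surjective (Units.map (extHom (K := K) A)) := by
  intro I
  obtain ⟨x, hx⟩ := exists_good (A := A) (c := c) hc I
  obtain ⟨y, hy⟩ := exists_good (A := A) (c := c) hc I⁻¹
  have h1 := twist_mul hx hy
  have h2 := hx.mul hy
  rw [← rs_mul, Units.mul_inv] at h1 h2
  change _ = twist A c (bigO A K) _ at h1
  change Good A c (bigO A K) _ at h2
  -- `x y` is in `R`, a unit modulo `c`
  have h3 : x * y ∈ bigO A K := by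
    have : x * y ∈ Submodule.span A {x * y} * bigO A K := by
      have := Submodule.mul_mem_mul (Submodule.mem_span_singleton_self (R := A) (x * y))
        (one_le_bigO (K := K) A (Submodule.one_le.1 le_rfl))
      rwa [mul_one] at this
    rw [← h2.2]
    exact (le_sup_left : _ ≤ _ ⊔ Submodule.span A {(c : K)} * bigO A K) this
  obtain ⟨u, hu⟩ := (mem_bigO A).1 h3
  have h4 : (1 : K) ∈ bigO A K := one_le_bigO A (Submodule.one_le.1 le_rfl)
  rw [← h2.2, Submodule.add_eq_sup, Submodule.mem_sup] at h4
  obtain ⟨p, hp, q, hq, hpq⟩ := h4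
  obtain ⟨r, rfl⟩ := mem_c_bigO.1 hq
  obtain ⟨p', hp', rfl⟩ := Submodule.mem_span_singleton_mul.1 hp
  obtain ⟨v, rfl⟩ := (mem_bigO A).1 hp'
  have h5 : u * v = 1 + c * (-r) := by
    apply IsFractionRing.injective R K
    rw [map_mul, hu, map_add, map_one, ← hpq, mul_neg, map_neg]; ring
  let g : Gc R c := Units.mkOfMulEqOne (Ideal.Quotient.mk _ u) (Ideal.Quotient.mk _ v) (by
    rw [← map_mul, ← map_one (Ideal.Quotient.mk _)]
    exact mk_eq_mk_c.2 ⟨_, h5⟩)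
  have hg := twistHom_val (K := K) hA g (u := u) rfl
  rw [hu, ← h1] at hg
  have hunit : IsUnit (twist A c ((I : Submodule R K).restrictScalars A) x) := by
    apply isUnit_of_mul_isUnit_left (y := twist A c (((I⁻¹ : (Submodule R K)ˣ) : Submodule R K).restrictScalars A) y)
    rw [← hg]; exact Units.isUnit _
  refine ⟨hunit.unit, ?_⟩
  ext1
  rw [Units.coe_map]
  refine (extHom_eq_iff A _ _).2 ?_
  exact twist_mul_bigO hx

end

section
variable [IsDomain R] [IsFractionRing R K]

theorem exists_coprime_prod (hA : ∀ z : R, z ∈ A ↔ ∃ (a : ℤ) (x : R), z = a + c * x)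
    (hinj : ∀ n : ℤ, (c : R) ∣ (n : R) → (c : ℤ) ∣ n) {I J : Submodule A K} (hIJ : I * J = 1)
    (S : Finset ℕ) (hS : S ⊆ c.primeFactors) :
    ∃ x ∈ I, ∃ y ∈ J, ∃ (n : ℤ) (r : R), x * y = algebraMap R K (n + c * r) ∧
      ∀ p ∈ S, ¬ (p : ℤ) ∣ n := by
  have key : ∀ x ∈ I, ∀ y ∈ J, ∃ (n : ℤ) (r : R), x * y = algebraMap R K (n + c * r) := by
    intro x hx y hy
    have := Submodule.mul_mem_mul hx hy
    rw [hIJ, mem_oneA] at this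
    obtain ⟨a, ha, h⟩ := this
    obtain ⟨n, r, rfl⟩ := (hA a).1 ha
    exact ⟨n, r, h.symm⟩
  induction S using Finset.induction_on with
  | empty =>
    exact ⟨0, zero_mem _, 0, zero_mem _, 0, 0, by simp, by simp⟩
  | insert p S hpS ih =>
    obtain ⟨x, hx, y, hy, n, r, hn, hnS⟩ := ih (fun q hq => hS (Finset.mem_insert_of_mem hq))
    have hpc := hS (Finset.mem_insert_self p S)
    have hp := Nat.prime_of_mem_primeFactors hpc
    have hpdvd := Nat.dvd_of_mem_primeFactors hpc
    -- local statement at `p`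
    have hloc : ∃ x ∈ I, ∃ y ∈ J, ∃ (n : ℤ) (r : R), x * y = algebraMap R K (n + c * r) ∧
        ¬ (p : ℤ) ∣ n := by
      by_contra! hcon
      have hle : I * J ≤ twist A c (bigO A K) (algebraMap R K p) := by
        rw [Submodule.mul_le]
        intro x hx y hy
        obtain ⟨n, r, h⟩ := key x hx y hy
        obtain ⟨k, rfl⟩ := hcon x hx y hy n r h
        rw [mem_twist_bigO]
        exact ⟨k, (hA _).2 ⟨k, 0, by simp⟩, r, by rw [h]; push_cast; simp; ring⟩
      rw [hIJ] at hle
      obtain ⟨a, ha, r, h⟩ := mem_twist_bigO.1 (hle (Submodule.one_le.1 le_rfl))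
      obtain ⟨k, s, rfl⟩ := (hA a).1 ha
      rw [← map_mul, ← map_add, ← map_one (algebraMap R K)] at h
      have h := IsFractionRing.injective R K h
      have h2 : (c : R) ∣ ((1 - k * p : ℤ) : R) :=
        ⟨s * p + r, by push_cast; linear_combination h⟩
      have h3 := hinj _ h2
      have h4 : (p : ℤ) ∣ 1 - k * p := (Int.natCast_dvd_natCast.2 hpdvd).trans h3
      have h5 : (p : ℤ) ∣ 1 := by
        have := dvd_add h4 (dvd_mul_left (p : ℤ) k)
        simpa using this
      exact hp.one_lt.ne' (by exact_mod_cast Int.eq_one_of_dvd_one (by positivity) h5)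
    obtain ⟨x', hx', y', hy', n', r', hn', hpn'⟩ := hloc
    have hcop : IsCoprime (p : ℤ) ((∏ q ∈ S, q : ℕ) : ℤ) := by
      rw [Nat.isCoprime_iff_coprime]
      refine Nat.Coprime.prod_right fun q hq => ?_
      refine (Nat.coprime_primes hp
        (Nat.prime_of_mem_primeFactors (hS (Finset.mem_insert_of_mem hq)))).2 ?_
      rintro rfl; exact hpS hq
    obtain ⟨a, b, hab⟩ := hcop
    set Q : ℤ := ((∏ q ∈ S, q : ℕ) : ℤ) with hQ
    have memI : ∀ (M : Submodule A K) (k : ℤ) {z : K}, z ∈ M → (k : K) * z ∈ M := by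
      intro M k z hz
      have := M.toAddSubgroup.zsmul_mem hz k
      rwa [zsmul_eq_mul] at this
    obtain ⟨n1, r1, h1⟩ := key x hx y' hy'
    obtain ⟨n2, r2, h2⟩ := key x' hx' y hy
    refine ⟨((a * p : ℤ) : K) * x + ((b * Q : ℤ) : K) * x',
      add_mem (memI _ _ hx) (memI _ _ hx'),
      ((a * p : ℤ) : K) * y + ((b * Q : ℤ) : K) * y',
      add_mem (memI _ _ hy) (memI _ _ hy'),
      (a * p) ^ 2 * n + (a * p) * (b * Q) * (n1 + n2) + (b * Q) ^ 2 * n',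
      (a * p) ^ 2 * r + (a * p) * (b * Q) * (r1 + r2) + (b * Q) ^ 2 * r', ?_, ?_⟩
    · have e : (((a * p : ℤ) : K) * x + ((b * Q : ℤ) : K) * x') *
          (((a * p : ℤ) : K) * y + ((b * Q : ℤ) : K) * y') =
          ((a * p : ℤ) : K) ^ 2 * (x * y) + ((a * p : ℤ) : K) * ((b * Q : ℤ) : K) *
          (x * y' + x' * y) + ((b * Q : ℤ) : K) ^ 2 * (x' * y') := by ring
      rw [e, hn, hn', h1, h2]
      simp only [map_add, map_mul, map_pow, map_intCast, map_natCast, Int.cast_add, Int.cast_mul,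
        Int.cast_pow, Int.cast_natCast]
      ring
    · intro q hq hdvd
      rcases Finset.mem_insert.1 hq with rfl | hq
      · apply hpn'
        have hbQ : b * Q = 1 - a * q := by linarith
        rw [hbQ] at hdvd
        have : n' = ((a * q) ^ 2 * n + (a * q) * (1 - a * q) * (n1 + n2) + (1 - a * q) ^ 2 * n')
          - q * (a * (a * q * n + (1 - a * q) * (n1 + n2) + (- 2 + a * q) * n')) := by ring
        rw [this]
        exact dvd_sub hdvd (dvd_mul_right _ _)
      · apply hnS q hq
        have hqQ : (q : ℤ) ∣ Q := by
          rw [hQ]; exact Int.natCast_dvd_natCast.2 (Finset.dvd_prod_of_mem (fun q => q) hq)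
        have hap : a * p = 1 - b * Q := by linarith
        rw [hap] at hdvd
        have : n = ((1 - b * Q) ^ 2 * n + (1 - b * Q) * (b * Q) * (n1 + n2) + (b * Q) ^ 2 * n')
          - Q * (b * (b * Q * n' + (1 - b * Q) * (n1 + n2) + (- 2 + b * Q) * n)) := by ring
        rw [this]
        exact dvd_sub hdvd (hqQ.trans (dvd_mul_right _ _))

theorem c_bigO_le (hA : ∀ r : R, (c : R) * r ∈ A) {I : Submodule A K}
    (hI : I * bigO A K = bigO A K) : Submodule.span A {(c : K)} * bigO A K ≤ I := by
  have h1 : Submodule.span A {(c : K)} * bigO A K ≤ 1 := by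
    intro z hz
    obtain ⟨r, rfl⟩ := mem_c_bigO.1 hz
    exact (mem_oneA A).2 ⟨_, hA r, rfl⟩
  calc Submodule.span A {(c : K)} * bigO A K = (Submodule.span A {(c : K)} * bigO A K) * I := by
        rw [mul_assoc, mul_comm _ I, hI]
    _ ≤ 1 * I := by gcongr
    _ = I := one_mul I

theorem le_bigO {I : Submodule A K} (hI : I * bigO A K = bigO A K) : I ≤ bigO A K := by
  calc I = I * 1 := (mul_one I).symm
    _ ≤ I * bigO A K := by gcongr; exact one_le_bigO A
    _ = _ := hI

theorem twist_le (hA : ∀ r : R, (c : R) * r ∈ A) {I : Submodule A K}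
    (hI : I * bigO A K = bigO A K) {x : K} (hx : x ∈ I) : twist A c (bigO A K) x ≤ I := by
  rw [twist, Submodule.add_eq_sup, sup_le_iff]
  exact ⟨(Submodule.span_singleton_le_iff_mem _ _).2 hx, c_bigO_le hA hI⟩

theorem exists_twistHom (hc : c ≠ 0) (hA : ∀ z : R, z ∈ A ↔ ∃ (a : ℤ) (x : R), z = a + c * x)
    (hinj : ∀ n : ℤ, (c : R) ∣ (n : R) → (c : ℤ) ∣ n) (hA' : ∀ r : R, (c : R) * r ∈ A)
    (I : (Submodule A K)ˣ) (hI : (I : Submodule A K) * bigO A K = bigO A K) :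
    ∃ g, twistHom K hA' g = I := by
  have hJ : ((I⁻¹ : (Submodule A K)ˣ) : Submodule A K) * bigO A K = bigO A K := by
    nth_rewrite 1 [← hI]
    rw [← mul_assoc, Units.inv_mul, one_mul]
  obtain ⟨x, hx, y, hy, n, r, hxy, hn⟩ :=
    exists_coprime_prod hA hinj (Units.mul_inv I) c.primeFactors subset_rfl
  obtain ⟨u, rfl⟩ := (mem_bigO A).1 (le_bigO hI hx)
  obtain ⟨v, rfl⟩ := (mem_bigO A).1 (le_bigO hJ hy)
  rw [← map_mul] at hxy
  have hxy := IsFractionRing.injective R K hxy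
  have hcop : IsCoprime n (c : ℤ) := by
    rw [Int.isCoprime_iff_gcd_eq_one]
    by_contra hne
    obtain ⟨p, hp, hpd⟩ := Nat.exists_prime_and_dvd hne
    have h1 : (p : ℤ) ∣ n := (Int.natCast_dvd_natCast.2 hpd).trans (Int.gcd_dvd_left ..)
    have h2 : (p : ℤ) ∣ c := (Int.natCast_dvd_natCast.2 hpd).trans (Int.gcd_dvd_right ..)
    exact hn p (Nat.mem_primeFactors.2 ⟨hp, Int.natCast_dvd_natCast.1 h2, hc⟩) h1
  obtain ⟨m, k, hmk⟩ := hcop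
  have hmk' : (m : R) * n + k * c = 1 := by exact_mod_cast congrArg (Int.cast : ℤ → R) hmk
  let g : Gc R c := Units.mkOfMulEqOne (Ideal.Quotient.mk _ u) (Ideal.Quotient.mk _ (m * v)) (by
    rw [← map_mul, ← map_one (Ideal.Quotient.mk _)]
    exact mk_eq_mk_c.2 ⟨m * r - k, by linear_combination (m : R) * hxy + hmk'⟩)
  have h1 : (twistHom K hA' g : Submodule A K) ≤ I := by
    rw [twistHom_val (K := K) hA' g (u := u) rfl]
    exact twist_le hA' hI hx
  have h2 : ((twistHom K hA' g)⁻¹ : (Submodule A K)ˣ) ≤ ((I⁻¹ : (Submodule A K)ˣ) : Submodule A K) := by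
    rw [← map_inv, twistHom_val (K := K) hA' g⁻¹ (u := m * v) rfl]
    apply twist_le hA' hJ
    have := (I⁻¹ : (Submodule A K)ˣ).val.toAddSubgroup.zsmul_mem hy m
    rw [zsmul_eq_mul] at this
    rw [map_mul, map_intCast]
    exact this
  refine ⟨g, Units.ext (le_antisymm h1 ?_)⟩
  calc (I : Submodule A K) = I * (((twistHom K hA' g)⁻¹ : (Submodule A K)ˣ) * twistHom K hA' g) := by
        rw [Units.inv_mul, mul_one]
    _ ≤ I * (((I⁻¹ : (Submodule A K)ˣ) : Submodule A K) * twistHom K hA' g) := by gcongr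
    _ = _ := by rw [← mul_assoc, Units.mul_inv, one_mul]

/-- principal submodules -/
noncomputable abbrev prin (B K : Type*) [CommRing B] [Field K] [Algebra B K] :
    Subgroup (Submodule B K)ˣ :=
  (Units.map (Submodule.spanSingleton B (A := K)).toMonoidHom).range

theorem comap_prin (hc : c ≠ 0) (hA : ∀ z : R, z ∈ A ↔ ∃ (a : ℤ) (x : R), z = a + c * x)
    (hinj : ∀ n : ℤ, (c : R) ∣ (n : R) → (c : ℤ) ∣ n) (hA' : ∀ r : R, (c : R) * r ∈ A) :
    (prin R K).comap (Units.map (extHom (K := K) A)) = prin A K ⊔ (twistHom K hA').range := by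
  apply le_antisymm
  · intro I hI
    obtain ⟨x, hx⟩ := hI
    have hx' := congrArg Units.val hx
    simp only [Units.coe_map] at hx'
    change Submodule.span R {(x : K)} = extHom A (I : Submodule A K) at hx'
    let P := Units.map (Submodule.spanSingleton A (A := K)).toMonoidHom x
    have hP : (P : Submodule A K) * bigO A K = I * bigO A K := by
      rw [← rs_extHom A (I : Submodule A K), ← hx', rs_span]; rfl
    have hI' : ((P⁻¹ * I : (Submodule A K)ˣ) : Submodule A K) * bigO A K = bigO A K := by
      rw [Units.val_mul, mul_assoc, ← hP, ← mul_assoc, Units.inv_mul, one_mul]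
    obtain ⟨g, hg⟩ := exists_twistHom hc hA hinj hA' _ hI'
    rw [← mul_inv_cancel_left P I]
    exact Subgroup.mul_mem_sup ⟨x, rfl⟩ ⟨g, hg⟩
  · rw [sup_le_iff]
    constructor
    · rintro _ ⟨x, rfl⟩
      refine ⟨x, Units.ext ?_⟩
      simp only [Units.coe_map]
      exact (extHom_span A (x : K)).symm
    · rintro _ ⟨g, rfl⟩
      refine ⟨1, Units.ext ?_⟩
      simp only [Units.coe_map, map_one, Units.val_one]
      symm
      refine (extHom_eq_iff A _ _).2 ?_
      exact twist_mul_bigO (good_rep g)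

/-- units coming from integers -/
def intUnits (R : Type*) [CommRing R] (c : ℕ) : Subgroup (Gc R c) where
  carrier := {g | ∃ n m : ℤ, (g : R ⧸ Ideal.span {(c : R)}) = n ∧
    ((g⁻¹ : Gc R c) : R ⧸ Ideal.span {(c : R)}) = m}
  one_mem' := ⟨1, 1, by simp, by simp⟩
  mul_mem' := by
    rintro a b ⟨n, m, h1, h2⟩ ⟨n', m', h3, h4⟩
    exact ⟨n * n', m * m', by simp [h1, h3], by simp [h2, h4, mul_comm]⟩
  inv_mem' := by
    rintro a ⟨n, m, h1, h2⟩
    exact ⟨m, n, h2, by simpa using h1⟩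

theorem twistHom_comap_prin (hA : ∀ z : R, z ∈ A ↔ ∃ (a : ℤ) (x : R), z = a + c * x)
    (hZ : ∀ (g : Gc R c) (n : ℤ), (g : R ⧸ Ideal.span {(c : R)}) = n → g ∈ intUnits R c)
    (hA' : ∀ r : R, (c : R) * r ∈ A) :
    (prin A K).comap (twistHom K hA') = intUnits R c ⊔
      (Units.map (Ideal.Quotient.mk (Ideal.span {(c : R)})).toMonoidHom).range := by
  apply le_antisymm
  · rintro g ⟨γ, hγ⟩
    have h1 : Submodule.span A {(γ : K)} = twist A c (bigO A K) (algebraMap R K (rep g)) :=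
      congrArg Units.val hγ
    have h2 : Submodule.span A {(γ : K)} * bigO A K = bigO A K := by
      rw [h1, twist_mul_bigO (good_rep g)]
    have h3 : (γ : K) ∈ twist A c (bigO A K) (algebraMap R K (rep g)) :=
      h1 ▸ Submodule.mem_span_singleton_self _
    obtain ⟨a, ha, r, h4⟩ := mem_twist_bigO.1 h3
    obtain ⟨n, s, rfl⟩ := (hA a).1 ha
    have h5 : (1 : K) ∈ Submodule.span A {(γ : K)} * bigO A K := by
      rw [h2]; exact one_le_bigO A (Submodule.one_le.1 le_rfl)
    obtain ⟨t, ht, h6⟩ := Submodule.mem_span_singleton_mul.1 h5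
    obtain ⟨δ, rfl⟩ := (mem_bigO A).1 ht
    rw [← map_mul, ← map_add] at h4
    rw [h4, ← map_mul, ← map_one (algebraMap R K)] at h6
    have h6 := IsFractionRing.injective R K h6
    let e : Rˣ := Units.mkOfMulEqOne _ _ h6
    have h7 : Ideal.Quotient.mk (Ideal.span {(c : R)}) (e : R) = n * g := by
      rw [← mk_rep g, ← map_intCast (Ideal.Quotient.mk (Ideal.span {(c : R)})), ← map_mul]
      exact mk_eq_mk_c.2 ⟨s * rep g + r, by simp [e]; ring⟩
    let E := Units.map (Ideal.Quotient.mk (Ideal.span {(c : R)})).toMonoidHom e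
    have h8 : g = (E * g⁻¹)⁻¹ * E := by simp
    rw [h8]
    refine Subgroup.mul_mem_sup (inv_mem (hZ _ n ?_)) ⟨e, rfl⟩
    rw [Units.val_mul]
    change Ideal.Quotient.mk (Ideal.span {(c : R)}) (e : R) * _ = _
    rw [h7, mul_assoc, Units.mul_inv, mul_one]
  · rw [sup_le_iff]
    constructor
    · rintro g ⟨n, m, hn, hm⟩
      refine ⟨1, ?_⟩
      rw [map_one]
      have hle : ∀ n : ℤ, twist A c (bigO A K) (algebraMap R K n) ≤ 1 := by
        intro n
        apply twist_le hA' (one_mul _)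
        exact (mem_oneA A).2 ⟨n, (hA _).2 ⟨n, 0, by simp⟩, rfl⟩
      have h1 := twistHom_val (K := K) hA' g (u := n) (by rw [hn, map_intCast])
      have h2 := twistHom_val (K := K) hA' g⁻¹ (u := m) (by rw [hm, map_intCast])
      apply Units.ext
      apply le_antisymm
      · rw [← mul_inv_cancel (twistHom K hA' g), ← map_inv, Units.val_mul, h2]
        calc _ ≤ (twistHom K hA' g : Submodule A K) * 1 := by gcongr; exact hle m
          _ = _ := mul_one _
      · rw [h1]; exact hle n
    · rintro _ ⟨e, rfl⟩
      refine ⟨Units.map (algebraMap R K).toMonoidHom e, Units.ext ?_⟩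
      rw [twistHom_val (K := K) hA' _ (u := e) rfl]
      change Submodule.span A {algebraMap R K e} = _
      apply le_antisymm
      · exact le_sup_left
      · intro z hz
        obtain ⟨a, ha, r, rfl⟩ := mem_twist_bigO.1 hz
        rw [Submodule.mem_span_singleton]
        refine ⟨⟨a + c * (r * (e⁻¹ : Rˣ)), add_mem ha (hA' _)⟩, ?_⟩
        rw [Algebra.smul_def]
        change algebraMap R K (a + c * (r * (e⁻¹ : Rˣ))) * algebraMap R K e = _
        rw [← map_mul, ← map_mul, ← map_add]
        congr 1
        linear_combination (c * r : R) * (Units.inv_mul e)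

end

section
variable [IsDedekindDomain R] [IsFractionRing R K]

theorem intUnits_of_eq [Finite (R ⧸ Ideal.span {(c : R)})] (g : Gc R c) (n : ℤ)
    (h : (g : R ⧸ Ideal.span {(c : R)}) = n) : g ∈ intUnits R c := by
  refine ⟨n, n ^ (orderOf g - 1), h, ?_⟩
  have h1 : g⁻¹ = g ^ (orderOf g - 1) := by
    rw [inv_eq_iff_mul_eq_one, ← pow_succ', Nat.sub_add_cancel (orderOf_pos g), pow_orderOf_eq_one]
  rw [h1, Units.val_pow_eq_pow_val, h]; simp

theorem card_intUnits (hc : c ≠ 0) (hinj : ∀ n : ℤ, (c : R) ∣ (n : R) → (c : ℤ) ∣ n) :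
    Nat.card (intUnits R c) = c.totient := by
  haveI : NeZero c := ⟨hc⟩
  haveI : CharP (R ⧸ Ideal.span {(c : R)}) c := by
    refine ⟨fun x => ?_⟩
    rw [← map_natCast (Ideal.Quotient.mk (Ideal.span {(c : R)})), Ideal.Quotient.eq_zero_iff_mem,
      Ideal.mem_span_singleton]
    constructor
    · intro h
      exact Int.natCast_dvd_natCast.1 (hinj x (by simpa using h))
    · exact fun h => Nat.cast_dvd_cast h
  let f := ZMod.castHom (dvd_refl c) (R ⧸ Ideal.span {(c : R)})
  have hf : Function.Injective f := ZMod.castHom_injective _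
  have hr : intUnits R c = (Units.map f.toMonoidHom).range := by
    ext g
    constructor
    · rintro ⟨n, m, hn, hm⟩
      refine ⟨Units.mkOfMulEqOne (n : ZMod c) (m : ZMod c) (hf ?_), Units.ext ?_⟩
      · rw [map_mul, map_intCast, map_intCast, map_one, ← hn, ← hm, Units.mul_inv]
      · change f (n : ZMod c) = _
        rw [map_intCast, hn]
    · rintro ⟨e, rfl⟩
      obtain ⟨n, hn⟩ := ZMod.intCast_surjective (e : ZMod c)
      obtain ⟨m, hm⟩ := ZMod.intCast_surjective ((e⁻¹ : (ZMod c)ˣ) : ZMod c)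
      refine ⟨n, m, ?_, ?_⟩
      · change f (e : ZMod c) = _
        rw [← hn, map_intCast]
      · rw [← map_inv]
        change f ((e⁻¹ : (ZMod c)ˣ) : ZMod c) = _
        rw [← hm, map_intCast]
  rw [hr, ← Nat.card_congr (MonoidHom.ofInjective (Units.map_injective (f := f.toMonoidHom) hf)).toEquiv,
    Nat.card_eq_fintype_card, ZMod.card_units_eq_totient]

theorem intUnits_comap (hA : ∀ z : R, z ∈ A ↔ ∃ (a : ℤ) (x : R), z = a + c * x) :
    (intUnits R c).comap (Units.map (Ideal.Quotient.mk (Ideal.span {(c : R)})).toMonoidHom) =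
      (Units.map A.subtype.toMonoidHom).range := by
  have key : ∀ e : R, e ∈ A ↔ ∃ n : ℤ, Ideal.Quotient.mk (Ideal.span {(c : R)}) e = n := by
    intro e
    rw [hA]
    refine exists_congr fun n => ?_
    rw [← map_intCast (Ideal.Quotient.mk (Ideal.span {(c : R)})), mk_eq_mk_c]
  ext e
  constructor
  · rintro ⟨n, m, hn, hm⟩
    have h1 : (e : R) ∈ A := (key _).2 ⟨n, hn⟩
    have h2 : ((e⁻¹ : Rˣ) : R) ∈ A := (key _).2 ⟨m, hm⟩
    exact ⟨Units.mkOfMulEqOne (⟨e, h1⟩ : A) ⟨_, h2⟩ (Subtype.ext (Units.mul_inv e)), Units.ext rfl⟩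
  · rintro ⟨a, rfl⟩
    obtain ⟨n, hn⟩ := (key _).1 (a : A).2
    obtain ⟨m, hm⟩ := (key _).1 ((a⁻¹ : Aˣ) : A).2
    exact ⟨n, m, hn, by rw [← map_inv, ← map_inv]; exact hm⟩

theorem isFractionRing_order (hc : (c : R) ≠ 0) (hA' : ∀ r : R, (c : R) * r ∈ A) :
    IsFractionRing A K := by
  haveI : FaithfulSMul A K := by
    rw [faithfulSMul_iff_algebraMap_injective]
    exact (IsFractionRing.injective R K).comp Subtype.val_injective
  refine IsFractionRing.of_field A K fun z => ?_
  obtain ⟨x, y, hy, rfl⟩ := IsFractionRing.div_surjective (A := R) z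
  refine ⟨⟨c * x, hA' x⟩, ⟨c * y, hA' y⟩, ?_⟩
  change _ = algebraMap R K (c * x) / algebraMap R K (c * y)
  have hc' : algebraMap R K c ≠ 0 := by
    rwa [Ne, FaithfulSMul.algebraMap_eq_zero_iff]
  rw [map_mul, map_mul, mul_div_mul_left _ _ hc']

theorem card_formula {R : Type*} [CommRing R] [IsDedekindDomain R] {A : Subring R} {c : ℕ}
    (K : Type*) [Field K] [Algebra R K] [IsFractionRing R K] (hc : c ≠ 0) (hc' : (c : R) ≠ 0)
    (hA : ∀ z : R, z ∈ A ↔ ∃ (a : ℤ) (x : R), z = a + c * x)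
    (hinj : ∀ n : ℤ, (c : R) ∣ (n : R) → (c : ℤ) ∣ n) [Finite (R ⧸ Ideal.span {(c : R)})] :
    Nat.card (ClassGroup A) * (Units.map A.subtype.toMonoidHom).range.index * c.totient =
      Nat.card (ClassGroup R) * Nat.card (Gc R c) := by
  have hA' : ∀ r : R, (c : R) * r ∈ A := fun r => (hA _).2 ⟨0, r, by simp⟩
  haveI : IsFractionRing A K := isFractionRing_order hc' hA'
  rw [card_classGroup_eq_index A K, card_classGroup_eq_index R K]
  have e1 : (prin A K).relIndex (prin A K ⊔ (twistHom K hA').range) *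
      (prin A K ⊔ (twistHom K hA').range).index = (prin A K).index :=
    Subgroup.relIndex_mul_index le_sup_left
  rw [Subgroup.relIndex_sup_left, ← Subgroup.index_comap, ← comap_prin hc hA hinj hA',
    Subgroup.index_comap_of_surjective _ (extHom_surjective hc' hA'),
    twistHom_comap_prin hA intUnits_of_eq hA'] at e1
  have e2 := Subgroup.relIndex_mul_index (le_sup_left : intUnits R c ≤ intUnits R c ⊔
      (Units.map (Ideal.Quotient.mk (Ideal.span {(c : R)})).toMonoidHom).range)
  rw [Subgroup.relIndex_sup_left, ← Subgroup.index_comap, intUnits_comap hA] at e2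
  have e3 := Subgroup.card_mul_index (intUnits R c)
  rw [card_intUnits hc hinj] at e3
  rw [← e1, ← e3, ← e2]
  ring

end

end

section
variable {R : Type*} [CommRing R]

theorem card_units_nilpotent {S : Type*} [CommRing S] [Finite S] (I : Ideal S) (hI : IsNilpotent I) :
    Nat.card Sˣ = Nat.card (S ⧸ I)ˣ * Nat.card I := by
  let f := Units.map (Ideal.Quotient.mk I).toMonoidHom
  have hf : Function.Surjective f := by
    intro y
    obtain ⟨x, hx⟩ := Ideal.Quotient.mk_surjective (y : S ⧸ I)
    have : IsUnit x := (IsNilpotent.isUnit_quotient_mk_iff hI).1 (hx ▸ y.isUnit)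
    exact ⟨this.unit, Units.ext hx⟩
  have hker : Nat.card f.ker = Nat.card I := by
    have hu : ∀ i : I, IsUnit (1 + (i : S)) := by
      intro i
      refine (IsNilpotent.isUnit_quotient_mk_iff hI).1 ?_
      rw [map_add, Ideal.Quotient.eq_zero_iff_mem.2 i.2]
      simp
    have hk : ∀ u : Sˣ, u ∈ f.ker ↔ (u : S) - 1 ∈ I := by
      intro u
      rw [MonoidHom.mem_ker, ← Ideal.Quotient.eq, map_one, Units.ext_iff]; rfl
    refine Nat.card_congr
      { toFun := fun u => ⟨(u : Sˣ) - 1, (hk _).1 u.2⟩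
        invFun := fun i => ⟨(hu i).unit, (hk _).2 (by simp)⟩
        left_inv := fun u => Subtype.ext (Units.ext (by simp))
        right_inv := fun i => Subtype.ext (by simp) }
  rw [← hker, mul_comm, ← Subgroup.card_mul_index f.ker, Subgroup.index_ker,
    MonoidHom.range_eq_top.2 hf]
  simp

theorem card_units_quot {I J : Ideal R} (hIJ : I ≤ J) [Finite (R ⧸ I)] (n : ℕ) (hn : J ^ n ≤ I) :
    Nat.card (R ⧸ I)ˣ * Nat.card (R ⧸ J) = Nat.card (R ⧸ I) * Nat.card (R ⧸ J)ˣ := by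
  let J' := J.map (Ideal.Quotient.mk I)
  have hnil : IsNilpotent J' := by
    refine ⟨n, ?_⟩
    rw [← Ideal.map_pow, Ideal.zero_eq_bot, Ideal.map_eq_bot_iff_le_ker, Ideal.mk_ker]
    exact hn
  let e : ((R ⧸ I) ⧸ J') ≃+* R ⧸ J := DoubleQuot.quotQuotEquivQuotOfLE hIJ
  have h1 := card_units_nilpotent J' hnil
  rw [Nat.card_congr (Units.mapEquiv e.toMulEquiv).toEquiv] at h1
  have h2 := Submodule.card_eq_card_quotient_mul_card J'
  rw [Nat.card_congr e.toEquiv] at h2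
  rw [h1, h2]
  ring

theorem card_units_mul {I J : Ideal R} (h : IsCoprime I J) :
    Nat.card (R ⧸ I * J)ˣ = Nat.card (R ⧸ I)ˣ * Nat.card (R ⧸ J)ˣ := by
  rw [Nat.card_congr (Units.mapEquiv (Ideal.quotientMulEquivQuotientProd I J h).toMulEquiv).toEquiv,
    Nat.card_congr MulEquiv.prodUnits.toEquiv, Nat.card_prod]

theorem card_units_prod (S : Finset ℕ) (hS : ∀ p ∈ S, p.Prime) :
    Nat.card (R ⧸ Ideal.span {((∏ p ∈ S, p : ℕ) : R)})ˣ =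
      ∏ p ∈ S, Nat.card (R ⧸ Ideal.span {(p : R)})ˣ := by
  induction S using Finset.induction_on with
  | empty =>
    haveI : Subsingleton (R ⧸ Ideal.span {((∏ p ∈ (∅ : Finset ℕ), p : ℕ) : R)}) := by
      rw [Ideal.Quotient.subsingleton_iff]; simp
    rw [Nat.card_unique, Finset.prod_empty]
  | insert p S hp ih =>
    rw [Finset.prod_insert hp, Finset.prod_insert hp, ← ih fun q hq => hS q (Finset.mem_insert_of_mem hq),
      Nat.cast_mul, ← Ideal.span_singleton_mul_span_singleton]
    apply card_units_mul
    rw [Ideal.isCoprime_span_singleton_iff]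
    apply Nat.Coprime.cast
    refine Nat.Coprime.prod_right fun q hq => ?_
    refine (Nat.coprime_primes (hS p (Finset.mem_insert_self ..)) (hS q (Finset.mem_insert_of_mem hq))).2 ?_
    rintro rfl; exact hp hq

theorem card_units_field (P : Ideal R) [P.IsMaximal] [Finite (R ⧸ P)] :
    Nat.card (R ⧸ P)ˣ = Nat.card (R ⧸ P) - 1 := by
  letI := Ideal.Quotient.field P
  exact Nat.card_units (R ⧸ P)

end

section
variable {R : Type*} [CommRing R] [IsDedekindDomain R] [Module.Free ℤ R] [Module.Finite ℤ R] [CharZero R]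
open Ideal

theorem card_quot_nat (h2 : finrank ℤ R = 2) (n : ℕ) :
    Nat.card (R ⧸ span {(n : R)}) = n ^ 2 := by
  rw [← h2, ← absNorm_span_natCast, absNorm_apply, Submodule.cardQuot_apply]

theorem finite_quot_nat (h2 : finrank ℤ R = 2) {n : ℕ} (hn : n ≠ 0) :
    Finite (R ⧸ span {(n : R)}) := by
  apply Nat.finite_of_card_ne_zero
  rw [card_quot_nat h2]; positivity

theorem isPrime_of_norm {P : Ideal R} {p : ℕ} (hp : p.Prime) (h : absNorm P = p) : P.IsPrime :=
  isPrime_of_irreducible_absNorm (h ▸ hp)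

theorem units_case {P : Ideal R} (hP : P.IsPrime) {n : ℕ} (hn : absNorm P = n) (h0 : n ≠ 0) :
    Finite (R ⧸ P) ∧ P.IsMaximal ∧ Nat.card (R ⧸ P) = n ∧ Nat.card (R ⧸ P)ˣ = n - 1 := by
  have hc : Nat.card (R ⧸ P) = n := by rw [← hn, absNorm_apply, Submodule.cardQuot_apply]
  haveI : Finite (R ⧸ P) := Nat.finite_of_card_ne_zero (hc ▸ h0)
  have hP0 : P ≠ ⊥ := by rintro rfl; simp at hn; exact h0 hn.symm
  haveI := hP.isMaximal hP0
  exact ⟨inferInstance, this, hc, by rw [card_units_field, hc]⟩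

theorem trichotomy (h2 : finrank ℤ R = 2) {p : ℕ} (hp : p.Prime) :
    ((span {(p : R)}).IsPrime) ∨ (∃ P : Ideal R, P.IsPrime ∧ span {(p : R)} = P ^ 2) ∨
    (∃ P Q : Ideal R, P.IsPrime ∧ Q.IsPrime ∧ P ≠ Q ∧ span {(p : R)} = P * Q) := by
  have hN : absNorm (span {(p : R)}) = p ^ 2 := by rw [absNorm_span_natCast, h2]
  have hne : span {(p : R)} ≠ ⊤ := by
    intro h
    rw [h, absNorm_top] at hN
    have := hp.one_lt
    nlinarith
  obtain ⟨P, hP, hle⟩ := exists_le_maximal _ hne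
  obtain ⟨Q, hQ⟩ := dvd_iff_le.2 hle
  have hPQ : absNorm P * absNorm Q = p ^ 2 := by rw [← hN, hQ, map_mul]
  obtain ⟨k, hk, hPk⟩ := (Nat.dvd_prime_pow hp).1 (Dvd.intro _ hPQ)
  interval_cases k
  · rw [pow_zero, absNorm_eq_one_iff] at hPk
    exact absurd hPk hP.ne_top
  · have hQp : absNorm Q = p := by
      rw [hPk] at hPQ
      have := hp.pos
      nlinarith
    by_cases h : P = Q
    · right; left
      exact ⟨P, hP.isPrime, by rw [hQ, ← h, sq]⟩
    · right; right
      exact ⟨P, Q, hP.isPrime, isPrime_of_norm hp hQp, h, hQ⟩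
  · left
    have hQp : absNorm Q = 1 := by
      rw [hPk] at hPQ
      have : 0 < p ^ 2 := by have := hp.pos; positivity
      nlinarith
    rw [absNorm_eq_one_iff] at hQp
    rw [hQ, hQp, mul_top]
    exact hP.isPrime

theorem inert_card (h2 : finrank ℤ R = 2) {p : ℕ} (hp : p.Prime) (h : (span {(p : R)}).IsPrime) :
    (Nat.card (R ⧸ span {(p : R)})ˣ : ℤ) = (p - 1) * (p - (-1)) := by
  have hN : absNorm (span {(p : R)}) = p ^ 2 := by rw [absNorm_span_natCast, h2]
  have := hp.pos
  rw [(units_case h hN (by positivity)).2.2.2, Nat.cast_sub (Nat.one_le_pow _ _ this)]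
  push_cast; ring

theorem ram_card (h2 : finrank ℤ R = 2) {p : ℕ} (hp : p.Prime) {P : Ideal R} (hP : P.IsPrime)
    (h : span {(p : R)} = P ^ 2) :
    (Nat.card (R ⧸ span {(p : R)})ˣ : ℤ) = (p - 1) * (p - 0) := by
  have hN : absNorm (span {(p : R)}) = p ^ 2 := by rw [absNorm_span_natCast, h2]
  have hPp : absNorm P = p := by
    rw [h, map_pow] at hN
    exact Nat.pow_left_injective two_ne_zero hN
  obtain ⟨_, _, h3, h4⟩ := units_case hP hPp hp.ne_zero
  have := hp.pos
  haveI := finite_quot_nat (R := R) h2 hp.ne_zero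
  have h5 := card_units_quot (I := span {(p : R)}) (J := P) (by rw [h]; exact pow_le_self two_ne_zero) 2 h.ge
  rw [h3, h4, card_quot_nat h2] at h5
  have h6 : Nat.card (R ⧸ span {(p : R)})ˣ = p * (p - 1) := by
    apply Nat.eq_of_mul_eq_mul_right hp.pos
    rw [h5]; ring
  rw [h6, Nat.cast_mul, Nat.cast_sub hp.one_le]
  push_cast; ring

theorem split_card (h2 : finrank ℤ R = 2) {p : ℕ} (hp : p.Prime) {P Q : Ideal R} (hP : P.IsPrime)
    (hQ : Q.IsPrime) (hne : P ≠ Q) (h : span {(p : R)} = P * Q) :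
    (Nat.card (R ⧸ span {(p : R)})ˣ : ℤ) = (p - 1) * (p - 1) := by
  have hN : absNorm P * absNorm Q = p ^ 2 := by rw [← map_mul, ← h, absNorm_span_natCast, h2]
  have hP1 : absNorm P ≠ 1 := by rw [Ne, absNorm_eq_one_iff]; exact hP.ne_top
  have hQ1 : absNorm Q ≠ 1 := by rw [Ne, absNorm_eq_one_iff]; exact hQ.ne_top
  obtain ⟨hPp, hQp⟩ := (Nat.Prime.mul_eq_prime_sq_iff hp hP1 hQ1).1 hN
  obtain ⟨_, hPm, _, h4⟩ := units_case hP hPp hp.ne_zero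
  obtain ⟨_, hQm, _, h5⟩ := units_case hQ hQp hp.ne_zero
  rw [h, card_units_mul (isCoprime_iff_sup_eq.2 (hPm.coprime_of_ne hQm hne)), h4, h5, Nat.cast_mul,
    Nat.cast_sub hp.one_le]
  simp

end

theorem classNumber_order_formula
    (K : Type*) [Field K] [NumberField K]
    (hquad : finrank ℚ K = 2) (himag : IsEmpty (K →+* ℝ))
    (c : ℕ) (hc : 1 ≤ c)
    (χ : ℕ → ℤ)
    (hχ : ∀ p : ℕ, p.Prime →
      ((χ p = 1 ↔ ∃ P Q : Ideal (𝓞 K), P.IsPrime ∧ Q.IsPrime ∧ P ≠ Q ∧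
          Ideal.span {(p : 𝓞 K)} = P * Q) ∧
        (χ p = -1 ↔ (Ideal.span {(p : 𝓞 K)}).IsPrime) ∧
        (χ p = 0 ↔ ∃ P : Ideal (𝓞 K), P.IsPrime ∧ Ideal.span {(p : 𝓞 K)} = P ^ 2))) :
    0 < Nat.card (ClassGroup (condOrder K c)) ∧
      (Nat.card (ClassGroup (condOrder K c)) : ℤ) *
          (Units.map (condOrder K c).subtype.toMonoidHom).range.index *
          ∏ p ∈ c.primeFactors, (p : ℤ) =
        (classNumber K : ℤ) * c * ∏ p ∈ c.primeFactors, ((p : ℤ) - χ p) := by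
  have hc0 : c ≠ 0 := by omega
  have h2 : finrank ℤ (𝓞 K) = 2 := by rw [RingOfIntegers.rank, hquad]
  have hcR : (c : 𝓞 K) ≠ 0 := by exact_mod_cast hc0
  haveI := finite_quot_nat (R := 𝓞 K) h2 hc0
  have hinj : ∀ n : ℤ, (c : 𝓞 K) ∣ (n : 𝓞 K) → (c : ℤ) ∣ n := by
    rintro n ⟨x, hx⟩
    have hx' := congrArg (algebraMap (𝓞 K) K) hx
    simp only [map_intCast, map_mul, map_natCast] at hx'
    have hcK : (c : K) ≠ 0 := by exact_mod_cast hc0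
    have hq : algebraMap ℚ K ((n : ℚ) / c) = algebraMap (𝓞 K) K x := by
      rw [map_div₀, map_intCast, map_natCast, hx', mul_div_cancel_left₀ _ hcK]
    have hint : IsIntegral ℤ ((n : ℚ) / c) := by
      rw [← isIntegral_algebraMap_iff (algebraMap ℚ K).injective, hq]
      exact RingOfIntegers.isIntegral_coe x
    obtain ⟨k, hk⟩ := IsIntegrallyClosed.isIntegral_iff.1 hint
    refine ⟨k, ?_⟩
    have hcQ : (c : ℚ) ≠ 0 := by exact_mod_cast hc0
    rw [eq_div_iff hcQ] at hk
    have : (n : ℚ) = c * k := by rw [← hk]; simp [mul_comm]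
    exact_mod_cast this
  have hmain := card_formula (R := 𝓞 K) (A := condOrder K c) K hc0 hcR (fun z => Iff.rfl) hinj
  have hcl : Nat.card (ClassGroup (𝓞 K)) = classNumber K := by
    rw [Nat.card_eq_fintype_card]; rfl
  rw [hcl] at hmain
  have hG : 0 < Nat.card (Gc (𝓞 K) c) := Nat.card_pos
  have hK : 0 < classNumber K := Fintype.card_pos
  have hφ : 0 < c.totient := Nat.totient_pos.2 hc
  constructor
  · have : 0 < classNumber K * Nat.card (Gc (𝓞 K) c) := Nat.mul_pos hK hG
    rw [← hmain, mul_assoc] at this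
    exact Nat.pos_of_mul_pos_right this
  -- reduction to the radical
  set rad : ℕ := ∏ p ∈ c.primeFactors, p with hrad
  have hradpos : 0 < rad := Finset.prod_pos fun p hp => (Nat.prime_of_mem_primeFactors hp).pos
  have hdvd : rad ∣ c := Nat.prod_primeFactors_dvd c
  have hpow : c ∣ rad ^ c := by
    exact Nat.dvd_prod_primeFactors_pow_self hc0
  have hred := card_units_quot (R := 𝓞 K) (I := Ideal.span {(c : 𝓞 K)})
    (J := Ideal.span {(rad : 𝓞 K)})
    (Ideal.span_singleton_le_span_singleton.2 (Nat.cast_dvd_cast hdvd)) c (by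
      rw [Ideal.span_singleton_pow, ← Nat.cast_pow]
      exact Ideal.span_singleton_le_span_singleton.2 (Nat.cast_dvd_cast hpow))
  rw [card_quot_nat h2, card_quot_nat h2, hrad,
    card_units_prod _ (fun p hp => Nat.prime_of_mem_primeFactors hp), ← hrad] at hred
  have hloc : ∀ p ∈ c.primeFactors, (Nat.card (𝓞 K ⧸ Ideal.span {(p : 𝓞 K)})ˣ : ℤ) =
      (p - 1) * (p - χ p) := by
    intro p hp
    have hp := Nat.prime_of_mem_primeFactors hp
    obtain ⟨hs, hi, hr⟩ := hχ p hp
    rcases trichotomy (R := 𝓞 K) h2 hp with h | h | h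
    · rw [hi.2 h]; exact inert_card h2 hp h
    · rw [hr.2 h]
      obtain ⟨P, hP, h⟩ := h
      exact ram_card h2 hp hP h
    · rw [hs.2 h]
      obtain ⟨P, Q, hP, hQ, hne, h⟩ := h
      exact split_card h2 hp hP hQ hne h
  have htot : (c.totient : ℤ) * rad = c * ∏ p ∈ c.primeFactors, ((p : ℤ) - 1) := by
    have h := Nat.totient_mul_prod_primeFactors c
    have h' := congrArg (Nat.cast : ℕ → ℤ) h
    rw [Nat.cast_mul, Nat.cast_mul, Nat.cast_prod (R := ℤ) (f := fun p => p - 1)] at h'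
    rw [h']
    congr 1
    refine Finset.prod_congr rfl fun p hp => ?_
    rw [Nat.cast_sub (Nat.prime_of_mem_primeFactors hp).one_le]; simp
  have hredZ : (Nat.card (Gc (𝓞 K) c) : ℤ) * rad ^ 2 = c ^ 2 *
      ((∏ p ∈ c.primeFactors, ((p : ℤ) - 1)) * ∏ p ∈ c.primeFactors, ((p : ℤ) - χ p)) := by
    rw [← Finset.prod_mul_distrib, ← Finset.prod_congr rfl hloc]
    exact_mod_cast hred
  have hmainZ : (Nat.card (ClassGroup (condOrder K c)) : ℤ) *
      (Units.map (condOrder K c).subtype.toMonoidHom).range.index * c.totient =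
      classNumber K * Nat.card (Gc (𝓞 K) c) := by exact_mod_cast hmain
  rw [← Nat.cast_prod, ← hrad]
  have hne : (c.totient : ℤ) * rad ≠ 0 := by positivity
  apply mul_right_cancel₀ hne
  calc _ = (Nat.card (ClassGroup (condOrder K c)) : ℤ) *
      (Units.map (condOrder K c).subtype.toMonoidHom).range.index * c.totient * rad ^ 2 := by ring
    _ = classNumber K * (Nat.card (Gc (𝓞 K) c) * rad ^ 2) := by rw [hmainZ]; ring
    _ = _ := by rw [hredZ, htot]; ring
end
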